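/- arXiv:2509.07144 — 2 statements merged into one kernel-verified Lean document; each statement's English description precedes it below -/
import Mathlib

section
/- Let k ≥ 1 and t ≥ 3 be integers, let s be an integer with k ≥ s + 2^{t−1} − t, and let G be a k-contraction-critical graph. If S ⊆ V(G) satisfies |S| ≤ s and α(G[S]) ≥ |S| − t, then the graph G − S is connected. -/
/-!
Write `m = k - 1` for the number of colours available for proper minors, and suppose that `G - S`
is disconnected; the aim is to `m`-colour `G`. After shrinking `S` to a minimal separating set,
write `S = I ∪ T` with `I` a maximal independent subset of `S` and `|T| ≤ t`, and let `A`, `B` be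
the two sides. By minimality every vertex of `S` is attached to a connected set on each side
(`Sep`, `exists_sep`). Two colourings of `A ∪ S` and `B ∪ S` that induce the same partition of
`S` agree after a permutation of the colours and give a colouring of `G` (`Sep.glue`).

Contracting `I` into the far side gives colourings of each side that are constant on `I`
(`Sep.mono`). If on both sides such a colouring can be made injective on `T`, then the two
partitions of `S` agree. Otherwise take a side, `A` say, and a colouring `φ` of `U = A ∪ S`,
constant on `I`, with as many colours on `T` as possible, say `q < |T|`. Set aside a set `CI` of
`|I|` colours which contains the colour of `I` and none of the colours of `T`. By the choice of
`φ`, no Kempe change with a colour `j` outside `CI` splits a colour class of `T`: each class is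
connected in the subgraph of its own colour and `j`.

This makes it possible to extend the colour classes of `T` to disjoint connected sets `B w` with
colours outside `CI` (`Core`, `exists_core`). One extra colour is used for each class with at
least two vertices, and the remaining colours outside `CI`, at least `2 ^ (t - 1) - t - 1` in
number, form a reserve `F`. If the classes of two colours `w`, `w'` can be moved to a colour `f` of
the reserve only at the cost of a conflict, then the Kempe pieces that conflict are added to `B w`
and `B w'`, which makes these sets touch, and `f` is given up (`State.step`). The reserve is at
least as large as the number of pairs of sets that do not touch, because
`(t - 1) (t - 2) / 2 ≤ 2 ^ (t - 1) - t - 1` for `t ≥ 4`; for `t = 3` and two colours on `T` a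
single spare colour is enough (`core_two`). At the end every identification of colours of `T` that
respects the edges between the sets `B w` can be realised by Kempe changes in the reserve
(`tflip`).

Now contract the sets `B w` and, for `u ∈ I`, the component of `u` in `U` minus these sets, keep
the vertices of `B`, and delete the rest (`Sep.finish`). An `m`-colouring of this proper minor
colours `B ∪ S`, and the partition of `S` that it induces is realised on `U`: on `T` by the `Core`,
and on `I` by first spreading `I` over the colours of `CI` and then moving some of its vertices to
colours of `T`, by Kempe changes that stay inside the contracted components (`attain`). Gluing
finishes the proof.
-/

open SimpleGraph

/-- `G` is `k`-linked: any `2k` distinct vertices, grouped into `k` pairs, can be joined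
by `k` pairwise vertex-disjoint paths. -/
def Linked {V : Type} (G : SimpleGraph V) (k : ℕ) : Prop :=
  ∀ u v : Fin k → V,
    Function.Injective (Sum.elim u v) →
    ∃ P : (i : Fin k) → G.Walk (u i) (v i),
      (∀ i, (P i).IsPath) ∧
      ∀ i j, i ≠ j → ∀ x ∈ (P i).support, x ∉ (P j).support

/-- `G` is `(2,…,2,1)`-knitted with `k` twos: any `k` pairs of vertices together with one
further vertex `u₀` (all distinct) can be linked by `k` pairwise vertex-disjoint paths,
each avoiding `u₀`. -/
def KnittedOne {V : Type} (G : SimpleGraph V) (k : ℕ) : Prop :=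
  ∀ (u₀ : V) (u v : Fin k → V),
    Function.Injective (Sum.elim (Sum.elim u v) (fun _ : Unit => u₀)) →
    ∃ P : (i : Fin k) → G.Walk (u i) (v i),
      (∀ i, (P i).IsPath) ∧
      (∀ i, u₀ ∉ (P i).support) ∧
      ∀ i j, i ≠ j → ∀ x ∈ (P i).support, x ∉ (P j).support

/-- `H` is a minor of `G`, witnessed by pairwise-disjoint nonempty connected branch sets. -/
def IsMinor {W V : Type} (H : SimpleGraph W) (G : SimpleGraph V) : Prop :=
  ∃ f : W → Set V,
    (∀ w, (f w).Nonempty) ∧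
    (∀ w, (G.induce (f w)).Connected) ∧
    (Pairwise fun w w' => Disjoint (f w) (f w')) ∧
    (∀ ⦃w w'⦄, H.Adj w w' → ∃ a ∈ f w, ∃ b ∈ f w', G.Adj a b)

/-- `H` is a proper minor of `G`. -/
def IsProperMinor {W V : Type} (H : SimpleGraph W) (G : SimpleGraph V) : Prop :=
  IsMinor H G ∧ ¬ IsMinor G H

/-- `G` is `k`-contraction-critical: its chromatic number is `k`, but every proper minor
is `(k-1)`-colorable. -/
def ContractionCritical {V : Type} (k : ℕ) (G : SimpleGraph V) : Prop :=
  G.chromaticNumber = (k : ENat) ∧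
  ∀ (W : Type) (H : SimpleGraph W), IsProperMinor H G → H.Colorable (k - 1)

/-- `G` is `t`-connected: more than `t` vertices, and deleting any fewer than `t`
vertices leaves it connected. -/
def KConnected {V : Type} [Fintype V] (G : SimpleGraph V) (t : ℕ) : Prop :=
  t < Fintype.card V ∧
  ∀ S : Finset V, S.card < t → (G.induce {v : V | v ∉ S}).Connected

/-- Independence number of the subgraph of `G` induced on `S`. -/
noncomputable def alphaOn {V : Type} (G : SimpleGraph V) (S : Set V) : ℕ :=
  sSup {n | ∃ t : Finset V, ↑t ⊆ S ∧ t.card = n ∧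
    ∀ a ∈ t, ∀ b ∈ t, a ≠ b → ¬ G.Adj a b}

/-- Number of common neighbors of `a` and `b` in `G`. -/
noncomputable def commonNbrs {V : Type} (G : SimpleGraph V) (a b : V) : ℕ :=
  {x : V | G.Adj a x ∧ G.Adj b x}.ncard

namespace CritSep

open Relation

/-! ### Walks and connected sets -/

variable {V : Type} {m : ℕ}

/-- One step of a walk in `G` whose two ends both lie in `X`. -/
def Rel (G : SimpleGraph V) (X : Set V) (x y : V) : Prop := G.Adj x y ∧ x ∈ X ∧ y ∈ X

/-- The vertices that can be reached from `s` by walks staying inside `X`. -/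
def reach (G : SimpleGraph V) (X s : Set V) : Set V :=
  {v | ∃ u ∈ s, ReflTransGen (Rel G X) u v}

/-- `X` induces a connected (possibly empty) subgraph, in terms of `Rel`. -/
def Conn (G : SimpleGraph V) (X : Set V) : Prop :=
  ∀ u ∈ X, ∀ v ∈ X, ReflTransGen (Rel G X) u v

/-- There is an edge between `X` and `Y`. -/
def Touch (G : SimpleGraph V) (X Y : Set V) : Prop := ∃ a ∈ X, ∃ b ∈ Y, G.Adj a b

/-- `φ` is a proper colouring of the subgraph induced on `U`; its values elsewhere are junk. -/
def ProperOn (G : SimpleGraph V) (U : Set V) (φ : V → Fin m) : Prop :=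
  ∀ u ∈ U, ∀ v ∈ U, G.Adj u v → φ u ≠ φ v

variable {G : SimpleGraph V}

lemma Rel.symm {X : Set V} {x y : V} (h : Rel G X x y) : Rel G X y x :=
  ⟨h.1.symm, h.2.2, h.2.1⟩

lemma rtg_symm {X : Set V} {x y : V} (h : ReflTransGen (Rel G X) x y) :
    ReflTransGen (Rel G X) y x := by
  induction h with
  | refl => exact .refl
  | tail _ h ih => exact .head h.symm ih

lemma rtg_mono {X Y : Set V} (hXY : X ⊆ Y) {x y : V} (h : ReflTransGen (Rel G X) x y) :
    ReflTransGen (Rel G Y) x y := by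
  induction h with
  | refl => exact .refl
  | tail _ h ih => exact ih.tail ⟨h.1, hXY h.2.1, hXY h.2.2⟩

lemma rtg_mem {X : Set V} {x y : V} (hx : x ∈ X) (h : ReflTransGen (Rel G X) x y) : y ∈ X := by
  induction h with
  | refl => exact hx
  | tail _ h _ => exact h.2.2

lemma subset_reach (X s : Set V) : s ⊆ reach G X s := fun u hu => ⟨u, hu, .refl⟩

lemma reach_sub {X s : Set V} (hs : s ⊆ X) : reach G X s ⊆ X := by
  rintro v ⟨u, hu, h⟩
  exact rtg_mem (hs hu) h

lemma reach_closed {X s : Set V} (hs : s ⊆ X) {u v : V} (hu : u ∈ reach G X s) (hv : v ∈ X)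
    (h : G.Adj u v) : v ∈ reach G X s := by
  have huX := reach_sub hs hu
  obtain ⟨w, hw, h'⟩ := hu
  exact ⟨w, hw, h'.tail ⟨h, huX, hv⟩⟩

lemma rtg_reach {X s : Set V} {u v : V} (hu : u ∈ s) (h : ReflTransGen (Rel G X) u v) :
    ReflTransGen (Rel G (reach G X s)) u v := by
  induction h with
  | refl => exact .refl
  | tail h1 h2 ih => exact ih.tail ⟨h2.1, ⟨u, hu, h1⟩, ⟨u, hu, h1.tail h2⟩⟩

lemma conn_union {B X s : Set V} (hB : Conn G B) (hs : s ⊆ B) : Conn G (B ∪ reach G X s) := by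
  have key : ∀ v ∈ B ∪ reach G X s, ∃ u ∈ B,
      ReflTransGen (Rel G (B ∪ reach G X s)) u v := by
    rintro v (hv | ⟨u, hu, h⟩)
    · exact ⟨v, hv, .refl⟩
    · exact ⟨u, hs hu, rtg_mono Set.subset_union_right (rtg_reach hu h)⟩
  intro u hu v hv
  obtain ⟨u', hu', h1⟩ := key u hu
  obtain ⟨v', hv', h2⟩ := key v hv
  exact ((rtg_symm h1).trans (rtg_mono Set.subset_union_left (hB u' hu' v' hv'))).trans h2

lemma conn_reach {X s : Set V} (hs : ∀ u ∈ s, ∀ v ∈ s, ReflTransGen (Rel G X) u v) :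
    Conn G (reach G X s) := by
  rintro u ⟨u', hu', h1⟩ v ⟨v', hv', h2⟩
  exact ((rtg_symm (rtg_reach hu' h1)).trans (rtg_reach hu' (hs u' hu' v' hv'))).trans
    (rtg_reach hv' h2)

lemma Conn.connected {X : Set V} (h : Conn G X) (hne : X.Nonempty) :
    (G.induce X).Connected := by
  have key : ∀ u v, ReflTransGen (Rel G X) u v → ∀ (hu : u ∈ X) (hv : v ∈ X),
      (G.induce X).Reachable ⟨u, hu⟩ ⟨v, hv⟩ := by
    intro u v huv
    induction huv with
    | refl => intro _ _; exact .refl _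
    | tail h1 h2 ih =>
      intro hu hv
      exact (ih hu h2.2.1).trans (SimpleGraph.Adj.reachable (by simpa using h2.1))
  have : Nonempty X := hne.to_subtype
  exact ⟨fun u v => key _ _ (h _ u.2 _ v.2) u.2 v.2⟩

/-! ### Minors and Kempe changes -/

/-- Contracting the members of a family of disjoint connected sets (and deleting everything
else) gives a proper minor as soon as the family is not the partition into singletons. -/
lemma minor_color [Fintype V] (hG : ∀ (W : Type) (H : SimpleGraph W), IsProperMinor H G →
    H.Colorable m) (F : Set (Set V)) (hFne : F.Nonempty) (hne : ∀ X ∈ F, X.Nonempty)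
    (hconn : ∀ X ∈ F, Conn G X)
    (hdis : ∀ X ∈ F, ∀ Y ∈ F, ∀ v, v ∈ X → v ∈ Y → X = Y)
    (hprop : ∃ v, ∀ X ∈ F, v ∈ X → ∃ u ∈ X, u ≠ v) :
    ∃ c : Set V → Fin m, ∀ X ∈ F, ∀ Y ∈ F, X ≠ Y → Touch G X Y → c X ≠ c Y := by
  classical
  let H : SimpleGraph F :=
    { Adj := fun X Y => X ≠ Y ∧ Touch G X Y
      symm := ⟨fun X Y h => ⟨h.1.symm, by
        obtain ⟨a, ha, b, hb, hab⟩ := h.2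
        exact ⟨b, hb, a, ha, hab.symm⟩⟩⟩
      loopless := ⟨fun X h => h.1 rfl⟩ }
  have hminor : IsMinor H G := by
    refine ⟨fun X => X.1, fun X => hne _ X.2, fun X => (hconn _ X.2).connected (hne _ X.2), ?_,
      fun X Y h => h.2⟩
    intro X Y hXY
    refine Set.disjoint_left.2 fun v hv hv' => ?_
    exact hXY (Subtype.ext (hdis _ X.2 _ Y.2 v hv hv'))
  have hnot : ¬ IsMinor G H := by
    rintro ⟨g, hg, -, hgd, -⟩
    choose p hp using hg
    choose r hr using fun X : F => hne X.1 X.2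
    have hpi : Function.Injective p := by
      intro x y hxy
      by_contra hne
      exact Set.disjoint_left.1 (hgd hne) (hp x) (hxy ▸ hp y)
    have hri : Function.Injective r := by
      intro X Y hXY
      exact Subtype.ext (hdis _ X.2 _ Y.2 (r X) (hr X) (hXY ▸ hr Y))
    have hb : Function.Surjective (r ∘ p) := Finite.surjective_of_injective (hri.comp hpi)
    have hrs : Function.Surjective r := hb.of_comp
    obtain ⟨v, hv⟩ := hprop
    obtain ⟨X, rfl⟩ := hrs v
    obtain ⟨u, hu, huv⟩ := hv X.1 X.2 (hr X)
    obtain ⟨Y, rfl⟩ := hrs u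
    exact huv (by rw [Subtype.ext (hdis _ X.2 _ Y.2 (r Y) hu (hr Y))])
  obtain ⟨C⟩ := hG F H ⟨hminor, hnot⟩
  obtain ⟨X0, hX0⟩ := hFne
  refine ⟨fun X => if h : X ∈ F then C ⟨X, h⟩ else C ⟨X0, hX0⟩, ?_⟩
  intro X hX Y hY hXY ht
  simp only [hX, hY, dif_pos]
  exact C.valid (show H.Adj ⟨X, hX⟩ ⟨Y, hY⟩ from ⟨fun h => hXY (congrArg Subtype.val h), ht⟩)

/-- Simultaneous Kempe changes: on each `K i`, a union of components of the subgraph in the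
colours `P i`, the colours `P i` are permuted by `π i`. -/
lemma recolor {ι : Type*} {U : Set V} {φ : V → Fin m} (hφ : ProperOn G U φ) (K : ι → Set V)
    (P : ι → Set (Fin m)) (π : ι → Equiv.Perm (Fin m)) (hP : ∀ i, ∀ c ∈ P i, π i c ∈ P i)
    (hK : ∀ i, ∀ v ∈ K i, φ v ∈ P i)
    (hcl : ∀ i, ∀ u ∈ K i, ∀ v ∈ U, G.Adj u v → φ v ∈ P i → v ∈ K i)
    (hdis : ∀ i j, i ≠ j → ∀ v, v ∈ K i → v ∉ K j)
    (hij : ∀ i j, i ≠ j → (∀ u ∈ K i, ∀ v ∈ K j, ¬ G.Adj u v) ∨ Disjoint (P i) (P j)) :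
    ∃ ψ : V → Fin m, ProperOn G U ψ ∧ (∀ i, ∀ v ∈ K i, ψ v = π i (φ v)) ∧
      (∀ v, (∀ i, v ∉ K i) → ψ v = φ v) := by
  classical
  let ψ : V → Fin m := fun v => if h : ∃ i, v ∈ K i then π h.choose (φ v) else φ v
  have h1 : ∀ i, ∀ v ∈ K i, ψ v = π i (φ v) := by
    intro i v hv
    have h : ∃ i, v ∈ K i := ⟨i, hv⟩
    have : h.choose = i := by
      by_contra hne
      exact hdis _ _ hne v h.choose_spec hv
    simp only [ψ, dif_pos h, this]
  have h2 : ∀ v, (∀ i, v ∉ K i) → ψ v = φ v := by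
    intro v hv
    have h : ¬ ∃ i, v ∈ K i := by simpa using hv
    simp only [ψ, dif_neg h]
  -- one end in some `K i`, the other in no `K j`
  have h3 : ∀ i, ∀ u ∈ K i, ∀ v ∈ U, G.Adj u v → (∀ j, v ∉ K j) → ψ u ≠ ψ v := by
    intro i u hu v hv huv hvK heq
    rw [h1 i u hu, h2 v hvK] at heq
    exact hvK i (hcl i u hu v hv huv (heq ▸ hP i _ (hK i u hu)))
  refine ⟨ψ, ?_, h1, h2⟩
  intro u hu v hv huv
  by_cases hu' : ∃ i, u ∈ K i
  · obtain ⟨i, hi⟩ := hu'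
    by_cases hv' : ∃ j, v ∈ K j
    · obtain ⟨j, hj⟩ := hv'
      by_cases hijeq : i = j
      · subst hijeq
        rw [h1 i u hi, h1 i v hj]
        exact fun h => hφ u hu v hv huv ((π i).injective h)
      · rcases hij i j hijeq with h | h
        · exact absurd huv (h u hi v hj)
        · rw [h1 i u hi, h1 j v hj]
          intro heq
          exact Set.disjoint_left.1 h (hP i _ (hK i u hi)) (heq ▸ hP j _ (hK j v hj))
    · exact h3 i u hi v hv huv (by simpa using hv')
  · by_cases hv' : ∃ j, v ∈ K j
    · obtain ⟨j, hj⟩ := hv'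
      exact (h3 j v hj u hu huv.symm (by simpa using hu')).symm
    · rw [h2 u (by simpa using hu'), h2 v (by simpa using hv')]
      exact hφ u hu v hv huv

/-! ### Merging colour classes of `T` -/

/-- The part of `U` that a Kempe change of the colour class `w` of `T` against the colour `f`
has to touch. -/
def Kset (G : SimpleGraph V) (U T : Set V) (φ : V → Fin m) (w f : Fin m) : Set V :=
  reach G {v | v ∈ U ∧ (φ v = w ∨ φ v = f)} {s | s ∈ T ∧ φ s = w}

lemma Kset_base {U T : Set V} (hT : T ⊆ U) {φ : V → Fin m} {w f : Fin m} :
    {s | s ∈ T ∧ φ s = w} ⊆ {v | v ∈ U ∧ (φ v = w ∨ φ v = f)} :=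
  fun _ hs => ⟨hT hs.1, Or.inl hs.2⟩

lemma Kset_sub {U T : Set V} (hT : T ⊆ U) {φ : V → Fin m} {w f : Fin m} {v : V}
    (hv : v ∈ Kset G U T φ w f) : v ∈ U ∧ (φ v = w ∨ φ v = f) :=
  reach_sub (Kset_base hT) hv

lemma Kset_closed {U T : Set V} (hT : T ⊆ U) {φ : V → Fin m} {w f : Fin m} {u v : V}
    (hu : u ∈ Kset G U T φ w f) (hv : v ∈ U) (huv : G.Adj u v) (hc : φ v = w ∨ φ v = f) :
    v ∈ Kset G U T φ w f :=
  reach_closed (Kset_base hT) hu ⟨hv, hc⟩ huv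

lemma mem_Kset {U T : Set V} {φ : V → Fin m} {w f : Fin m} {s : V} (hs : s ∈ T) (hw : φ s = w) :
    s ∈ Kset G U T φ w f :=
  subset_reach _ _ ⟨hs, hw⟩

/-- The colour `w` of `T` is identified by `Q` with another colour of `T`. -/
def NonSing (T : Set V) (φ Q : V → Fin m) (s : V) : Prop :=
  ∃ s' ∈ T, φ s' ≠ φ s ∧ Q s' = Q s

/-- Merging colour classes of `T` as prescribed by `Q`: each class of at least two colours is
moved, by Kempe changes, to a fresh colour `fc`. -/
lemma tflip {U T : Set V} {φ : V → Fin m} (hφ : ProperOn G U φ) (hTU : T ⊆ U)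
    (CI : Set (Fin m)) (Q fc : Fin m → Fin m)
    (hRCI : ∀ s ∈ T, φ s ∉ CI)
    (hf : ∀ s ∈ T, NonSing T φ (Q ∘ φ) s → (∀ s' ∈ T, φ s' ≠ fc (Q (φ s))) ∧ fc (Q (φ s)) ∉ CI)
    (hfinj : ∀ s ∈ T, ∀ s' ∈ T, NonSing T φ (Q ∘ φ) s → NonSing T φ (Q ∘ φ) s' →
      fc (Q (φ s)) = fc (Q (φ s')) → Q (φ s) = Q (φ s'))
    (hK : ∀ s ∈ T, ∀ s' ∈ T, φ s ≠ φ s' → Q (φ s) = Q (φ s') →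
      ∀ u ∈ Kset G U T φ (φ s) (fc (Q (φ s))), ∀ v ∈ Kset G U T φ (φ s') (fc (Q (φ s))),
        u ≠ v ∧ ¬ G.Adj u v) :
    ∃ ψ : V → Fin m, ProperOn G U ψ ∧ (∀ v, φ v ∈ CI → ψ v = φ v) ∧
      (∀ v, ψ v ∈ CI → φ v ∈ CI) ∧
      (∀ s ∈ T, ∀ s' ∈ T, ψ s = ψ s' ↔ Q (φ s) = Q (φ s')) ∧
      (∀ b, ∀ s ∈ T, ψ b = ψ s → (∃ s' ∈ T, φ b = φ s' ∧ Q (φ s') = Q (φ s)) ∨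
        (NonSing T φ (Q ∘ φ) s ∧ φ b = fc (Q (φ s)))) := by
  classical
  let good : Fin m → Prop := fun w => ∃ s ∈ T, φ s = w ∧ NonSing T φ (Q ∘ φ) s
  let K : Fin m → Set V := fun w => {v | good w ∧ v ∈ Kset G U T φ w (fc (Q w))}
  have hKc : ∀ w, ∀ v ∈ K w, φ v = w ∨ φ v = fc (Q w) := fun w v hv => (Kset_sub hTU hv.2).2
  have hPd : ∀ w w', good w → good w' → w ≠ w' → Q w ≠ Q w' →
      ∀ c, (c = w ∨ c = fc (Q w)) → ¬ (c = w' ∨ c = fc (Q w')) := by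
    rintro _ _ ⟨s, hs, rfl, hn⟩ ⟨s', hs', rfl, hn'⟩ hne hQ c (rfl | rfl) (h | h)
    · exact hne h
    · exact (hf s' hs' hn').1 s hs h
    · exact (hf s hs hn).1 s' hs' h.symm
    · exact hQ (hfinj s hs s' hs' hn hn' h)
  obtain ⟨ψ, hψ, hψK, hψn⟩ := recolor hφ K (fun w => {c | c = w ∨ c = fc (Q w)})
    (fun w => Equiv.swap w (fc (Q w)))
    (by
      rintro w c (rfl | rfl)
      · exact Or.inr (Equiv.swap_apply_left _ _)
      · exact Or.inl (Equiv.swap_apply_right _ _))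
    hKc
    (fun w u hu v hv huv hc => ⟨hu.1, Kset_closed hTU hu.2 hv huv hc⟩)
    (by
      intro w w' hne v hv hv'
      by_cases hQ : Q w = Q w'
      · obtain ⟨⟨s, hs, rfl, hn⟩, h1⟩ := hv
        obtain ⟨⟨s', hs', rfl, hn'⟩, h2⟩ := hv'
        exact (hK s hs s' hs' hne hQ v h1 v (hQ ▸ h2)).1 rfl
      · exact hPd w w' hv.1 hv'.1 hne hQ _ (hKc w v hv) (hKc w' v hv'))
    (by
      intro w w' hne
      by_cases hg : good w ∧ good w'
      · by_cases hQ : Q w = Q w'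
        · obtain ⟨⟨s, hs, rfl, hn⟩, ⟨s', hs', rfl, hn'⟩⟩ := hg
          exact Or.inl fun u hu v hv => (hK s hs s' hs' hne hQ u hu.2 v (hQ ▸ hv.2)).2
        · exact Or.inr (Set.disjoint_left.2 (hPd w w' hg.1 hg.2 hne hQ))
      · exact Or.inl fun u hu v hv => absurd ⟨hu.1, hv.1⟩ hg)
  -- on a switched piece both the old and the new colour are among the two switched colours
  have hψKc : ∀ w, ∀ v ∈ K w, (φ v = w ∧ ψ v = fc (Q w)) ∨ (φ v = fc (Q w) ∧ ψ v = w) := by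
    intro w v hv
    rw [hψK w v hv]
    rcases hKc w v hv with h | h
    · exact Or.inl ⟨h, by rw [h, Equiv.swap_apply_left]⟩
    · exact Or.inr ⟨h, by rw [h, Equiv.swap_apply_right]⟩
  have hgCI : ∀ w, good w → w ∉ CI ∧ fc (Q w) ∉ CI := by
    rintro _ ⟨s, hs, rfl, hn⟩
    exact ⟨hRCI s hs, (hf s hs hn).2⟩
  have hgR : ∀ w, good w → ∀ s ∈ T, φ s ≠ fc (Q w) := by
    rintro _ ⟨s, hs, rfl, hn⟩
    exact (hf s hs hn).1
  have hTn : ∀ s ∈ T, NonSing T φ (Q ∘ φ) s → ψ s = fc (Q (φ s)) := by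
    intro s hs hn
    have hg : good (φ s) := ⟨s, hs, rfl, hn⟩
    rcases hψKc (φ s) s ⟨hg, mem_Kset hs rfl⟩ with h | h
    · exact h.2
    · exact absurd h.1 (hgR _ hg s hs)
  have hTs : ∀ s ∈ T, ¬ NonSing T φ (Q ∘ φ) s → ψ s = φ s := by
    intro s hs hn
    refine hψn s fun w hw => ?_
    rcases hψKc w s hw with h | h
    · obtain ⟨s', hs', rfl, s'', hs'', h1, h2⟩ := hw.1
      exact hn ⟨s'', hs'', by rwa [h.1], by simpa [h.1] using h2⟩
    · exact hgR w hw.1 s hs h.1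
  have hns : ∀ s ∈ T, ∀ s' ∈ T, φ s = φ s' → NonSing T φ (Q ∘ φ) s →
      NonSing T φ (Q ∘ φ) s' := by
    rintro s hs s' hs' h ⟨s'', hs'', h1, h2⟩
    exact ⟨s'', hs'', h ▸ h1, by simpa [h] using h2⟩
  have hnsQ : ∀ s ∈ T, ∀ s' ∈ T, Q (φ s) = Q (φ s') → NonSing T φ (Q ∘ φ) s →
      NonSing T φ (Q ∘ φ) s' := by
    intro s hs s' hs' h hn
    by_cases hφs : φ s = φ s'
    · exact hns s hs s' hs' hφs hn
    · exact ⟨s, hs, hφs, h⟩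
  refine ⟨ψ, hψ, ?_, ?_, ?_, ?_⟩
  · intro v hv
    refine hψn v fun w hw => ?_
    rcases hKc w v hw with h | h
    · exact (hgCI w hw.1).1 (h ▸ hv)
    · exact (hgCI w hw.1).2 (h ▸ hv)
  · intro v hv
    by_cases hw : ∃ w, v ∈ K w
    · obtain ⟨w, hw⟩ := hw
      rcases hψKc w v hw with h | h
      · exact absurd (h.2 ▸ hv) (hgCI w hw.1).2
      · exact absurd (h.2 ▸ hv) (hgCI w hw.1).1
    · rwa [← hψn v (by simpa using hw)]
  · intro s hs s' hs'
    by_cases hn : NonSing T φ (Q ∘ φ) s <;> by_cases hn' : NonSing T φ (Q ∘ φ) s'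
    · rw [hTn s hs hn, hTn s' hs' hn']
      exact ⟨hfinj s hs s' hs' hn hn', fun h => by rw [h]⟩
    · rw [hTn s hs hn, hTs s' hs' hn']
      exact ⟨fun h => absurd h.symm ((hf s hs hn).1 s' hs'),
        fun h => absurd (hnsQ s hs s' hs' h hn) hn'⟩
    · rw [hTs s hs hn, hTn s' hs' hn']
      exact ⟨fun h => absurd h ((hf s' hs' hn').1 s hs),
        fun h => absurd (hnsQ s' hs' s hs h.symm hn') hn⟩
    · rw [hTs s hs hn, hTs s' hs' hn']
      refine ⟨fun h => by rw [h], fun h => ?_⟩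
      by_contra hne
      exact hn ⟨s', hs', fun h => hne h.symm, h.symm⟩
  · intro b s hs hbs
    by_cases hn : NonSing T φ (Q ∘ φ) s
    · rw [hTn s hs hn] at hbs
      by_cases hw : ∃ w, b ∈ K w
      · obtain ⟨w, hw⟩ := hw
        obtain ⟨s', hs', rfl, hn'⟩ := hw.1
        rcases hψKc _ b hw with h | h
        · exact Or.inl ⟨s', hs', h.1, hfinj s' hs' s hs hn' hn (h.2.symm.trans hbs)⟩
        · exact absurd (h.2.symm.trans hbs) ((hf s hs hn).1 s' hs')
      · rw [hψn b (by simpa using hw)] at hbs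
        exact Or.inr ⟨hn, hbs⟩
    · rw [hTs s hs hn] at hbs
      by_cases hw : ∃ w, b ∈ K w
      · obtain ⟨w, hw⟩ := hw
        rcases hψKc _ b hw with h | h
        · exact absurd (hbs.symm.trans h.2) (hgR w hw.1 s hs)
        · obtain ⟨s', hs', rfl, hn'⟩ := hw.1
          exact absurd (hns s' hs' s hs (h.2.symm.trans hbs) hn') hn
      · rw [hψn b (by simpa using hw)] at hbs
        exact Or.inl ⟨s, hs, hbs, rfl⟩

/-! ### Branch sets for the colours of `T` -/

/-- Connected sets `B w ⊆ U`, one for each colour `w` used on `T`, with `B w` containing the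
colour class of `w` in `T`. The field `real` is the point: the sets may serve as branch sets,
because every identification `Q` of the colours of `T` which respects the edges between the sets
is realised by a colouring `ψ` of `U`, which moreover leaves the colours of `CI` alone. -/
structure Core (G : SimpleGraph V) (U T : Set V) (CI : Set (Fin m)) (φ : V → Fin m)
    (B : Fin m → Set V) : Prop where
  conn : ∀ s ∈ T, Conn G (B (φ s))
  mem : ∀ s ∈ T, s ∈ B (φ s)
  sub : ∀ s ∈ T, B (φ s) ⊆ U
  disj : ∀ s ∈ T, ∀ s' ∈ T, φ s ≠ φ s' → ∀ v ∈ B (φ s), v ∉ B (φ s')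
  avoid : ∀ s ∈ T, ∀ b ∈ B (φ s), φ b ∉ CI
  real : ∀ Q : Fin m → Fin m,
    (∀ s ∈ T, ∀ s' ∈ T, φ s ≠ φ s' → Touch G (B (φ s)) (B (φ s')) → Q (φ s) ≠ Q (φ s')) →
    ∃ ψ : V → Fin m, ProperOn G U ψ ∧ (∀ v, φ v ∈ CI → ψ v = φ v) ∧ (∀ v, ψ v ∈ CI → φ v ∈ CI) ∧
      (∀ s ∈ T, ∀ s' ∈ T, ψ s = ψ s' ↔ Q (φ s) = Q (φ s')) ∧
      (∀ s ∈ T, ∀ s' ∈ T, ∀ b ∈ B (φ s), ψ b = ψ s' → Q (φ s) = Q (φ s'))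

lemma Touch.symm {X Y : Set V} (h : Touch G X Y) : Touch G Y X := by
  obtain ⟨a, ha, b, hb, hab⟩ := h
  exact ⟨b, hb, a, ha, hab.symm⟩

lemma Touch.mono {X Y X' Y' : Set V} (hX : X ⊆ X') (hY : Y ⊆ Y') (h : Touch G X Y) :
    Touch G X' Y' := by
  obtain ⟨a, ha, b, hb, hab⟩ := h
  exact ⟨a, hX ha, b, hY hb, hab⟩

lemma exists_inj {α β : Type*} [Inhabited β] (A : Finset α) (B : Finset β)
    (h : A.card ≤ B.card) :
    ∃ f : α → β, (∀ a ∈ A, f a ∈ B) ∧ ∀ a ∈ A, ∀ a' ∈ A, f a = f a' → a = a' := by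
  classical
  obtain ⟨e⟩ : Nonempty (A ↪ B) := Function.Embedding.nonempty_of_card_le (by simpa using h)
  refine ⟨fun a => if ha : a ∈ A then e ⟨a, ha⟩ else default, ?_, ?_⟩
  · intro a ha
    simp [ha]
  · intro a ha a' ha' heq
    simp only [ha, ha', dif_pos] at heq
    exact congrArg Subtype.val (e.injective (Subtype.ext heq))

/-- If the Kempe piece of the colour `X'` meets or touches `D`, then the part of it that is
reached before entering `D` already touches `D`. -/
lemma hit {U T D : Set V} {φ : V → Fin m} {X' f : Fin m}
    (hD : ∀ s ∈ T, φ s = X' → s ∉ D) {u v : V} (hu : u ∈ D) (hv : v ∈ Kset G U T φ X' f)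
    (huv : u = v ∨ G.Adj u v) (hTU : T ⊆ U) :
    Touch G D (reach G {v | (v ∈ U ∧ (φ v = X' ∨ φ v = f)) ∧ v ∉ D} {s | s ∈ T ∧ φ s = X'}) := by
  have hb : {s | s ∈ T ∧ φ s = X'} ⊆ {v | (v ∈ U ∧ (φ v = X' ∨ φ v = f)) ∧ v ∉ D} :=
    fun s hs => ⟨Kset_base hTU hs, hD s hs.1 hs.2⟩
  by_contra hno
  have key : v ∈ reach G {v | (v ∈ U ∧ (φ v = X' ∨ φ v = f)) ∧ v ∉ D} {s | s ∈ T ∧ φ s = X'} := by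
    obtain ⟨s, hs, h⟩ := hv
    clear huv
    induction h with
    | refl => exact subset_reach _ _ hs
    | @tail x y _ h2 ih =>
      by_cases hy : y ∈ D
      · exact absurd ⟨y, hy, x, ih, h2.1.symm⟩ hno
      · exact reach_closed hb ih ⟨h2.2.2, hy⟩ h2.1
  rcases huv with rfl | huv
  · exact (reach_sub hb key).2 hu
  · exact hno ⟨u, hu, v, key, huv⟩

/-- Candidates `B` for a `Core`, together with a reserve `F` of colours not used by them. -/
structure State (G : SimpleGraph V) (U T : Set V) (CI : Set (Fin m)) (φ : V → Fin m)
    (B : Fin m → Set V) (F : Finset (Fin m)) : Prop where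
  conn : ∀ s ∈ T, Conn G (B (φ s))
  mem : ∀ s ∈ T, s ∈ B (φ s)
  sub : ∀ s ∈ T, B (φ s) ⊆ U
  disj : ∀ s ∈ T, ∀ s' ∈ T, φ s ≠ φ s' → ∀ v ∈ B (φ s), v ∉ B (φ s')
  avoid : ∀ s ∈ T, ∀ b ∈ B (φ s), φ b ∉ CI
  avoidF : ∀ s ∈ T, ∀ b ∈ B (φ s), φ b ∉ F
  avoidR : ∀ s ∈ T, ∀ s' ∈ T, ∀ b ∈ B (φ s), φ b = φ s' → φ s = φ s'
  FCI : ∀ f ∈ F, f ∉ CI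

open Classical in
/-- The pairs of colours of `T` whose sets do not touch. -/
noncomputable def apart (G : SimpleGraph V) (R : Finset (Fin m)) (B : Fin m → Set V) :
    Finset (Fin m × Fin m) :=
  (R ×ˢ R).filter fun p => p.1 < p.2 ∧ ¬ Touch G (B p.1) (B p.2)

/-- A colour `f` of the reserve is spent on enlarging `B (φ s0)` and `B (φ s1)` until they
touch. -/
lemma State.step {U T : Set V} {CI : Set (Fin m)} {φ : V → Fin m} {B : Fin m → Set V}
    {F R : Finset (Fin m)} (h : State G U T CI φ B F) (hTU : T ⊆ U)
    (hR : ∀ w, w ∈ R ↔ ∃ s ∈ T, φ s = w)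
    {s0 s1 : V} (h0 : s0 ∈ T) (h1 : s1 ∈ T) (h01 : φ s0 ≠ φ s1)
    (hnt : ¬ Touch G (B (φ s0)) (B (φ s1))) {f : Fin m} (hf : f ∈ F)
    {u v : V} (hu : u ∈ Kset G U T φ (φ s0) f) (hv : v ∈ Kset G U T φ (φ s1) f)
    (huv : u = v ∨ G.Adj u v) :
    ∃ B' : Fin m → Set V, State G U T CI φ B' (F.erase f) ∧
      (apart G R B').card < (apart G R B).card := by
  classical
  have hFR : ∀ s ∈ T, φ s ∉ F := fun s hs => h.avoidF s hs s (h.mem s hs)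
  have hfR : ∀ s ∈ T, φ s ≠ f := fun s hs he => hFR s hs (he ▸ hf)
  set D : Set V := B (φ s0) ∪ Kset G U T φ (φ s0) f with hDdef
  have hDT : ∀ s ∈ T, φ s = φ s1 → s ∉ D := by
    rintro s hs he (hsD | hsD)
    · exact h.disj s0 h0 s1 h1 h01 s hsD (he ▸ h.mem s hs)
    · rcases (Kset_sub hTU hsD).2 with h' | h'
      · exact h01 (h'.symm.trans he)
      · exact hfR s hs h'
  set E : Set V := reach G {v | (v ∈ U ∧ (φ v = φ s1 ∨ φ v = f)) ∧ v ∉ D} {s | s ∈ T ∧ φ s = φ s1}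
    with hEdef
  have hEb : {s | s ∈ T ∧ φ s = φ s1} ⊆ {v | (v ∈ U ∧ (φ v = φ s1 ∨ φ v = f)) ∧ v ∉ D} :=
    fun s hs => ⟨Kset_base hTU hs, hDT s hs.1 hs.2⟩
  have hEsub : ∀ v ∈ E, (v ∈ U ∧ (φ v = φ s1 ∨ φ v = f)) ∧ v ∉ D := fun v hv =>
    reach_sub hEb hv
  have hDE : Touch G D E := hit hDT (Or.inr hu) hv huv hTU
  let B' : Fin m → Set V := fun w => if w = φ s0 then D else if w = φ s1 then B (φ s1) ∪ E else B w
  have hB0 : B' (φ s0) = D := by simp [B']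
  have hB1 : B' (φ s1) = B (φ s1) ∪ E := by simp [B', h01.symm]
  have hBo : ∀ w, w ≠ φ s0 → w ≠ φ s1 → B' w = B w := fun w hw hw' => by simp [B', hw, hw']
  have hmono : ∀ w, B w ⊆ B' w := by
    intro w
    by_cases hw : w = φ s0
    · rw [hw, hB0]; exact Set.subset_union_left
    · by_cases hw' : w = φ s1
      · rw [hw', hB1]; exact Set.subset_union_left
      · exact (hBo w hw hw').symm.subset
  -- the vertices added to a set `B w` have colour `w` or `f`
  have hnew : ∀ w, ∀ b ∈ B' w, b ∈ B w ∨ (b ∈ U ∧ (w = φ s0 ∨ w = φ s1) ∧ (φ b = w ∨ φ b = f)) := by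
    intro w b hb
    by_cases hw : w = φ s0
    · subst hw
      rw [hB0] at hb
      rcases hb with hb | hb
      · exact Or.inl hb
      · exact Or.inr ⟨(Kset_sub hTU hb).1, Or.inl rfl, (Kset_sub hTU hb).2⟩
    · by_cases hw' : w = φ s1
      · subst hw'
        rw [hB1] at hb
        rcases hb with hb | hb
        · exact Or.inl hb
        · exact Or.inr ⟨(hEsub b hb).1.1, Or.inr rfl, (hEsub b hb).1.2⟩
      · rw [hBo w hw hw'] at hb
        exact Or.inl hb
  have hold : ∀ s ∈ T, ∀ s' ∈ T, φ s ≠ φ s' → ∀ b ∈ B (φ s), ¬ (φ b = φ s' ∨ φ b = f) := by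
    rintro s hs s' hs' hne b hb (hc | hc)
    · exact hne (h.avoidR s hs s' hs' b hb hc)
    · exact h.avoidF s hs b hb (hc ▸ hf)
  have hd01 : ∀ b ∈ B' (φ s0), b ∉ B' (φ s1) := by
    rw [hB0, hB1]
    rintro b hb (hb' | hb')
    · rcases hb with hb | hb
      · exact h.disj s0 h0 s1 h1 h01 b hb hb'
      · exact hold s1 h1 s0 h0 h01.symm b hb' (Kset_sub hTU hb).2
    · exact (hEsub b hb').2 hb
  refine ⟨B', ⟨?_, ?_, ?_, ?_, ?_, ?_, ?_, ?_⟩, ?_⟩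
  · intro s hs
    by_cases hw : φ s = φ s0
    · rw [hw, hB0]
      exact conn_union (h.conn s0 h0) fun x hx => hx.2 ▸ h.mem x hx.1
    · by_cases hw' : φ s = φ s1
      · rw [hw', hB1]
        exact conn_union (h.conn s1 h1) fun x hx => hx.2 ▸ h.mem x hx.1
      · rw [hBo _ hw hw']
        exact h.conn s hs
  · exact fun s hs => hmono _ (h.mem s hs)
  · intro s hs b hb
    rcases hnew _ b hb with hb | hb
    · exact h.sub s hs hb
    · exact hb.1
  · intro s hs s' hs' hne b hb hb'
    rcases hnew _ b hb with h2 | h2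
    · rcases hnew _ b hb' with h3 | h3
      · exact h.disj s hs s' hs' hne b h2 h3
      · exact hold s hs s' hs' hne b h2 h3.2.2
    · rcases hnew _ b hb' with h3 | h3
      · exact hold s' hs' s hs hne.symm b h3 h2.2.2
      · rcases h2.2.1 with e | e <;> rcases h3.2.1 with e' | e'
        · exact hne (e.trans e'.symm)
        · exact hd01 b (e ▸ hb) (e' ▸ hb')
        · exact hd01 b (e' ▸ hb') (e ▸ hb)
        · exact hne (e.trans e'.symm)
  · intro s hs b hb
    rcases hnew _ b hb with hb | ⟨-, -, hb | hb⟩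
    · exact h.avoid s hs b hb
    · rw [hb]; exact h.avoid s hs s (h.mem s hs)
    · rw [hb]; exact h.FCI f hf
  · intro s hs b hb
    rcases hnew _ b hb with hb | ⟨-, -, hb | hb⟩
    · exact fun hc => h.avoidF s hs b hb (Finset.mem_of_mem_erase hc)
    · rw [hb]; exact fun hc => hFR s hs (Finset.mem_of_mem_erase hc)
    · rw [hb]; exact Finset.notMem_erase f F
  · intro s hs s' hs' b hb hc
    rcases hnew _ b hb with hb | ⟨-, -, hb | hb⟩
    · exact h.avoidR s hs s' hs' b hb hc
    · exact hb.symm.trans hc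
    · exact absurd (hc.symm.trans hb) (hfR s' hs')
  · exact fun f' hf' => h.FCI f' (Finset.mem_of_mem_erase hf')
  · have hsub : apart G R B' ⊆ apart G R B := by
      intro p hp
      simp only [apart, Finset.mem_filter] at hp ⊢
      exact ⟨hp.1, hp.2.1, fun ht => hp.2.2 (ht.mono (hmono _) (hmono _))⟩
    have ht : Touch G (B' (φ s0)) (B' (φ s1)) := by
      rw [hB0, hB1]
      exact hDE.mono subset_rfl Set.subset_union_right
    have hR0 : φ s0 ∈ R := (hR _).2 ⟨s0, h0, rfl⟩
    have hR1 : φ s1 ∈ R := (hR _).2 ⟨s1, h1, rfl⟩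
    refine Finset.card_lt_card ((Finset.ssubset_iff_of_subset hsub).2 ?_)
    rcases lt_or_gt_of_ne h01 with hlt | hlt
    · refine ⟨(φ s0, φ s1), ?_, ?_⟩
      · simp only [apart, Finset.mem_filter, Finset.mem_product]
        exact ⟨⟨hR0, hR1⟩, hlt, hnt⟩
      · simp only [apart, Finset.mem_filter]
        exact fun hc => hc.2.2 ht
    · refine ⟨(φ s1, φ s0), ?_, ?_⟩
      · simp only [apart, Finset.mem_filter, Finset.mem_product]
        exact ⟨⟨hR1, hR0⟩, hlt, fun hc => hnt hc.symm⟩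
      · simp only [apart, Finset.mem_filter]
        exact fun hc => hc.2.2 ht.symm

/-- When no colour of the reserve helps any more, every class of identified colours can be moved
to its own colour of the reserve. -/
lemma State.core {U T : Set V} {CI : Set (Fin m)} {φ : V → Fin m} {B : Fin m → Set V}
    {F R : Finset (Fin m)} (h : State G U T CI φ B F) (hφ : ProperOn G U φ) (hTU : T ⊆ U)
    (hR : ∀ w, w ∈ R ↔ ∃ s ∈ T, φ s = w) (hcard : (apart G R B).card ≤ F.card)
    (hgood : ∀ s0 ∈ T, ∀ s1 ∈ T, φ s0 ≠ φ s1 → ¬ Touch G (B (φ s0)) (B (φ s1)) → ∀ f ∈ F,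
      ∀ u ∈ Kset G U T φ (φ s0) f, ∀ v ∈ Kset G U T φ (φ s1) f, ¬ (u = v ∨ G.Adj u v)) :
    Core G U T CI φ B := by
  classical
  refine ⟨h.conn, h.mem, h.sub, h.disj, h.avoid, ?_⟩
  intro Q hQ
  rcases isEmpty_or_nonempty (Fin m) with hem | ⟨⟨x0⟩⟩
  · refine ⟨φ, hφ, fun v => (hem.false (φ v)).elim, fun v => (hem.false (φ v)).elim,
      fun s => (hem.false (φ s)).elim, fun s => (hem.false (φ s)).elim⟩
  have : Inhabited (Fin m) := ⟨x0⟩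
  let C : Finset (Fin m) := Finset.univ.filter fun c =>
    ∃ s ∈ T, NonSing T φ (Q ∘ φ) s ∧ Q (φ s) = c
  have hC : C ⊆ (apart G R B).image (fun p => Q p.1) := by
    intro c hc
    obtain ⟨s, hs, ⟨s', hs', hne, hq⟩, rfl⟩ := (Finset.mem_filter.1 hc).2
    have hR0 : φ s ∈ R := (hR _).2 ⟨s, hs, rfl⟩
    have hR1 : φ s' ∈ R := (hR _).2 ⟨s', hs', rfl⟩
    rw [Finset.mem_image]
    rcases lt_or_gt_of_ne hne with hlt | hlt
    · refine ⟨(φ s', φ s), ?_, hq⟩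
      simp only [apart, Finset.mem_filter, Finset.mem_product]
      exact ⟨⟨hR1, hR0⟩, hlt, fun ht => hQ s' hs' s hs hne ht hq⟩
    · refine ⟨(φ s, φ s'), ?_, rfl⟩
      simp only [apart, Finset.mem_filter, Finset.mem_product]
      exact ⟨⟨hR0, hR1⟩, hlt, fun ht => hQ s hs s' hs' hne.symm ht hq.symm⟩
  obtain ⟨fc, hfF, hfi⟩ := exists_inj C F
    ((Finset.card_le_card hC).trans (Finset.card_image_le.trans hcard))
  have hmemC : ∀ s ∈ T, NonSing T φ (Q ∘ φ) s → Q (φ s) ∈ C := fun s hs hn =>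
    Finset.mem_filter.2 ⟨Finset.mem_univ _, s, hs, hn, rfl⟩
  obtain ⟨ψ, p1, p2, p3, p4, p5⟩ := tflip hφ hTU CI Q fc
    (fun s hs => h.avoid s hs s (h.mem s hs))
    (fun s hs hn => ⟨fun s' hs' he =>
      h.avoidF s' hs' s' (h.mem s' hs') (he ▸ hfF _ (hmemC s hs hn)),
      h.FCI _ (hfF _ (hmemC s hs hn))⟩)
    (fun s hs s' hs' hn hn' he => hfi _ (hmemC s hs hn) _ (hmemC s' hs' hn') he)
    (by
      intro s hs s' hs' hne hq u hu v hv
      have := hgood s hs s' hs' hne (fun ht => hQ s hs s' hs' hne ht hq) _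
        (hfF _ (hmemC s hs ⟨s', hs', hne.symm, hq.symm⟩)) u hu v hv
      exact not_or.1 this)
  refine ⟨ψ, p1, p2, p3, p4, ?_⟩
  intro s hs s' hs' b hb he
  rcases p5 b s' hs' he with ⟨s'', hs'', h1, h2⟩ | ⟨hn, h1⟩
  · rw [h.avoidR s hs s'' hs'' b hb h1, h2]
  · exact absurd (h1 ▸ hfF _ (hmemC s' hs' hn)) (h.avoidF s hs b hb)

/-- Spending the reserve one colour at a time ends with a `Core`: each colour spent makes one more
pair of sets touch, so the reserve stays at least as large as the number of pairs apart. -/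
lemma State.exists_core {U T : Set V} {CI : Set (Fin m)} {φ : V → Fin m}
    {R : Finset (Fin m)} (hφ : ProperOn G U φ) (hTU : T ⊆ U)
    (hR : ∀ w, w ∈ R ↔ ∃ s ∈ T, φ s = w) (n : ℕ) :
    ∀ (F : Finset (Fin m)) (B : Fin m → Set V), F.card = n → State G U T CI φ B F →
      (apart G R B).card ≤ F.card → ∃ B', Core G U T CI φ B' := by
  induction n with
  | zero =>
    intro F B hF h hcard
    refine ⟨B, h.core hφ hTU hR hcard ?_⟩
    intro _ _ _ _ _ _ f hf
    simp [Finset.card_eq_zero.1 hF] at hf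
  | succ n ih =>
    intro F B hF h hcard
    by_cases hgood : ∀ s0 ∈ T, ∀ s1 ∈ T, φ s0 ≠ φ s1 → ¬ Touch G (B (φ s0)) (B (φ s1)) →
      ∀ f ∈ F, ∀ u ∈ Kset G U T φ (φ s0) f, ∀ v ∈ Kset G U T φ (φ s1) f, ¬ (u = v ∨ G.Adj u v)
    · exact ⟨B, h.core hφ hTU hR hcard hgood⟩
    · push Not at hgood
      obtain ⟨s0, h0, s1, h1, h01, hnt, f, hf, u, hu, v, hv, huv⟩ := hgood
      obtain ⟨B', hB', hlt⟩ := h.step hTU hR h0 h1 h01 hnt hf hu hv huv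
      have := Finset.card_erase_of_mem hf
      exact ih (F.erase f) B' (by omega) hB' (by omega)

/-! ### Existence of a `Core` -/

/-- With two colours on `T`, one of them used only once, a single spare colour suffices. -/
lemma core_two {U T : Set V} {CI : Set (Fin m)} {φ : V → Fin m} (hφ : ProperOn G U φ)
    (hTU : T ⊆ U) (hRCI : ∀ s ∈ T, φ s ∉ CI) {X z f : Fin m} (hXz : X ≠ z)
    (hT : ∀ s ∈ T, φ s = X ∨ φ s = z) (hz : ∀ s ∈ T, ∀ s' ∈ T, φ s = z → φ s' = z → s = s')
    (hf : f ∉ CI) (hfT : ∀ s ∈ T, φ s ≠ f)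
    (hX : ∀ s ∈ T, ∀ s' ∈ T, φ s = X → φ s' = X →
      ReflTransGen (Rel G {v | v ∈ U ∧ (φ v = X ∨ φ v = f)}) s s') :
    ∃ B, Core G U T CI φ B := by
  classical
  set D := Kset G U T φ X f with hDdef
  have hDT : ∀ s ∈ T, φ s = z → s ∉ D := by
    intro s hs he hsD
    rcases (Kset_sub hTU hsD).2 with h' | h'
    · exact hXz (h'.symm.trans he)
    · exact hfT s hs h'
  set E : Set V := reach G {v | (v ∈ U ∧ (φ v = z ∨ φ v = f)) ∧ v ∉ D} {s | s ∈ T ∧ φ s = z}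
    with hEdef
  have hEb : {s | s ∈ T ∧ φ s = z} ⊆ {v | (v ∈ U ∧ (φ v = z ∨ φ v = f)) ∧ v ∉ D} :=
    fun s hs => ⟨Kset_base hTU hs, hDT s hs.1 hs.2⟩
  have hEsub : ∀ v ∈ E, (v ∈ U ∧ (φ v = z ∨ φ v = f)) ∧ v ∉ D := fun v hv =>
    reach_sub hEb hv
  let B : Fin m → Set V := fun w => if w = X then D else E
  have hBX : B X = D := by simp [B]
  have hBz : B z = E := by simp [B, hXz.symm]
  have hsub : ∀ s ∈ T, ∀ b ∈ B (φ s), b ∈ U ∧ (φ b = φ s ∨ φ b = f) := by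
    intro s hs b hb
    rcases hT s hs with h | h
    · rw [h, hBX] at hb
      rw [h]; exact Kset_sub hTU hb
    · rw [h, hBz] at hb
      rw [h]; exact (hEsub b hb).1
  refine ⟨B, ⟨?_, ?_, ?_, ?_, ?_, ?_⟩⟩
  · intro s hs
    rcases hT s hs with h | h
    · rw [h, hBX]
      exact conn_reach fun u hu v hv => hX u hu.1 v hv.1 hu.2 hv.2
    · rw [h, hBz]
      refine conn_reach fun u hu v hv => ?_
      rw [hz u hu.1 v hv.1 hu.2 hv.2]
  · intro s hs
    rcases hT s hs with h | h
    · rw [h, hBX]; exact mem_Kset hs h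
    · rw [h, hBz]; exact subset_reach _ _ ⟨hs, h⟩
  · exact fun s hs b hb => (hsub s hs b hb).1
  · intro s hs s' hs' hne b hb hb'
    rcases hT s hs with h | h <;> rcases hT s' hs' with h' | h'
    · exact hne (h.trans h'.symm)
    · rw [h, hBX] at hb; rw [h', hBz] at hb'
      exact (hEsub b hb').2 hb
    · rw [h, hBz] at hb; rw [h', hBX] at hb'
      exact (hEsub b hb).2 hb'
    · exact hne (h.trans h'.symm)
  · intro s hs b hb
    rcases (hsub s hs b hb).2 with h | h
    · rw [h]; exact hRCI s hs
    · rw [h]; exact hf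
  · intro Q hQ
    by_cases hq : ∀ s ∈ T, ∀ s' ∈ T, Q (φ s) = Q (φ s') → φ s = φ s'
    · refine ⟨φ, hφ, fun _ _ => rfl, fun _ h => h,
        fun s hs s' hs' => ⟨fun h => by rw [h], hq s hs s' hs'⟩, ?_⟩
      intro s hs s' hs' b hb he
      rcases (hsub s hs b hb).2 with h | h
      · rw [← h, he]
      · exact absurd (he.symm.trans h) (hfT s' hs')
    · push Not at hq
      obtain ⟨a, ha, a', ha', hqa, hne⟩ := hq
      -- both colours occur and are identified, so the two sets do not touch
      obtain ⟨s0, h0, e0, s1, h1, e1, hQ01⟩ : ∃ s0 ∈ T, φ s0 = X ∧ ∃ s1 ∈ T, φ s1 = z ∧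
          Q X = Q z := by
        rcases hT a ha with h | h <;> rcases hT a' ha' with h' | h'
        · exact absurd (h.trans h'.symm) hne
        · exact ⟨a, ha, h, a', ha', h', by rw [← h, ← h', hqa]⟩
        · exact ⟨a', ha', h', a, ha, h, by rw [← h, ← h', hqa]⟩
        · exact absurd (h.trans h'.symm) hne
      have hQc : ∀ s ∈ T, Q (φ s) = Q X := by
        intro s hs
        rcases hT s hs with h | h
        · rw [h]
        · rw [h, hQ01]
      have hnt : ¬ Touch G D E := fun ht => hQ s0 h0 s1 h1 (by rwa [e0, e1])
        (by rwa [e0, e1, hBX, hBz]) (by rw [e0, e1, hQ01])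
      have hap : ∀ u ∈ Kset G U T φ X f, ∀ v ∈ Kset G U T φ z f, ¬ (u = v ∨ G.Adj u v) :=
        fun u hu v hv h => hnt (hit hDT hu hv h hTU)
      obtain ⟨ψ, p1, p2, p3, p4, -⟩ := tflip hφ hTU CI Q (fun _ => f) hRCI
        (fun s hs _ => ⟨hfT, hf⟩)
        (fun s hs s' hs' _ _ _ => by rw [hQc s hs, hQc s' hs'])
        (by
          intro s hs s' hs' hne _ u hu v hv
          rcases hT s hs with h | h <;> rcases hT s' hs' with h' | h'
          · exact absurd (h.trans h'.symm) hne
          · exact not_or.1 (hap u (h ▸ hu) v (h' ▸ hv))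
          · have := not_or.1 (hap v (h' ▸ hv) u (h ▸ hu))
            exact ⟨fun e => this.1 e.symm, fun e => this.2 e.symm⟩
          · exact absurd (h.trans h'.symm) hne)
      exact ⟨ψ, p1, p2, p3, p4, fun s hs s' hs' _ _ _ => by rw [hQc s hs, hQc s' hs']⟩

lemma apart_card (R : Finset (Fin m)) (B : Fin m → Set V) :
    2 * (apart G R B).card ≤ R.card * R.card - R.card := by
  classical
  have h1 : apart G R B ∪ (apart G R B).image Prod.swap ⊆ R.offDiag := by
    intro p hp
    simp only [apart, Finset.mem_union, Finset.mem_image, Finset.mem_filter,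
      Finset.mem_product] at hp
    rw [Finset.mem_offDiag]
    rcases hp with hp | ⟨q, hq, rfl⟩
    · exact ⟨hp.1.1, hp.1.2, hp.2.1.ne⟩
    · exact ⟨hq.1.2, hq.1.1, hq.2.1.ne'⟩
  have h2 : Disjoint (apart G R B) ((apart G R B).image Prod.swap) := by
    rw [Finset.disjoint_left]
    intro p hp hp'
    simp only [apart, Finset.mem_image, Finset.mem_filter] at hp hp'
    obtain ⟨q, hq, rfl⟩ := hp'
    exact lt_asymm hp.2.1 hq.2.1
  have h3 := Finset.card_le_card h1
  rw [Finset.card_union_of_disjoint h2, Finset.card_image_of_injective _ Prod.swap_injective,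
    Finset.offDiag_card] at h3
  omega

lemma succ_le_two_pow {t : ℕ} (ht : 3 ≤ t) : t + 1 ≤ 2 ^ (t - 1) := by
  obtain ⟨n, rfl⟩ : ∃ n, t = n + 3 := ⟨t - 3, by omega⟩
  have : n < 2 ^ n := Nat.lt_two_pow_self
  have h4 : 2 ^ (n + 3 - 1) = 4 * 2 ^ n := by
    rw [show n + 3 - 1 = n + 2 by omega, pow_add]; ring
  omega

lemma pow_bound (t : ℕ) (ht : 4 ≤ t) : t * t + 4 ≤ 2 ^ t + t := by
  induction t, ht using Nat.le_induction with
  | base => norm_num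
  | succ n hn ih =>
    rw [pow_succ]
    nlinarith

/-- The colours used at least twice on `T`. -/
def multi [DecidableEq V] (T : Finset V) (φ : V → Fin m) : Finset (Fin m) :=
  (T.image φ).filter fun w => 1 < (T.filter fun s => φ s = w).card

lemma card_multi [DecidableEq V] (T : Finset V) (φ : V → Fin m) :
    (T.image φ).card + (multi T φ).card ≤ T.card := by
  rw [Finset.card_eq_sum_card_image φ T, multi, Finset.card_filter, Finset.card_eq_sum_ones,
    ← Finset.sum_add_distrib]
  refine Finset.sum_le_sum fun w hw => ?_
  obtain ⟨s, hs, rfl⟩ := Finset.mem_image.1 hw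
  have : 0 < (T.filter fun x => φ x = φ s).card :=
    Finset.card_pos.2 ⟨s, Finset.mem_filter.2 ⟨hs, rfl⟩⟩
  split_ifs <;> omega

/-- If no class of `T` can be split by a Kempe change with a colour from outside `CI`, and the
number of colours is as large as assumed, then a `Core` exists. -/
lemma exists_core {U : Set V} {T : Finset V} {CI : Finset (Fin m)} {φ : V → Fin m}
    [DecidableEq V] (hφ : ProperOn G U φ) (hTU : (T : Set V) ⊆ U) (hRCI : ∀ s ∈ T, φ s ∉ CI)
    {t : ℕ} (ht : 3 ≤ t) (hT : T.card ≤ t) (hq : (T.image φ).card < T.card)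
    (hm : CI.card + T.card + 2 ^ (t - 1) ≤ m + t + 1)
    (hns : ∀ s ∈ T, ∀ s' ∈ T, φ s = φ s' → ∀ j, j ∉ CI → (∀ x ∈ T, φ x ≠ j) →
      ReflTransGen (Rel G {v | v ∈ U ∧ (φ v = φ s ∨ φ v = j)}) s s') :
    ∃ B, Core G U (T : Set V) (CI : Set (Fin m)) φ B := by
  classical
  have hdisj : Disjoint CI (T.image φ) := by
    rw [Finset.disjoint_left]
    intro c hc hc'
    obtain ⟨s, hs, rfl⟩ := Finset.mem_image.1 hc'
    exact hRCI s hs hc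
  have hmulti := card_multi T φ
  have havail : ((CI ∪ T.image φ)ᶜ).card = m - (CI.card + (T.image φ).card) := by
    rw [Finset.card_compl, Finset.card_union_of_disjoint hdisj, Fintype.card_fin]
  have hpow := succ_le_two_pow ht
  have hTpos : 0 < T.card := by omega
  obtain ⟨x0, -⟩ := Finset.card_pos.1 hTpos
  have : Inhabited (Fin m) := ⟨φ x0⟩
  by_cases hcase : (T.image φ).card ≤ 1 ∨ 4 ≤ t
  · obtain ⟨j, hjA, hji⟩ := exists_inj (multi T φ) ((CI ∪ T.image φ)ᶜ) (by omega)
    set F := (CI ∪ T.image φ)ᶜ \ (multi T φ).image j with hF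
    have hFcard : ((CI ∪ T.image φ)ᶜ).card ≤ F.card + (multi T φ).card := by
      have h1 := Finset.le_card_sdiff ((multi T φ).image j) ((CI ∪ T.image φ)ᶜ)
      have h2 : ((multi T φ).image j).card ≤ (multi T φ).card := Finset.card_image_le
      rw [← hF] at h1
      omega
    have hFm : ∀ c ∈ F, c ∉ CI ∧ (∀ s ∈ T, φ s ≠ c) ∧ ∀ w ∈ multi T φ, j w ≠ c := by
      intro c hc
      simp only [hF, Finset.mem_sdiff, Finset.mem_compl, Finset.mem_union, Finset.mem_image,
        not_or, not_exists, not_and] at hc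
      exact ⟨hc.1.1, hc.1.2, hc.2⟩
    have hjm : ∀ w ∈ multi T φ, j w ∉ CI ∧ ∀ s ∈ T, φ s ≠ j w := by
      intro w hw
      have := hjA w hw
      simp only [Finset.mem_compl, Finset.mem_union, Finset.mem_image,
        not_or, not_exists, not_and] at this
      exact this
    have hnm : ∀ s ∈ T, φ s ∉ multi T φ → ∀ s' ∈ T, φ s' = φ s → s' = s := by
      intro s hs hn s' hs' he
      by_contra hne
      refine hn (Finset.mem_filter.2 ⟨Finset.mem_image_of_mem _ hs, ?_⟩)
      exact Finset.one_lt_card.2 ⟨s', by simp [hs', he], s, by simp [hs], hne⟩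
    let B : Fin m → Set V := fun w =>
      if w ∈ multi T φ then Kset G U T φ w (j w) else {s | s ∈ T ∧ φ s = w}
    have hBm : ∀ w ∈ multi T φ, B w = Kset G U T φ w (j w) := fun w hw => by simp [B, hw]
    have hBn : ∀ w, w ∉ multi T φ → B w = {s | s ∈ T ∧ φ s = w} := fun w hw => by simp [B, hw]
    have hBc : ∀ w, ∀ b ∈ B w, b ∈ U ∧ (φ b = w ∨ (w ∈ multi T φ ∧ φ b = j w)) := by
      intro w b hb
      by_cases hw : w ∈ multi T φ
      · rw [hBm w hw] at hb
        have := Kset_sub hTU hb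
        tauto
      · rw [hBn w hw] at hb
        exact ⟨hTU hb.1, Or.inl hb.2⟩
    refine State.exists_core (R := T.image φ) hφ hTU (by simp) F.card F B rfl
      ⟨?_, ?_, ?_, ?_, ?_, ?_, ?_, ?_⟩ ?_
    · intro s hs
      by_cases hw : φ s ∈ multi T φ
      · rw [hBm _ hw]
        refine conn_reach fun u hu v hv => ?_
        have := hns u hu.1 v hv.1 (hu.2.trans hv.2.symm) (j (φ s)) (hjm _ hw).1 (hjm _ hw).2
        rwa [hu.2] at this
      · rw [hBn _ hw]
        intro u hu v hv
        rw [hnm s hs hw u hu.1 hu.2, hnm s hs hw v hv.1 hv.2]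
    · intro s hs
      by_cases hw : φ s ∈ multi T φ
      · rw [hBm _ hw]; exact mem_Kset hs rfl
      · rw [hBn _ hw]; exact ⟨hs, rfl⟩
    · exact fun s hs b hb => (hBc _ b hb).1
    · intro s hs s' hs' hne b hb hb'
      rcases (hBc _ b hb).2 with h | ⟨hw, h⟩ <;> rcases (hBc _ b hb').2 with h' | ⟨hw', h'⟩
      · exact hne (h.symm.trans h')
      · exact (hjm _ hw').2 s hs (h.symm.trans h')
      · exact (hjm _ hw).2 s' hs' (h'.symm.trans h)
      · exact hne (hji _ hw _ hw' (h.symm.trans h'))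
    · intro s hs b hb
      rcases (hBc _ b hb).2 with h | ⟨hw, h⟩
      · rw [h]; exact hRCI s hs
      · rw [h]; exact (hjm _ hw).1
    · intro s hs b hb hbF
      rcases (hBc _ b hb).2 with h | ⟨hw, h⟩
      · exact (hFm _ hbF).2.1 s hs h.symm
      · exact (hFm _ hbF).2.2 _ hw h.symm
    · intro s hs s' hs' b hb he
      rcases (hBc _ b hb).2 with h | ⟨hw, h⟩
      · exact h.symm.trans he
      · exact absurd (he.symm.trans h) ((hjm _ hw).2 s' hs')
    · exact fun f hf => (hFm f hf).1
    · have h1 := apart_card (G := G) (T.image φ) B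
      rcases hcase with hc | hc
      · have : (T.image φ).card * (T.image φ).card - (T.image φ).card = 0 := by
          interval_cases (T.image φ).card <;> rfl
        omega
      · have h3 := pow_bound t hc
        have h4 : 2 ^ t = 2 * 2 ^ (t - 1) := by
          rw [← pow_succ', Nat.sub_add_cancel (by omega)]
        -- `2 |F| ≥ 2 (2 ^ (t - 1) - t - 1) ≥ (t - 1) (t - 2) ≥ q (q - 1)` with `q` colours on `T`
        have h5 : 2 ^ (t - 1) ≤ F.card + t + 1 := by omega
        obtain ⟨q, hqq⟩ : ∃ q, q = (T.image φ).card := ⟨_, rfl⟩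
        obtain ⟨n, rfl⟩ : ∃ n, t = n + 1 := ⟨t - 1, by omega⟩
        have h6 : q ≤ n := by omega
        have h7 : q * q - q ≤ n * n - n := by
          rw [← Nat.mul_sub_one, ← Nat.mul_sub_one]
          exact Nat.mul_le_mul h6 (by omega)
        rw [← hqq] at h1
        have h8 : (n + 1) * (n + 1) = n * n + 2 * n + 1 := by ring
        omega
  · -- three vertices in `T` with two colours, and at least one spare colour
    have ht3 : t = 3 := by omega
    subst ht3
    have hR2 : (T.image φ).card = 2 := by omega
    have hT3 : T.card = 3 := by omega
    obtain ⟨f, hf⟩ : ((CI ∪ T.image φ)ᶜ).Nonempty := by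
      rw [← Finset.card_pos]; norm_num at hm; omega
    simp only [Finset.mem_compl, Finset.mem_union, Finset.mem_image,
        not_or, not_exists, not_and] at hf
    obtain ⟨a, b, hab, hTab⟩ := Finset.card_eq_two.1 hR2
    have hsum : (T.filter fun s => φ s = a).card + (T.filter fun s => φ s = b).card = 3 := by
      rw [← hT3, Finset.card_eq_sum_card_image φ T, hTab, Finset.sum_pair hab]
    have hT2 : ∀ s ∈ T, φ s = a ∨ φ s = b := by
      intro s hs
      have := Finset.mem_image_of_mem φ hs
      rw [hTab] at this
      simpa using this
    have hone : ∀ c, (T.filter fun s => φ s = c).card ≤ 1 →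
        ∀ s ∈ T, ∀ s' ∈ T, φ s = c → φ s' = c → s = s' := fun c hc s hs s' hs' h h' =>
      Finset.card_le_one.1 hc s (by simp [hs, h]) s' (by simp [hs', h'])
    have hX : ∀ X, ∀ s ∈ (T : Set V), ∀ s' ∈ (T : Set V), φ s = X → φ s' = X →
        ReflTransGen (Rel G {v | v ∈ U ∧ (φ v = X ∨ φ v = f)}) s s' := by
      rintro X s hs s' hs' rfl h'
      exact hns s hs s' hs' h'.symm f hf.1 hf.2
    rcases (by omega : (T.filter fun s => φ s = b).card ≤ 1 ∨
        (T.filter fun s => φ s = a).card ≤ 1) with h | h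
    · exact core_two hφ hTU hRCI hab hT2 (hone b h) hf.1 hf.2 (hX a)
    · exact core_two hφ hTU hRCI hab.symm (fun s hs => (hT2 s hs).symm) (hone a h) hf.1 hf.2
        (hX b)

/-! ### Realising a partition of `S` -/

/-- Adjusting the colours on an independent set `I` on which `ψ` is constant. The vertices of `I`
are first given different colours of `CI`, one for each value of `Q`, and those on which `Q` agrees
with a vertex of `T` are then moved to the colour of that vertex; the hypotheses on `Q` say that
the Kempe pieces involved stay apart from each other and from `Bu ⊇ T`. -/
lemma attain {U T I Bu : Set V} {CI : Set (Fin m)} {ψ Q : V → Fin m} {z0 : Fin m}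
    (hψ : ProperOn G U ψ) (hIU : I ⊆ U) (hI : ∀ u ∈ I, ψ u = z0) (hz0 : z0 ∈ CI)
    (hTB : T ⊆ Bu) (hB : ∀ b ∈ Bu, ψ b ∉ CI)
    (hQT : ∀ s ∈ T, ∀ s' ∈ T, ψ s = ψ s' ↔ Q s = Q s')
    (hQI : ∀ u ∈ I, ∀ u' ∈ I, ReflTransGen (Rel G (U \ Bu)) u u' → Q u = Q u')
    (hQB : ∀ u ∈ I, ∀ v ∈ reach G (U \ Bu) {u}, ∀ b ∈ Bu, G.Adj b v → ∀ s ∈ T, ψ b = ψ s →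
      Q u ≠ Q s)
    (g : Fin m → Fin m) (hg : ∀ c, g c ∈ CI)
    (hgi : ∀ u ∈ I, ∀ u' ∈ I, g (Q u) = g (Q u') → Q u = Q u') :
    ∃ χ : V → Fin m, ProperOn G U χ ∧
      ∀ x ∈ T ∪ I, ∀ y ∈ T ∪ I, χ x = χ y ↔ Q x = Q y := by
  classical
  have hIB : ∀ u ∈ I, u ∈ U \ Bu := fun u hu => ⟨hIU hu, fun hb => hB u hb (hI u hu ▸ hz0)⟩
  have hsep : ∀ x ∈ I, ∀ x' ∈ I, ∀ u ∈ reach G (U \ Bu) {x}, ∀ v ∈ reach G (U \ Bu) {x'},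
      (u = v ∨ G.Adj u v) → Q x = Q x' := by
    rintro x hx x' hx' u hu v hv huv
    have hu' := reach_sub (Set.singleton_subset_iff.2 (hIB x hx)) hu
    have hv' := reach_sub (Set.singleton_subset_iff.2 (hIB x' hx')) hv
    obtain ⟨_, rfl, h1⟩ := hu
    obtain ⟨_, rfl, h2⟩ := hv
    refine hQI _ hx _ hx' (h1.trans (ReflTransGen.trans ?_ (rtg_symm h2)))
    rcases huv with rfl | huv
    · exact .refl
    · exact .single ⟨huv, hu', hv'⟩
  have hsep' : ∀ (K : Fin m → Set V), (∀ a, ∀ v ∈ K a, ∃ x ∈ I, Q x = a ∧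
      v ∈ reach G (U \ Bu) {x}) → ∀ a a', a ≠ a' → ∀ u ∈ K a, ∀ v ∈ K a',
      ¬ (u = v ∨ G.Adj u v) := by
    intro K hK a a' hne u hu v hv huv
    obtain ⟨x, hx, rfl, hux⟩ := hK a u hu
    obtain ⟨x', hx', rfl, hvx⟩ := hK a' v hv
    exact hne (hsep x hx x' hx' u hux v hvx huv)
  -- spreading `I` over the colours of `CI`
  let K : Fin m → Set V := fun a => reach G {v | v ∈ U ∧ ψ v ∈ CI} {u | u ∈ I ∧ Q u = a}
  have hKb : ∀ a, {u | u ∈ I ∧ Q u = a} ⊆ {v | v ∈ U ∧ ψ v ∈ CI} := fun a u hu =>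
    ⟨hIU hu.1, by rw [hI u hu.1]; exact hz0⟩
  have hKs : ∀ a, ∀ v ∈ K a, v ∈ U ∧ ψ v ∈ CI := fun a v hv => reach_sub (hKb a) hv
  have hKr : ∀ a, ∀ v ∈ K a, ∃ x ∈ I, Q x = a ∧ v ∈ reach G (U \ Bu) {x} := by
    rintro a v ⟨u, hu, h⟩
    have hsub : {v | v ∈ U ∧ ψ v ∈ CI} ⊆ U \ Bu := fun w hw => ⟨hw.1, fun hb => hB w hb hw.2⟩
    exact ⟨u, hu.1, hu.2, u, rfl, rtg_mono hsub h⟩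
  obtain ⟨ψ1, hψ1, hψ1K, hψ1n⟩ := recolor hψ K (fun _ => CI) (fun a => Equiv.swap z0 (g a))
    (by
      intro a c hc
      rw [Equiv.swap_apply_def]
      split_ifs
      · exact hg a
      · exact hz0
      · exact hc)
    (fun a v hv => (hKs a v hv).2)
    (fun a u hu v hv huv hc => reach_closed (hKb a) hu ⟨hv, hc⟩ huv)
    (fun a a' hne v hv hv' => hsep' K hKr a a' hne v hv v hv' (Or.inl rfl))
    (fun a a' hne => Or.inl fun u hu v hv huv => hsep' K hKr a a' hne u hu v hv (Or.inr huv))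
  have hψ1B : ∀ b ∈ Bu, ψ1 b = ψ b := fun b hb =>
    hψ1n b fun a ha => hB b hb (hKs a b ha).2
  have hψ1I : ∀ u ∈ I, ψ1 u = g (Q u) := by
    intro u hu
    rw [hψ1K (Q u) u (subset_reach _ _ ⟨hu, rfl⟩), hI u hu, Equiv.swap_apply_left]
  -- moving some vertices of `I` to colours of `T`
  let h : Fin m → Fin m := fun a => if hs : ∃ s ∈ T, Q s = a then ψ hs.choose else z0
  have hh : ∀ s ∈ T, h (Q s) = ψ s := by
    intro s hs
    have hex : ∃ s' ∈ T, Q s' = Q s := ⟨s, hs, rfl⟩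
    simp only [h, dif_pos hex]
    exact (hQT _ hex.choose_spec.1 s hs).2 hex.choose_spec.2
  let K' : Fin m → Set V := fun a => {v | (∃ s ∈ T, Q s = a) ∧
    v ∈ reach G {v | v ∈ U ∧ (ψ1 v = g a ∨ ψ1 v = h a)} {u | u ∈ I ∧ Q u = a}}
  have hKb' : ∀ a, {u | u ∈ I ∧ Q u = a} ⊆ {v | v ∈ U ∧ (ψ1 v = g a ∨ ψ1 v = h a)} := by
    rintro a u ⟨hu, rfl⟩
    exact ⟨hIU hu, Or.inl (hψ1I u hu)⟩
  have hKr' : ∀ a, ∀ v ∈ K' a, ∃ x ∈ I, Q x = a ∧ v ∈ reach G (U \ Bu) {x} := by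
    rintro a v ⟨⟨s, hs, rfl⟩, u, ⟨hu, hua⟩, hr⟩
    refine ⟨u, hu, hua, ?_⟩
    induction hr with
    | refl => exact subset_reach _ _ rfl
    | @tail x y _ h2 ih =>
      refine reach_closed (Set.singleton_subset_iff.2 (hIB u hu)) ih ⟨h2.2.2.1, fun hy => ?_⟩ h2.1
      rcases h2.2.2.2 with hc | hc
      · exact hB y hy (by rw [← hψ1B y hy, hc]; exact hg _)
      · rw [hψ1B y hy, hh s hs] at hc
        exact hQB u hu x ih y hy h2.1.symm s hs hc hua
  obtain ⟨χ, hχ, hχK, hχn⟩ := recolor hψ1 K' (fun a => {c | c = g a ∨ c = h a})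
    (fun a => Equiv.swap (g a) (h a))
    (by
      rintro a c (rfl | rfl)
      · exact Or.inr (Equiv.swap_apply_left _ _)
      · exact Or.inl (Equiv.swap_apply_right _ _))
    (fun a v hv => (reach_sub (hKb' a) hv.2).2)
    (fun a u hu v hv huv hc => ⟨hu.1, reach_closed (hKb' a) hu.2 ⟨hv, hc⟩ huv⟩)
    (fun a a' hne v hv hv' => hsep' K' hKr' a a' hne v hv v hv' (Or.inl rfl))
    (fun a a' hne => Or.inl fun u hu v hv huv => hsep' K' hKr' a a' hne u hu v hv (Or.inr huv))
  have hrep : ∀ x ∈ T ∪ I, (∃ s ∈ T, Q s = Q x ∧ χ x = ψ s) ∨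
      (x ∈ I ∧ (∀ s ∈ T, Q s ≠ Q x) ∧ χ x = g (Q x)) := by
    rintro x (hx | hx)
    · refine Or.inl ⟨x, hx, rfl, ?_⟩
      rw [hχn x, hψ1B x (hTB hx)]
      intro a ha
      obtain ⟨y, hy, -, hxy⟩ := hKr' a x ha
      exact (reach_sub (Set.singleton_subset_iff.2 (hIB y hy)) hxy).2 (hTB hx)
    · by_cases hs : ∃ s ∈ T, Q s = Q x
      · obtain ⟨s, hs, hsx⟩ := hs
        refine Or.inl ⟨s, hs, hsx, ?_⟩
        rw [hχK (Q x) x ⟨⟨s, hs, hsx⟩, subset_reach _ _ ⟨hx, rfl⟩⟩, hψ1I x hx,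
          Equiv.swap_apply_left, ← hsx, hh s hs]
      · refine Or.inr ⟨hx, fun s hsT he => hs ⟨s, hsT, he⟩, ?_⟩
        rw [hχn x, hψ1I x hx]
        intro a ha
        obtain ⟨y, hy, hya, hxy⟩ := hKr' a x ha
        refine hs ?_
        rw [hsep x hx y hy x (subset_reach _ _ rfl) x hxy (Or.inl rfl), hya]
        exact ha.1
  refine ⟨χ, hχ, fun x hx y hy => ?_⟩
  rcases hrep x hx with ⟨s, hs, h1, h2⟩ | ⟨hxI, h1, h2⟩ <;>
    rcases hrep y hy with ⟨s', hs', h3, h4⟩ | ⟨hyI, h3, h4⟩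
  · rw [h2, h4, ← h1, ← h3, hQT s hs s' hs']
  · rw [h2, h4]
    exact ⟨fun he => absurd (he ▸ hg _) (hB s (hTB hs)), fun he => absurd (h1.trans he) (h3 s hs)⟩
  · rw [h2, h4]
    exact ⟨fun he => absurd (he ▸ hg _) (hB s' (hTB hs')),
      fun he => absurd (h3.trans he.symm) (h1 s' hs')⟩
  · rw [h2, h4]
    exact ⟨hgi x hxI y hyI, fun he => by rw [he]⟩

/-! ### Separations -/

/-- `S` separates `A` from `B`, and each of the two sides contains a connected set (`A0`, `B0`)
to which every vertex of `S` is attached. -/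
structure Sep (G : SimpleGraph V) (S A B A0 B0 : Set V) : Prop where
  cover : ∀ v, v ∈ A ∨ v ∈ S ∨ v ∈ B
  dAS : ∀ v ∈ A, v ∉ S
  dBS : ∀ v ∈ B, v ∉ S
  dAB : ∀ v ∈ A, v ∉ B
  noEdge : ∀ a ∈ A, ∀ b ∈ B, ¬ G.Adj a b
  subA : A0 ⊆ A
  subB : B0 ⊆ B
  connA : Conn G A0
  connB : Conn G B0
  neA : A0.Nonempty
  neB : B0.Nonempty
  attA : ∀ s ∈ S, ∃ a ∈ A0, G.Adj s a
  attB : ∀ s ∈ S, ∃ b ∈ B0, G.Adj s b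

lemma Sep.symm {S A B A0 B0 : Set V} (h : Sep G S A B A0 B0) : Sep G S B A B0 A0 where
  cover v := by have := h.cover v; tauto
  dAS := h.dBS
  dBS := h.dAS
  dAB v hv hv' := h.dAB v hv' hv
  noEdge a ha b hb hab := h.noEdge b hb a ha hab.symm
  subA := h.subB
  subB := h.subA
  connA := h.connB
  connB := h.connA
  neA := h.neB
  neB := h.neA
  attA := h.attB
  attB := h.attA

/-- Colourings of the two sides that induce the same partition of `S` can be combined. -/
lemma Sep.glue {S A B A0 B0 : Set V} (h : Sep G S A B A0 B0) {φ₁ φ₂ : V → Fin m}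
    (h₁ : ProperOn G (A ∪ S) φ₁) (h₂ : ProperOn G (B ∪ S) φ₂)
    (hk : ∀ s ∈ S, ∀ s' ∈ S, φ₁ s = φ₁ s' ↔ φ₂ s = φ₂ s') : G.Colorable m := by
  classical
  let f : Fin m → Fin m := fun c => if hc : ∃ s ∈ S, φ₁ s = c then φ₂ hc.choose else c
  have hf : ∀ s ∈ S, f (φ₁ s) = φ₂ s := by
    intro s hs
    have hc : ∃ s' ∈ S, φ₁ s' = φ₁ s := ⟨s, hs, rfl⟩
    simp only [f, dif_pos hc]
    exact (hk _ hc.choose_spec.1 s hs).1 hc.choose_spec.2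
  obtain ⟨σ, hσ⟩ := Finset.exists_equiv_extend_of_card_eq (α := Fin m) (β := Fin m)
    (t := Finset.univ) (by simp) (s := Finset.univ.filter fun c => ∃ s ∈ S, φ₁ s = c) (f := f)
    (Finset.subset_univ _)
    (by
      intro c hc c' hc' he
      simp only [Finset.coe_filter, Finset.mem_univ, true_and, Set.mem_ofPred_eq] at hc hc'
      obtain ⟨s, hs, rfl⟩ := hc
      obtain ⟨s', hs', rfl⟩ := hc'
      rw [hf s hs, hf s' hs'] at he
      exact (hk s hs s' hs').2 he)
  have hσS : ∀ s ∈ S, (σ (φ₁ s) : Fin m) = φ₂ s := by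
    intro s hs
    rw [hσ _ (Finset.mem_filter.2 ⟨Finset.mem_univ _, s, hs, rfl⟩), hf s hs]
  have hinj : ∀ c c', (σ c : Fin m) = σ c' → c = c' := fun c c' he =>
    σ.injective (Subtype.ext he)
  let ψ : V → Fin m := fun v => if v ∈ A then σ (φ₁ v) else φ₂ v
  have hψ1 : ∀ v, v ∈ A ∪ S → ψ v = σ (φ₁ v) := by
    rintro v (hv | hv)
    · simp [ψ, hv]
    · have : v ∉ A := fun ha => h.dAS v ha hv
      simp [ψ, this, hσS v hv]
  have hψ2 : ∀ v, v ∉ A → ψ v = φ₂ v := fun v hv => by simp [ψ, hv]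
  have key : ∀ u v, G.Adj u v → u ∈ A → ψ u ≠ ψ v := by
    intro u v huv hu
    have hv : v ∈ A ∪ S := by
      rcases h.cover v with hv | hv | hv
      · exact Or.inl hv
      · exact Or.inr hv
      · exact absurd huv (h.noEdge u hu v hv)
    rw [hψ1 u (Or.inl hu), hψ1 v hv]
    exact fun he => h₁ u (Or.inl hu) v hv huv (hinj _ _ he)
  refine ⟨Coloring.mk ψ fun {u v} huv => ?_⟩
  by_cases hu : u ∈ A
  · exact key u v huv hu
  by_cases hv : v ∈ A
  · exact (key v u huv.symm hv).symm
  rw [hψ2 u hu, hψ2 v hv]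
  refine h₂ u ?_ v ?_ huv
  · have := h.cover u
    rcases this with h' | h' | h'
    · exact absurd h' hu
    · exact Or.inr h'
    · exact Or.inl h'
  · rcases h.cover v with hva | hvb | hvs
    · exact absurd hva hv
    · exact Or.inr hvb
    · exact Or.inl hvs

/-- Contracting an independent set `I ⊆ S` together with the attached connected set of the other
side yields a colouring of one side that is constant on `I`. -/
lemma Sep.mono [Fintype V] {S A B A0 B0 I : Set V} (h : Sep G S A B A0 B0)
    (hG : ∀ (W : Type) (H : SimpleGraph W), IsProperMinor H G → H.Colorable m)
    (hIS : I ⊆ S) (hind : ∀ u ∈ I, ∀ v ∈ I, ¬ G.Adj u v) :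
    ∃ φ : V → Fin m, ProperOn G (A ∪ S) φ ∧ ∀ u ∈ I, ∀ v ∈ I, φ u = φ v := by
  classical
  obtain ⟨a0, ha0⟩ := h.neA
  obtain ⟨b0, hb0⟩ := h.neB
  have hdis : ∀ v ∈ B0, v ∉ A ∪ S := by
    rintro v hv (hv' | hv')
    · exact h.dAB v hv' (h.subB hv)
    · exact h.dBS v (h.subB hv) hv'
  have hdisI : ∀ v ∈ B0 ∪ I, v ∉ A ∪ (S \ I) := by
    rintro v (hv | hv) (hv' | hv')
    · exact hdis v hv (Or.inl hv')
    · exact hdis v hv (Or.inr hv'.1)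
    · exact h.dAS v hv' (hIS hv)
    · exact hv'.2 hv
  obtain ⟨c, hc⟩ := minor_color hG
    {X | (∃ v ∈ A ∪ (S \ I), X = {v}) ∨ (I.Nonempty ∧ X = B0 ∪ I)}
    ⟨{a0}, Or.inl ⟨a0, Or.inl (h.subA ha0), rfl⟩⟩
    (by
      rintro X (⟨v, -, rfl⟩ | ⟨-, rfl⟩)
      · exact ⟨v, rfl⟩
      · exact ⟨b0, Or.inl hb0⟩)
    (by
      rintro X (⟨v, -, rfl⟩ | ⟨-, rfl⟩)
      · rintro _ rfl _ rfl
        exact .refl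
      · have key : ∀ v ∈ B0 ∪ I, ∃ b ∈ B0, ReflTransGen (Rel G (B0 ∪ I)) v b := by
          rintro v (hv | hv)
          · exact ⟨v, hv, .refl⟩
          · obtain ⟨b, hb, hvb⟩ := h.attB v (hIS hv)
            exact ⟨b, hb, .single ⟨hvb, Or.inr hv, Or.inl hb⟩⟩
        intro u hu v hv
        obtain ⟨b, hb, h1⟩ := key u hu
        obtain ⟨b', hb', h2⟩ := key v hv
        exact (h1.trans (rtg_mono Set.subset_union_left (h.connB b hb b' hb'))).trans
          (rtg_symm h2))
    (by
      rintro X (⟨v, hv, rfl⟩ | ⟨-, rfl⟩) Y (⟨v', hv', rfl⟩ | ⟨-, rfl⟩) x hx hx'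
      · rw [← Set.mem_singleton_iff.1 hx, ← Set.mem_singleton_iff.1 hx']
      · rw [Set.mem_singleton_iff.1 hx] at hx'
        exact absurd hv (hdisI v hx')
      · rw [Set.mem_singleton_iff.1 hx'] at hx
        exact absurd hv' (hdisI v' hx)
      · rfl)
    ⟨b0, by
      rintro X (⟨v, hv, rfl⟩ | ⟨⟨u, hu⟩, rfl⟩) hx
      · rw [Set.mem_singleton_iff.1 hx] at hb0
        exact absurd hv (hdisI v (Or.inl hb0))
      · exact ⟨u, Or.inr hu, fun he => hdis b0 hb0 (he ▸ Or.inr (hIS hu))⟩⟩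
  let br : V → Set V := fun v => if v ∈ I then B0 ∪ I else {v}
  have hbr1 : ∀ v ∈ I, br v = B0 ∪ I := fun v hv => by simp [br, hv]
  have hbr2 : ∀ v, v ∉ I → br v = {v} := fun v hv => by simp [br, hv]
  have hmem : ∀ v, v ∈ br v := by
    intro v
    by_cases hv : v ∈ I
    · rw [hbr1 v hv]; exact Or.inr hv
    · rw [hbr2 v hv]; rfl
  have hF : ∀ v ∈ A ∪ S, (∃ x ∈ A ∪ (S \ I), br v = {x}) ∨ (I.Nonempty ∧ br v = B0 ∪ I) := by
    intro v hv
    by_cases hvI : v ∈ I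
    · exact Or.inr ⟨⟨v, hvI⟩, hbr1 v hvI⟩
    · refine Or.inl ⟨v, ?_, hbr2 v hvI⟩
      rcases hv with hv | hv
      · exact Or.inl hv
      · exact Or.inr ⟨hv, hvI⟩
  refine ⟨fun v => c (br v), ?_, fun u hu v hv => by simp only [hbr1 u hu, hbr1 v hv]⟩
  intro u hu v hv huv
  refine hc _ (hF u hu) _ (hF v hv) ?_ ⟨u, hmem u, v, hmem v, huv⟩
  intro he
  by_cases hvI : v ∈ I
  · by_cases huI : u ∈ I
    · exact hind u huI v hvI huv
    · have := hmem v
      rw [← he, hbr2 u huI] at this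
      exact huv.ne this.symm
  · have := hmem u
    rw [he, hbr2 v hvI] at this
    exact huv.ne this

lemma reach_singleton_eq {X : Set V} {u u' : V} (h : ReflTransGen (Rel G X) u u') :
    reach G X {u} = reach G X {u'} := by
  ext v
  constructor
  · rintro ⟨_, rfl, h'⟩
    exact ⟨u', rfl, (rtg_symm h).trans h'⟩
  · rintro ⟨_, rfl, hr⟩
    exact ⟨u, rfl, h.trans hr⟩

/-- Using a `Core` of one side as branch sets, together with the pieces of the rest of this side
around the vertices of `I`, gives a colouring of the other side whose partition of `S` can be
copied. -/
lemma Sep.finish [Fintype V] {S A B A0 B0 : Set V} (h : Sep G S A B A0 B0)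
    (hG : ∀ (W : Type) (H : SimpleGraph W), IsProperMinor H G → H.Colorable m)
    {T I : Finset V} {CI : Finset (Fin m)} (hS : S = (T : Set V) ∪ (I : Set V))
    (hind : ∀ u ∈ I, ∀ v ∈ I, ¬ G.Adj u v) {φ : V → Fin m} (hφ : ProperOn G (A ∪ S) φ)
    {z0 : Fin m} (hI : ∀ u ∈ I, φ u = z0) (hz0 : z0 ∈ CI) (hcard : I.card ≤ CI.card)
    {Bw : Fin m → Set V} (hB : Core G (A ∪ S) (T : Set V) (CI : Set (Fin m)) φ Bw) :
    G.Colorable m := by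
  classical
  have hTS : ∀ s ∈ T, s ∈ S := fun s hs => hS ▸ Or.inl hs
  have hIS : ∀ s ∈ I, s ∈ S := fun s hs => hS ▸ Or.inr hs
  set U := A ∪ S with hU
  have hUB : ∀ v ∈ U, v ∉ B := by
    rintro v (hv | hv) hb
    · exact h.dAB v hv hb
    · exact h.dBS v hb hv
  set Bu : Set V := {b | ∃ s ∈ T, b ∈ Bw (φ s)} with hBu
  have hTB : ∀ s ∈ T, s ∈ Bu := fun s hs => ⟨s, hs, hB.mem s hs⟩
  have hBCI : ∀ b ∈ Bu, φ b ∉ CI := fun b ⟨s, hs, hb⟩ => hB.avoid s hs b hb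
  have hIB : ∀ u ∈ I, u ∈ U \ Bu := fun u hu =>
    ⟨Or.inr (hIS u hu), fun hb => hBCI u hb (by rw [hI u hu]; exact hz0)⟩
  have hrs : ∀ u ∈ I, reach G (U \ Bu) {u} ⊆ U \ Bu := fun u hu =>
    reach_sub (Set.singleton_subset_iff.2 (hIB u hu))
  have hru : ∀ u, u ∈ reach G (U \ Bu) {u} := fun u => subset_reach _ _ rfl
  obtain ⟨a0, ha0⟩ := h.neA
  obtain ⟨b0, hb0⟩ := h.neB
  have ha0S : a0 ∉ S := h.dAS a0 (h.subA ha0)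
  obtain ⟨c, hc⟩ := minor_color hG
    {X | (∃ s ∈ T, X = Bw (φ s)) ∨ (∃ u ∈ I, X = reach G (U \ Bu) {u}) ∨ ∃ v ∈ B, X = {v}}
    ⟨{b0}, Or.inr (Or.inr ⟨b0, h.subB hb0, rfl⟩)⟩
    (by
      rintro X (⟨s, hs, rfl⟩ | ⟨u, hu, rfl⟩ | ⟨v, hv, rfl⟩)
      · exact ⟨s, hB.mem s hs⟩
      · exact ⟨u, hru u⟩
      · exact ⟨v, rfl⟩)
    (by
      rintro X (⟨s, hs, rfl⟩ | ⟨u, hu, rfl⟩ | ⟨v, hv, rfl⟩)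
      · exact hB.conn s hs
      · refine conn_reach ?_
        rintro _ rfl _ rfl
        exact .refl
      · rintro _ rfl _ rfl
        exact .refl)
    (by
      rintro X (⟨s, hs, rfl⟩ | ⟨u, hu, rfl⟩ | ⟨v, hv, rfl⟩) Y
        (⟨s', hs', rfl⟩ | ⟨u', hu', rfl⟩ | ⟨v', hv', rfl⟩) x hx hx'
      · by_contra hne
        exact hB.disj s hs s' hs' (fun he => hne (by rw [he])) x hx hx'
      · exact absurd ⟨s, hs, hx⟩ (hrs u' hu' hx').2
      · rw [Set.mem_singleton_iff.1 hx'] at hx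
        exact absurd hv' (hUB v' (hB.sub s hs hx))
      · exact absurd ⟨s', hs', hx'⟩ (hrs u hu hx).2
      · obtain ⟨_, rfl, h1⟩ := hx
        obtain ⟨_, rfl, h2⟩ := hx'
        exact reach_singleton_eq (h1.trans (rtg_symm h2))
      · rw [Set.mem_singleton_iff.1 hx'] at hx
        exact absurd hv' (hUB v' (hrs u hu hx).1)
      · rw [Set.mem_singleton_iff.1 hx] at hx'
        exact absurd hv (hUB v (hB.sub s' hs' hx'))
      · rw [Set.mem_singleton_iff.1 hx] at hx'
        exact absurd hv (hUB v (hrs u' hu' hx').1)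
      · rw [← Set.mem_singleton_iff.1 hx, ← Set.mem_singleton_iff.1 hx'])
    ⟨a0, by
      rintro X (⟨s, hs, rfl⟩ | ⟨u, hu, rfl⟩ | ⟨v, hv, rfl⟩) hx
      · exact ⟨s, hB.mem s hs, fun he => ha0S (he ▸ hTS s hs)⟩
      · exact ⟨u, hru u, fun he => ha0S (he ▸ hIS u hu)⟩
      · rw [Set.mem_singleton_iff.1 hx] at ha0
        exact absurd hv (h.dAB v (h.subA ha0))⟩
  let br : V → Set V := fun v =>
    if v ∈ T then Bw (φ v) else if v ∈ I then reach G (U \ Bu) {v} else {v}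
  have hTI : ∀ u ∈ I, u ∉ T := fun u hu hT => (hIB u hu).2 (hTB u hT)
  have hbrT : ∀ v ∈ T, br v = Bw (φ v) := fun v hv => by simp [br, hv]
  have hbrI : ∀ v ∈ I, br v = reach G (U \ Bu) {v} := fun v hv => by simp [br, hTI v hv, hv]
  have hbrB : ∀ v ∈ B, br v = {v} := by
    intro v hv
    have h1 : v ∉ T := fun hT => h.dBS v hv (hTS v hT)
    have h2 : v ∉ I := fun hT => h.dBS v hv (hIS v hT)
    simp [br, h1, h2]
  have hcase : ∀ v ∈ B ∪ S, v ∈ B ∨ v ∈ T ∨ v ∈ I := by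
    rintro v (hv | hv)
    · exact Or.inl hv
    · rw [hS] at hv
      exact Or.inr hv
  have hmem : ∀ v ∈ B ∪ S, v ∈ br v := by
    intro v hv
    rcases hcase v hv with hv | hv | hv
    · rw [hbrB v hv]; rfl
    · rw [hbrT v hv]; exact hB.mem v hv
    · rw [hbrI v hv]; exact hru v
  have hF : ∀ v ∈ B ∪ S, (∃ s ∈ T, br v = Bw (φ s)) ∨
      (∃ u ∈ I, br v = reach G (U \ Bu) {u}) ∨ ∃ x ∈ B, br v = {x} := by
    intro v hv
    rcases hcase v hv with hv | hv | hv
    · exact Or.inr (Or.inr ⟨v, hv, hbrB v hv⟩)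
    · exact Or.inl ⟨v, hv, hbrT v hv⟩
    · exact Or.inr (Or.inl ⟨v, hv, hbrI v hv⟩)
  let Q : V → Fin m := fun v => c (br v)
  have hQ : ProperOn G (B ∪ S) Q := by
    intro u hu v hv huv
    refine hc _ (hF u hu) _ (hF v hv) ?_ ⟨u, hmem u hu, v, hmem v hv, huv⟩
    intro he
    have hu1 : u ∈ br v := he ▸ hmem u hu
    have hv1 : v ∈ br u := he ▸ hmem v hv
    rcases hcase u hu with hu2 | hu2 | hu2
    · rw [hbrB u hu2] at hv1
      exact huv.ne hv1.symm
    · rcases hcase v hv with hv2 | hv2 | hv2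
      · rw [hbrB v hv2] at hu1
        exact huv.ne hu1
      · rw [hbrT v hv2] at hu1
        by_cases hc : φ u = φ v
        · exact hφ u (Or.inr (hTS u hu2)) v (Or.inr (hTS v hv2)) huv hc
        · exact hB.disj u hu2 v hv2 hc u (hB.mem u hu2) hu1
      · rw [hbrI v hv2] at hu1
        exact (hrs v hv2 hu1).2 (hTB u hu2)
    · rcases hcase v hv with hv2 | hv2 | hv2
      · rw [hbrB v hv2] at hu1
        exact huv.ne hu1
      · rw [hbrI u hu2] at hv1
        exact (hrs u hu2 hv1).2 (hTB v hv2)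
      · exact hind u hu2 v hv2 huv
  obtain ⟨ψ, p1, p2, p3, p4, p5⟩ := hB.real (fun w => c (Bw w)) (by
    intro s hs s' hs' hne ht
    refine hc _ (Or.inl ⟨s, hs, rfl⟩) _ (Or.inl ⟨s', hs', rfl⟩) ?_ ht
    intro he
    exact hB.disj s hs s' hs' hne s (hB.mem s hs) (he ▸ hB.mem s hs))
  have hcI : (I.image Q).card ≤ CI.card := Finset.card_image_le.trans hcard
  have : Inhabited (Fin m) := ⟨z0⟩
  obtain ⟨g, hgC, hgi⟩ := exists_inj (I.image Q) CI hcI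
  obtain ⟨χ, hχ, hker⟩ := attain (T := (T : Set V)) (I := (I : Set V)) (Bu := Bu)
    (CI := (CI : Set (Fin m))) (Q := Q) (z0 := z0) p1
    (fun u hu => Or.inr (hIS u hu))
    (fun u hu => by
      rw [p2 u (by rw [hI u hu]; exact hz0), hI u hu])
    hz0 hTB (fun b hb hbc => hBCI b hb (p3 b hbc))
    (fun s hs s' hs' => by
      rw [p4 s hs s' hs']
      simp only [Q, hbrT s hs, hbrT s' hs'])
    (fun u hu u' hu' hr => by
      simp only [Q, hbrI u hu, hbrI u' hu', reach_singleton_eq hr])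
    (by
      rintro u hu v hv b ⟨s1, hs1, hb⟩ hbv s hs he
      have h1 := p5 s1 hs1 s hs b hb he
      simp only [Q, hbrI u hu, hbrT s hs, ← h1]
      refine (hc _ (Or.inl ⟨s1, hs1, rfl⟩) _ (Or.inr (Or.inl ⟨u, hu, rfl⟩)) ?_
        ⟨b, hb, v, hv, hbv⟩).symm
      intro he'
      exact (hrs u hu (he' ▸ hb)).2 ⟨s1, hs1, hb⟩)
    (fun a => if a ∈ I.image Q then g a else z0)
    (by
      intro a
      by_cases ha : a ∈ I.image Q
      · simp only [ha, if_true]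
        exact hgC a ha
      · simp only [ha, if_false]
        exact hz0)
    (by
      intro u hu u' hu' he
      have h1 := Finset.mem_image_of_mem Q hu
      have h2 := Finset.mem_image_of_mem Q hu'
      simp only [h1, h2, if_true] at he
      exact hgi _ h1 _ h2 he)
  refine h.glue hχ hQ fun s hs s' hs' => hker s ?_ s' ?_
  · rwa [← hS]
  · rwa [← hS]

/-- If one side has no colouring that is constant on `I` and injective on `T`, then `G` is
colourable: a colouring constant on `I` with as many colours on `T` as possible admits no splitting
Kempe change, hence has a `Core`. -/
lemma Sep.side [Fintype V] {S A B A0 B0 : Set V} (h : Sep G S A B A0 B0)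
    (hG : ∀ (W : Type) (H : SimpleGraph W), IsProperMinor H G → H.Colorable m)
    {T I : Finset V} (hS : S = (T : Set V) ∪ (I : Set V))
    (hind : ∀ u ∈ I, ∀ v ∈ I, ¬ G.Adj u v) (hTI : ∀ x ∈ T, ∃ u ∈ I, G.Adj x u)
    {t : ℕ} (ht : 3 ≤ t) (hTt : T.card ≤ t) (hm : I.card + T.card + 2 ^ (t - 1) ≤ m + t + 1)
    (hno : ¬ ∃ φ : V → Fin m, ProperOn G (A ∪ S) φ ∧ (∀ u ∈ I, ∀ v ∈ I, φ u = φ v) ∧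
      Set.InjOn φ T) :
    G.Colorable m := by
  classical
  have hTS : ∀ s ∈ T, s ∈ S := fun s hs => hS ▸ Or.inl hs
  have hIS : ∀ s ∈ I, s ∈ S := fun s hs => hS ▸ Or.inr hs
  obtain ⟨φ0, hφ0⟩ := h.mono (I := (I : Set V)) hG hIS hind
  have : Nonempty {φ : V → Fin m // ProperOn G (A ∪ S) φ ∧ ∀ u ∈ I, ∀ v ∈ I, φ u = φ v} :=
    ⟨⟨φ0, hφ0⟩⟩
  obtain ⟨⟨φ, hφ, hφI⟩, hmax⟩ := Finite.exists_max
    fun φ : {φ : V → Fin m // ProperOn G (A ∪ S) φ ∧ ∀ u ∈ I, ∀ v ∈ I, φ u = φ v} =>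
      (T.image φ.1).card
  have hq : (T.image φ).card < T.card := by
    refine lt_of_le_of_ne Finset.card_image_le fun he => ?_
    exact hno ⟨φ, hφ, hφI, Finset.card_image_iff.1 he⟩
  obtain ⟨x0, hx0⟩ := Finset.card_pos.1 (by omega : 0 < T.card)
  obtain ⟨u0, hu0, -⟩ := hTI x0 hx0
  have hIc : 0 < I.card := Finset.card_pos.2 ⟨u0, hu0⟩
  have hz0 : ∀ s ∈ T, φ s ≠ φ u0 := by
    intro s hs
    obtain ⟨u, hu, hsu⟩ := hTI s hs
    rw [hφI u0 hu0 u hu]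
    exact hφ s (Or.inr (hTS s hs)) u (Or.inr (hIS u hu)) hsu
  have hpow := succ_le_two_pow ht
  have hRc : ((T.image φ)ᶜ).card = m - (T.image φ).card := by
    rw [Finset.card_compl, Fintype.card_fin]
  obtain ⟨CI, hCI1, hCI2, hCI3⟩ := Finset.exists_subsuperset_card_eq (s := {φ u0})
    (t := (T.image φ)ᶜ) (n := I.card)
    (by
      rw [Finset.singleton_subset_iff, Finset.mem_compl, Finset.mem_image]
      rintro ⟨s, hs, he⟩
      exact hz0 s hs he)
    (by rw [Finset.card_singleton]; exact hIc) (by omega)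
  have hu0C : φ u0 ∈ CI := hCI1 (Finset.mem_singleton_self _)
  have hRCI : ∀ s ∈ T, φ s ∉ CI := fun s hs hc =>
    Finset.mem_compl.1 (hCI2 hc) (Finset.mem_image_of_mem _ hs)
  obtain ⟨Bw, hB⟩ := exists_core (U := A ∪ S) (T := T) (CI := CI) hφ
    (fun s hs => Or.inr (hTS s hs)) hRCI ht hTt hq (by omega) (by
      intro s hs s' hs' hss j hjC hjR
      by_contra hnr
      set X : Set V := {v | v ∈ A ∪ S ∧ (φ v = φ s ∨ φ v = j)} with hX
      have hsX : ({s} : Set V) ⊆ X :=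
        Set.singleton_subset_iff.2 ⟨Or.inr (hTS s hs), Or.inl rfl⟩
      have hs'K : s' ∉ reach G X {s} := by
        rintro ⟨_, rfl, hr⟩
        exact hnr hr
      obtain ⟨ψ, hψ, hψK, hψn⟩ := recolor hφ (fun _ : Unit => reach G X {s})
        (fun _ => {c | c = φ s ∨ c = j}) (fun _ => Equiv.swap (φ s) j)
        (by
          rintro - c (rfl | rfl)
          · exact Or.inr (Equiv.swap_apply_left _ _)
          · exact Or.inl (Equiv.swap_apply_right _ _))
        (fun _ v hv => (reach_sub hsX hv).2)
        (fun _ u hu v hv huv hc => reach_closed hsX hu ⟨hv, hc⟩ huv)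
        (fun _ _ hne => absurd rfl hne) (fun _ _ hne => absurd rfl hne)
      have hψo : ∀ v, φ v ≠ φ s → φ v ≠ j → ψ v = φ v := by
        intro v h1 h2
        refine hψn v fun _ hv => ?_
        rcases (reach_sub hsX hv).2 with h' | h'
        · exact h1 h'
        · exact h2 h'
      have hψI : ∀ u ∈ I, ψ u = φ u := by
        intro u hu
        have he := hφI u hu u0 hu0
        refine hψo u ?_ ?_
        · rw [he]; exact (hz0 s hs).symm
        · rw [he]; exact fun hj => hjC (hj ▸ hu0C)
      have h1 := hmax ⟨ψ, hψ, fun u hu v hv => by rw [hψI u hu, hψI v hv, hφI u hu v hv]⟩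
      have h2 : insert j (T.image φ) ⊆ T.image ψ := by
        intro w hw
        rw [Finset.mem_insert, Finset.mem_image] at hw
        rw [Finset.mem_image]
        rcases hw with rfl | ⟨x, hx, rfl⟩
        · exact ⟨s, hs, by rw [hψK () s (subset_reach _ _ rfl), Equiv.swap_apply_left]⟩
        · by_cases hxs : φ x = φ s
          · exact ⟨s', hs', by rw [hψn s' fun _ => hs'K, hxs, hss]⟩
          · exact ⟨x, hx, hψo x hxs (hjR x hx)⟩
      have h3 : j ∉ T.image φ := by
        rw [Finset.mem_image]
        rintro ⟨x, hx, he⟩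
        exact hjR x hx he
      have h4 := Finset.card_le_card h2
      rw [Finset.card_insert_of_notMem h3] at h4
      dsimp only at h1
      omega)
  exact h.finish hG hS hind hφ (fun u hu => hφI u hu u0 hu0) hu0C hCI3.ge hB

/-- A separation as in the theorem forces `G` to be colourable with one colour less. -/
lemma Sep.colorable [Fintype V] {S A B A0 B0 : Set V} (h : Sep G S A B A0 B0)
    (hG : ∀ (W : Type) (H : SimpleGraph W), IsProperMinor H G → H.Colorable m)
    {T I : Finset V} (hS : S = (T : Set V) ∪ (I : Set V))
    (hind : ∀ u ∈ I, ∀ v ∈ I, ¬ G.Adj u v) (hTI : ∀ x ∈ T, ∃ u ∈ I, G.Adj x u)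
    {t : ℕ} (ht : 3 ≤ t) (hTt : T.card ≤ t) (hm : I.card + T.card + 2 ^ (t - 1) ≤ m + t + 1) :
    G.Colorable m := by
  by_cases hA : ∃ φ : V → Fin m, ProperOn G (A ∪ S) φ ∧ (∀ u ∈ I, ∀ v ∈ I, φ u = φ v) ∧
      Set.InjOn φ T
  · by_cases hB : ∃ φ : V → Fin m, ProperOn G (B ∪ S) φ ∧ (∀ u ∈ I, ∀ v ∈ I, φ u = φ v) ∧
        Set.InjOn φ T
    · obtain ⟨φ, hφ, hφI, hφT⟩ := hA
      obtain ⟨ψ, hψ, hψI, hψT⟩ := hB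
      have hne : ∀ (C : Set V) (χ : V → Fin m), ProperOn G (C ∪ S) χ →
          (∀ u ∈ I, ∀ v ∈ I, χ u = χ v) → ∀ x ∈ T, ∀ u ∈ I, χ x ≠ χ u := by
        intro C χ hχ hχI x hx u hu
        obtain ⟨v, hv, hxv⟩ := hTI x hx
        rw [hχI u hu v hv]
        exact hχ x (Or.inr (hS ▸ Or.inl hx)) v (Or.inr (hS ▸ Or.inr hv)) hxv
      refine h.glue hφ hψ fun s hs s' hs' => ?_
      rw [hS] at hs hs'
      rcases hs with hs | hs <;> rcases hs' with hs' | hs'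
      · exact ⟨fun he => by rw [hφT hs hs' he], fun he => by rw [hψT hs hs' he]⟩
      · exact ⟨fun he => absurd he (hne A φ hφ hφI s hs s' hs'),
          fun he => absurd he (hne B ψ hψ hψI s hs s' hs')⟩
      · exact ⟨fun he => absurd he.symm (hne A φ hφ hφI s' hs' s hs),
          fun he => absurd he.symm (hne B ψ hψ hψI s' hs' s hs)⟩
      · exact ⟨fun _ => hψI s hs s' hs', fun _ => hφI s hs s' hs'⟩
    · exact h.symm.side hG hS hind hTI ht hTt hm hB
  · exact h.side hG hS hind hTI ht hTt hm hA

/-! ### From disconnectedness to a separation -/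

/-- If adding `s` to `X` joins `a` to `b`, then `s` is attached to the component of `a` in `X`. -/
lemma exists_attach {X : Set V} {s a b : V} (ha : a ∈ X)
    (h : ReflTransGen (Rel G (insert s X)) a b) (hn : ¬ ReflTransGen (Rel G X) a b) :
    ∃ y ∈ reach G X {a}, G.Adj s y := by
  by_contra hno
  have key : b ∈ reach G X {a} := by
    clear hn
    induction h with
    | refl => exact subset_reach _ _ rfl
    | @tail x y _ h2 ih =>
      rcases h2.2.2 with rfl | hy
      · exact absurd ⟨x, ih, h2.1.symm⟩ hno
      · exact reach_closed (Set.singleton_subset_iff.2 ha) ih hy h2.1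
  obtain ⟨_, rfl, hr⟩ := key
  exact hn hr

/-- A minimal separating set gives a `Sep`. -/
lemma exists_sep [DecidableEq V] {S : Finset V} (hS : ¬ Conn G {v | v ∉ S})
    (hmin : ∀ s ∈ S, Conn G {v | v ∉ S.erase s}) :
    ∃ A B A0 B0 : Set V, Sep G (S : Set V) A B A0 B0 := by
  classical
  simp only [Conn, not_forall] at hS
  obtain ⟨a, ha, b, hb, hab⟩ := hS
  set X : Set V := {v | v ∉ S} with hX
  have hA := reach_sub (G := G) (Set.singleton_subset_iff.2 ha)
  have hB := reach_sub (G := G) (Set.singleton_subset_iff.2 hb)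
  have hins : ∀ s ∈ S, {v | v ∉ S.erase s} = insert s X := by
    intro s hs
    ext v
    simp only [hX, Finset.mem_erase, Set.mem_ofPred_eq, Set.mem_insert_iff]
    tauto
  have hdis : ∀ v ∈ reach G X {a}, v ∉ reach G X {b} := by
    rintro v ⟨_, rfl, h1⟩ ⟨_, rfl, h2⟩
    exact hab (h1.trans (rtg_symm h2))
  have hsing : ∀ x : V, Conn G (reach G X {x}) := by
    intro x
    refine conn_reach ?_
    rintro _ rfl _ rfl
    exact .refl
  refine ⟨reach G X {a}, {v | v ∈ X ∧ v ∉ reach G X {a}}, reach G X {a}, reach G X {b},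
    ⟨?_, ?_, ?_, ?_, ?_, subset_rfl, ?_, hsing a, hsing b, ⟨a, subset_reach _ _ rfl⟩,
      ⟨b, subset_reach _ _ rfl⟩, ?_, ?_⟩⟩
  · intro v
    by_cases h1 : v ∈ S
    · exact Or.inr (Or.inl h1)
    · by_cases h2 : v ∈ reach G X {a}
      · exact Or.inl h2
      · exact Or.inr (Or.inr ⟨h1, h2⟩)
  · exact fun v hv => hA hv
  · exact fun v hv => hv.1
  · exact fun v hv hv' => hv'.2 hv
  · exact fun x hx y hy hxy => hy.2 (reach_closed (Set.singleton_subset_iff.2 ha) hx hy.1 hxy)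
  · exact fun v hv => ⟨hB hv, fun hv' => hdis v hv' hv⟩
  · intro s hs
    have h := hmin s hs
    rw [hins s hs] at h
    exact exists_attach ha (h a (Or.inr ha) b (Or.inr hb)) hab
  · intro s hs
    have h := hmin s hs
    rw [hins s hs] at h
    exact exists_attach hb (h b (Or.inr hb) a (Or.inr ha)) fun h' => hab (rtg_symm h')

end CritSep

theorem stmt5 {V : Type} [Fintype V] (k s t : ℕ) (hk : 1 ≤ k) (ht : 3 ≤ t)
    (hks : s + 2 ^ (t - 1) - t ≤ k) (G : SimpleGraph V)
    (hG : ContractionCritical k G) (S : Finset V) (hS : S.card ≤ s)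
    (hα : S.card - t ≤ alphaOn G ↑S) :
    (G.induce {v : V | v ∉ S}).Connected := by
  classical
  obtain ⟨m, rfl⟩ : ∃ m, k = m + 1 := ⟨k - 1, by omega⟩
  obtain ⟨hχ, hmin⟩ := hG
  rw [Nat.add_sub_cancel] at hmin
  have hnc : ¬ G.Colorable m := by
    intro hc
    have h1 := SimpleGraph.chromaticNumber_le_iff_colorable.2 hc
    rw [hχ] at h1
    have : m + 1 ≤ m := by exact_mod_cast h1
    omega
  have hpow := CritSep.succ_le_two_pow ht
  refine CritSep.Conn.connected ?_ ?_
  swap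
  · -- otherwise `G` has at most `s ≤ k - 1` vertices
    by_contra hne
    have hall : ∀ v, v ∈ S := fun v => by
      by_contra hv
      exact hne ⟨v, hv⟩
    have hcard : Fintype.card V ≤ m := by
      rw [← Finset.card_univ, ← Finset.eq_univ_iff_forall.2 hall]
      omega
    exact hnc (G.colorable_of_fintype.mono hcard)
  by_contra hdisc
  -- the independent set promised by `hα`
  obtain ⟨I₀, hI₀S, hI₀c, hI₀⟩ : alphaOn G ↑S ∈ {n | ∃ t : Finset V, ↑t ⊆ (S : Set V) ∧
      t.card = n ∧ ∀ a ∈ t, ∀ b ∈ t, a ≠ b → ¬ G.Adj a b} := by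
    refine Nat.sSup_mem ⟨0, ∅, by simp⟩ ⟨Fintype.card V, ?_⟩
    rintro n ⟨t, -, rfl, -⟩
    exact Finset.card_le_univ t
  rw [Finset.coe_subset] at hI₀S
  -- a minimal separating subset `S'` of `S`
  obtain ⟨S', hS'S, hS'⟩ := Set.Finite.exists_le_minimal
    (s := {S' : Finset V | ¬ CritSep.Conn G {v | v ∉ S'}}) (Set.toFinite _) hdisc
  have hconn : ∀ x ∈ S', CritSep.Conn G {v | v ∉ S'.erase x} := by
    intro x hx
    by_contra hc
    exact Finset.notMem_erase x S' (hS'.2 hc (Finset.erase_subset x S') hx)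
  obtain ⟨A, B, A0, B0, hsep⟩ := CritSep.exists_sep hS'.1 hconn
  -- a maximal independent subset `I` of `S'`
  obtain ⟨I, hI₀I, hI⟩ := Set.Finite.exists_le_maximal
    (s := {I : Finset V | I ⊆ S' ∧ ∀ a ∈ I, ∀ b ∈ I, ¬ G.Adj a b}) (Set.toFinite _)
    (a := I₀ ∩ S') ⟨Finset.inter_subset_right, fun a ha b hb hab =>
      hI₀ a (Finset.mem_inter.1 ha).1 b (Finset.mem_inter.1 hb).1 hab.ne hab⟩
  have hcard := Finset.card_sdiff_add_card_eq_card hI.1.1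
  have hS'c := Finset.card_le_card hS'S
  have hTt : (S' \ I).card ≤ t := by
    have h1 : S' \ I ⊆ S \ I₀ := by
      intro x hx
      rw [Finset.mem_sdiff] at hx ⊢
      exact ⟨hS'S hx.1, fun h => hx.2 (hI₀I (Finset.mem_inter.2 ⟨h, hx.1⟩))⟩
    have h2 := Finset.card_le_card h1
    have h3 := Finset.card_sdiff_add_card_eq_card hI₀S
    omega
  refine hnc (hsep.colorable hmin (T := S' \ I) (I := I) ?_ hI.1.2 ?_ ht hTt (by omega))
  · rw [← Finset.coe_union, Finset.sdiff_union_of_subset hI.1.1]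
  · intro x hx
    rw [Finset.mem_sdiff] at hx
    by_contra hno
    push Not at hno
    refine hx.2 (hI.2 (y := insert x I) ⟨?_, ?_⟩ (Finset.subset_insert x I)
      (Finset.mem_insert_self x I))
    · exact Finset.insert_subset hx.1 hI.1.1
    · intro a ha b hb hab
      rcases Finset.mem_insert.1 ha with rfl | ha' <;> rcases Finset.mem_insert.1 hb with rfl | hb'
      · exact hab.ne rfl
      · exact hno b hb' hab
      · exact hno a ha' hab.symm
      · exact hI.1.2 a ha' b hb' hab
end

section
/- Let G be a (k+1)-contraction-critical graph. If S ⊆ V(G) with |S| ≤ k and α(G[S]) ≥ |S| − 3, then G − S is connected. -/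
/-!
Suppose that `G - S` is disconnected, with `S` minimal among the separators of at most `k` vertices
that contain an independent set `T` with `|S| ≤ |T| + 3`; deleting a vertex from both `S` and `T`
keeps this inequality, so the minimality can be used in the form of an induction on `|S|`. Write
`V = A ∪ B ∪ S`, with no edge between `A` and `B`, and `R = S \ T`, so `|R| ≤ 3`. By minimality
each vertex of `S` has a neighbour in each component of `G - S`. Hence `B ∪ T` induces a connected
subgraph, and contracting it gives a proper minor whose `k`-colouring is a colouring of
`G[A ∪ S]` in which `T` has one colour, not used on `R` (`side_coloring`).

If both sides had such colourings with `R` rainbow, they would induce the same partition of `S` and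
could be merged after a permutation of the colours (`glue`). So on one side, say that of `A`, no
Kempe change makes `R` rainbow. In that case there are disjoint connected pieces in `G[A ∪ S]`
meeting `S` such that every colouring of `S` which is constant on pieces and separates adjacent
pieces extends to `G[A ∪ S]` (the property `Good`). Contracting these pieces together with the
deletion of the rest of `A` gives a proper minor, and its `k`-colouring extends to all of `G`
(`not_good`): a contradiction.

The extension property rests on two observations. First, when `T` is monochromatic and at most as
large as the palette `Q`, pieces with the extension property for `Q`-valued colourings exist
(`star`): contract the Kempe components of the colour of `T` and another colour `c`, treat the
remaining parts of `T` except one by induction with the palette `Q \ {c}`, and use `c` for the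
exceptional part. Second, this can be done while a set `D` of vertices keeps its colours (`key`).
The set `D` contains the Kempe component that prevents `R` from being made rainbow; that component
is a connected piece joining vertices of `R` of equal colour. The palette loses one colour to each
colour class of `R` and one more to the colour `f` of the Kempe exchange. With one class on at
least two vertices, or two classes on three vertices, at least `|T|` colours are left
(`split_mono`, `split_pair`).
-/

open SimpleGraph

section
open Classical

/-! ### Colourings of contracted graphs -/

/-- `φ` is a proper colouring of `H`, with an arbitrary type of colours. -/
def Proper {V C : Type} (H : SimpleGraph V) (φ : V → C) : Prop :=
  ∀ u v, H.Adj u v → φ u ≠ φ v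

/-- The spanning subgraph of `H` whose edges are those of `H` with both ends in `P`. -/
def restr {V : Type} (H : SimpleGraph V) (P : Set V) : SimpleGraph V where
  Adj u v := H.Adj u v ∧ u ∈ P ∧ v ∈ P
  symm := ⟨fun _ _ h => ⟨h.1.symm, h.2.2, h.2.1⟩⟩
  loopless := ⟨fun _ h => H.loopless.irrefl _ h.1⟩

theorem restr_le {V : Type} (H : SimpleGraph V) (P : Set V) : restr H P ≤ H :=
  fun _ _ h => h.1

/-- The quotient of `H` obtained by contracting the fibres of `π`, after deletion of `D`. -/
def quo {V W : Type} (H : SimpleGraph V) (D : Set V) (π : V → W) : SimpleGraph W where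
  Adj w w' := w ≠ w' ∧ ∃ u v, u ∉ D ∧ v ∉ D ∧ H.Adj u v ∧ π u = w ∧ π v = w'
  symm := ⟨by
    rintro w w' ⟨h, u, v, hu, hv, a, b, c⟩
    exact ⟨h.symm, v, u, hv, hu, a.symm, c, b⟩⟩
  loopless := ⟨fun _ h => h.1 rfl⟩

theorem reach_closed {V : Type} {F : SimpleGraph V} {P : V → Prop}
    (h : ∀ u v, F.Adj u v → P u → P v) {u v : V} (r : F.Reachable u v) (hu : P u) : P v := by
  obtain ⟨p⟩ := r
  induction p with
  | nil => exact hu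
  | cons a _ ih => exact ih (h _ _ a hu)

theorem restr_reach {V : Type} {H : SimpleGraph V} {P : Set V} {u v : V}
    (r : (restr H P).Reachable u v) : u = v ∨ (u ∈ P ∧ v ∈ P) := by
  refine reach_closed (P := fun w => u = w ∨ (u ∈ P ∧ w ∈ P)) ?_ r (Or.inl rfl)
  rintro a b ⟨_, ha, hb⟩ (rfl | h)
  · exact Or.inr ⟨ha, hb⟩
  · exact Or.inr ⟨h.1, hb⟩

/-- Lifting a colouring `ψ'` of a contraction. The vertices of `D` keep their colour, a vertex
outside `D ∪ J` takes the colour of its image, and on a contracted part of `J` the colour class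
`one` becomes `ψ'`, after an exchange of `one` with a colour `s`. -/
theorem lift_proper {V W C : Type} {H : SimpleGraph V} {D J : Set V} {π : V → W}
    {φ : V → C} {Q Λ : Finset C} {one : C}
    (hφ : Proper H φ) (hQΛ : ∀ c ∈ Λ, c ∉ Q)
    (hJ : ∀ v ∈ J, φ v = one ∨ φ v ∈ Λ) (hD : ∀ d ∈ D, φ d ∉ Q)
    (ha : ∀ u ∈ J, ∀ v ∈ J, H.Adj u v → π u = π v)
    (hb : ∀ u v, π u = π v → u = v ∨ (u ∈ J ∧ v ∈ J))
    {ψ' : W → C} (hψ : Proper (quo H D π) ψ') (hψQ : ∀ w, ψ' w ∈ Q)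
    {s : W → C} (hs : ∀ w, s w = one ∨ s w ∈ Λ)
    (hsD : ∀ v ∈ J, ∀ d ∈ D, H.Adj v d → φ v = one → s (π v) ≠ φ d) :
    Proper H (fun v => if v ∈ D then φ v else if v ∈ J then
      (if φ v = s (π v) then ψ' (π v) else if φ v = one then s (π v) else φ v) else ψ' (π v)) := by
  have key : ∀ u v, u ∉ D → v ∉ D → H.Adj u v → π u ≠ π v → ψ' (π u) ≠ ψ' (π v) :=
    fun u v hu hv a n => hψ _ _ ⟨n, u, v, hu, hv, a, rfl, rfl⟩
  -- an edge from `D` to the outside; both orientations of an edge reduce to this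
  have dv : ∀ u v, u ∈ D → v ∉ D → H.Adj u v → φ u ≠ if v ∈ J then
      (if φ v = s (π v) then ψ' (π v) else if φ v = one then s (π v) else φ v) else ψ' (π v) := by
    intro u v hu hv a
    have := hψQ (π v)
    have := hD u hu
    have := hφ _ _ a
    have := fun hj => hsD v hj u hu a.symm
    split_ifs <;> grind
  intro u v a
  have huv := hφ _ _ a
  have hne : u ≠ v := a.ne
  by_cases hu : u ∈ D <;> by_cases hv : v ∈ D
  · simpa [hu, hv] using huv
  · simpa [hu, hv] using dv u v hu hv a
  · simpa [hu, hv] using (dv v u hv hu a.symm).symm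
  · simp only [hu, hv, if_false]
    have k := key u v hu hv a
    have hsu := hs (π u)
    have hsv := hs (π v)
    have hu1 := hψQ (π u)
    have hv1 := hψQ (π v)
    by_cases ju : u ∈ J <;> by_cases jv : v ∈ J
    · have e := ha u ju v jv a
      simp only [ju, jv, if_true, e]
      have := hJ u ju
      have := hJ v jv
      rw [e] at hsu
      split_ifs <;> grind
    · have n : π u ≠ π v := fun e => by rcases hb u v e with h | h <;> grind
      have := hJ u ju
      simp only [ju, jv, if_true, if_false]
      split_ifs <;> grind
    · have n : π u ≠ π v := fun e => by rcases hb u v e with h | h <;> grind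
      have := hJ v jv
      simp only [ju, jv, if_true, if_false]
      split_ifs <;> grind
    · have n : π u ≠ π v := fun e => by rcases hb u v e with h | h <;> grind
      simpa [ju, jv] using k n

/-- If the vertices outside `D ∪ J` have colours in `Q` other than `one`, then deleting `D`,
contracting the components of `J` and giving them the colour `one` yields a proper colouring. -/
theorem quo_color {V C : Type} {H : SimpleGraph V} {D J : Set V}
    {φ : V → C} {Q : Finset C} {one : C}
    (hφ : Proper H φ) (h1 : one ∈ Q)
    (hR : ∀ v, v ∉ D → v ∉ J → φ v ∈ Q ∧ φ v ≠ one) :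
    ∃ φ' : (restr H J).ConnectedComponent → C,
      Proper (quo H D (restr H J).connectedComponentMk) φ' ∧ (∀ w, φ' w ∈ Q) ∧
      ∀ v ∈ J, φ' ((restr H J).connectedComponentMk v) = one := by
  set π := (restr H J).connectedComponentMk with hπ
  let val : V → C := fun v => if v ∈ D ∨ v ∈ J then one else φ v
  have hval : ∀ u v, π u = π v → val u = val v := by
    intro u v e
    rcases restr_reach (SimpleGraph.ConnectedComponent.exact e) with rfl | ⟨h, h'⟩
    · rfl
    · simp [val, h, h']
  have hout : ∀ v, val (Quot.out (π v)) = val v := fun v => hval _ _ (Quot.out_eq _)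
  refine ⟨fun w => val (Quot.out w), ?_, ?_, ?_⟩
  · rintro w w' ⟨n, u, v, hu, hv, a, rfl, rfl⟩
    simp only [hout]
    have := hφ _ _ a
    have := hR u hu
    have := hR v hv
    have : u ∈ J → v ∈ J → False := fun ju jv =>
      n (SimpleGraph.ConnectedComponent.sound (SimpleGraph.Adj.reachable ⟨a, ju, jv⟩))
    simp only [val]
    split_ifs <;> grind
  · intro w
    simp only [val]
    split_ifs <;> grind
  · intro v hv
    show val (Quot.out (π v)) = one
    rw [hout]; simp [val, hv]

/-- Pulling back a spanning subgraph `F'` of the contraction of the components of `restr H J`. -/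
def pull {V : Type} (H : SimpleGraph V) (J : Set V)
    (F' : SimpleGraph (restr H J).ConnectedComponent) : SimpleGraph V :=
  restr H J ⊔ (H ⊓ F'.comap (restr H J).connectedComponentMk)

theorem pull_le {V : Type} (H : SimpleGraph V) (J : Set V)
    (F' : SimpleGraph (restr H J).ConnectedComponent) : pull H J F' ≤ H :=
  sup_le (restr_le H J) inf_le_left

theorem pull_reach {V : Type} {H : SimpleGraph V} {D J : Set V}
    {F' : SimpleGraph (restr H J).ConnectedComponent}
    (hF : F' ≤ quo H D (restr H J).connectedComponentMk) {u v : V}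
    (r : F'.Reachable ((restr H J).connectedComponentMk u) ((restr H J).connectedComponentMk v)) :
    (pull H J F').Reachable u v := by
  have base : ∀ a b, (restr H J).connectedComponentMk a = (restr H J).connectedComponentMk b →
      (pull H J F').Reachable a b := fun a b e =>
    (SimpleGraph.ConnectedComponent.exact e).mono le_sup_left
  refine reach_closed (F := F') (P := fun w => ∀ b, (restr H J).connectedComponentMk b = w →
    (pull H J F').Reachable u b) ?_ r (fun b hb => base _ _ hb.symm) v rfl
  intro w w' a ih b hb
  obtain ⟨_, x, y, _, _, hxy, hx, hy⟩ := hF a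
  have h1 := ih x hx
  have h2 : (pull H J F').Adj x y := Or.inr ⟨hxy, by simpa [hx, hy] using a⟩
  exact (h1.trans h2.reachable).trans (base _ _ (hy.trans hb.symm))

/-! ### Extension of colourings from a monochromatic set -/

/-- If a colouring with colours in `Q` is constant on a set `T` with `|T| ≤ |Q|`, then some
partition of `T` into connected pieces (the components of `F`) has the property that every
assignment of colours of `Q` to the pieces extends to a colouring. In the induction
the Kempe components of `one` and a further colour `c` are contracted, and `c` is reserved
for the colour class of a vertex `a ∈ T`. -/
theorem star {C : Type} (n : ℕ) : ∀ (V : Type) (H : SimpleGraph V) (Q : Finset C) (one : C)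
    (φ : V → C) (T : Finset V), Q.card = n → one ∈ Q → Proper H φ → (∀ v, φ v ∈ Q) →
    (∀ t ∈ T, φ t = one) → T.card ≤ Q.card →
    ∃ F ≤ H, ∀ g : V → C, (∀ t ∈ T, g t ∈ Q) →
      (∀ s ∈ T, ∀ t ∈ T, F.Reachable s t → g s = g t) →
      ∃ ψ, Proper H ψ ∧ (∀ v, ψ v ∈ Q) ∧ ∀ t ∈ T, ψ t = g t := by
  induction n with
  | zero =>
    intro V H Q one φ T hQ h1
    simp_all
  | succ n ih =>
    intro V H Q one φ T hQ h1 hφ hφQ hT hTQ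
    rcases T.eq_empty_or_nonempty with rfl | ⟨a, haT⟩
    · exact ⟨⊥, bot_le, fun g _ _ => ⟨φ, hφ, hφQ, by simp⟩⟩
    by_cases hc : ∃ c ∈ Q, c ≠ one
    swap
    · push Not at hc
      exact ⟨⊥, bot_le, fun g hg _ => ⟨φ, hφ, hφQ, fun t ht => by
        rw [hT t ht, hc _ (hg t ht)]⟩⟩
    obtain ⟨c, hcQ, hc1⟩ := hc
    set J : Set V := {v | φ v = one ∨ φ v = c} with hJ
    set π := (restr H J).connectedComponentMk with hπ
    obtain ⟨φ', hφ', hφ'Q, hφ'1⟩ := quo_color (D := ∅) (J := J) (Q := Q.erase c) hφ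
      (Finset.mem_erase.2 ⟨hc1.symm, h1⟩) (by
        intro v _ hv
        simp only [hJ, Set.mem_ofPred_eq, not_or] at hv
        exact ⟨Finset.mem_erase.2 ⟨hv.2, hφQ v⟩, hv.1⟩)
    have hTJ : ∀ t ∈ T, t ∈ J := fun t ht => Or.inl (hT t ht)
    obtain ⟨F', hF', hF'g⟩ := ih _ (quo H ∅ π) (Q.erase c) one φ' ((T.image π).erase (π a))
      (by rw [Finset.card_erase_of_mem hcQ, hQ]; rfl) (Finset.mem_erase.2 ⟨hc1.symm, h1⟩)
      hφ' hφ'Q (by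
        intro w hw
        obtain ⟨_, hw⟩ := Finset.mem_erase.1 hw
        obtain ⟨t, ht, rfl⟩ := Finset.mem_image.1 hw
        exact hφ'1 t (hTJ t ht))
      (by
        rw [Finset.card_erase_of_mem hcQ, Finset.card_erase_of_mem (Finset.mem_image_of_mem _ haT)]
        exact Nat.sub_le_sub_right (Finset.card_image_le.trans hTQ) 1)
    refine ⟨pull H J F', pull_le _ _ _, fun g hgQ hg => ?_⟩
    have hgπ : ∀ s ∈ T, ∀ t ∈ T, F'.Reachable (π s) (π t) → g s = g t :=
      fun s hs t ht r => hg s hs t ht (pull_reach hF' r)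
    have hgπ' : ∀ s ∈ T, ∀ t ∈ T, π s = π t → g s = g t :=
      fun s hs t ht e => hgπ s hs t ht (e ▸ SimpleGraph.Reachable.refl _)
    set τ := Equiv.swap (g a) c with hτ
    -- the colours prescribed on the pieces: the class of `a` is to receive `c` later on
    let val : V → C := fun t => if g t = g a then one else τ (g t)
    let g' : (restr H J).ConnectedComponent → C :=
      fun w => if h : ∃ t ∈ T, π t = w then val h.choose else one
    have hg' : ∀ t ∈ T, g' (π t) = val t := by
      intro t ht
      have h : ∃ t' ∈ T, π t' = π t := ⟨t, ht, rfl⟩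
      simp only [g', dif_pos h, val, hgπ' _ h.choose_spec.1 t ht h.choose_spec.2]
    have hvalQ : ∀ t ∈ T, val t ∈ Q.erase c := by
      intro t ht
      have := hgQ t ht
      have := hgQ a haT
      simp only [val, hτ, Equiv.swap_apply_def, Finset.mem_erase]
      split_ifs <;> grind
    obtain ⟨ψ', hψ', hψ'Q, hψ'g⟩ := hF'g g' (by
        intro w hw
        obtain ⟨_, hw⟩ := Finset.mem_erase.1 hw
        obtain ⟨t, ht, rfl⟩ := Finset.mem_image.1 hw
        rw [hg' t ht]; exact hvalQ t ht)
      (by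
        intro w hw w' hw' r
        obtain ⟨_, hw⟩ := Finset.mem_erase.1 hw
        obtain ⟨t, ht, rfl⟩ := Finset.mem_image.1 hw
        obtain ⟨_, hw'⟩ := Finset.mem_erase.1 hw'
        obtain ⟨t', ht', rfl⟩ := Finset.mem_image.1 hw'
        rw [hg' t ht, hg' t' ht']
        simp only [val, hgπ t ht t' ht' r])
    let s : (restr H J).ConnectedComponent → C :=
      fun w => if ∃ t ∈ T, π t = w ∧ g t = g a then c else one
    have hs : ∀ w, s w = one ∨ s w ∈ ({c} : Finset C) := by
      intro w; simp only [s]; split_ifs <;> simp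
    have L := lift_proper (D := ∅) (J := J) (Q := Q.erase c) (Λ := {c}) (one := one) (π := π)
      (ψ' := ψ') (s := s) hφ (by simp)
      (by intro v hv; simpa [hJ] using hv) (by simp)
      (fun u hu v hv h => SimpleGraph.ConnectedComponent.sound
        (SimpleGraph.Adj.reachable ⟨h, hu, hv⟩))
      (fun u v e => restr_reach (SimpleGraph.ConnectedComponent.exact e))
      hψ' hψ'Q hs (by simp)
    simp only [Set.mem_empty_iff_false, if_false] at L
    refine ⟨_, fun u v h => τ.injective.ne (L u v h), ?_, ?_⟩
    · intro v
      have hτQ : ∀ x ∈ Q, τ x ∈ Q := by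
        intro x hx
        have := hgQ a haT
        simp only [hτ, Equiv.swap_apply_def]
        split_ifs <;> grind
      refine hτQ _ ?_
      have := Finset.mem_of_mem_erase (hψ'Q (π v))
      have := hφQ v
      have : s (π v) ∈ Q := by simp only [s]; split_ifs <;> assumption
      split_ifs <;> assumption
    · intro t ht
      have ht1 := hT t ht
      simp only [hTJ t ht, if_true, ht1]
      by_cases e : g t = g a
      · have : s (π t) = c := if_pos ⟨t, ht, rfl, e⟩
        rw [this, if_neg hc1.symm, e]
        simp [hτ]
      · have h1s : s (π t) = one := by
          refine if_neg ?_
          rintro ⟨t', ht', e1, e2⟩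
          exact e ((hgπ' _ ht _ ht' e1.symm).trans e2)
        have hm : π t ∈ (T.image π).erase (π a) :=
          Finset.mem_erase.2 ⟨fun h => e (hgπ' _ ht _ haT h), Finset.mem_image_of_mem _ ht⟩
        rw [h1s, if_pos rfl, hψ'g _ hm, hg' t ht]
        simp [val, e, hτ]

/-- The version of `star` in which a set `D` keeps its colours and a set `Λ` of colours occurring
on `D` may also be prescribed on `T`, as long as adjacency with `D` permits it. The subgraph `F` is
chosen before `φ'` and `g`, so that it serves several colourings `φ'` at once. -/
theorem key {V C : Type} {H : SimpleGraph V} {φ : V → C} {T : Finset V} {D J : Set V}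
    {Q Λ : Finset C} {one : C} (hφ : Proper H φ) (h1 : one ∈ Q)
    (hQΛ : ∀ c ∈ Λ, c ∉ Q) (hJD : ∀ v ∈ J, v ∉ D) (hTJ : ∀ t ∈ T, t ∈ J)
    (hR : ∀ v, v ∉ D → v ∉ J → φ v ∈ Q ∧ φ v ≠ one) (hTQ : T.card ≤ Q.card) :
    ∃ F ≤ H, (∀ u v, F.Adj u v → u ∉ D ∧ v ∉ D) ∧
      ∀ φ' : V → C, Proper H φ' → (∀ v ∈ J, φ' v = one ∨ φ' v ∈ Λ) → (∀ d ∈ D, φ' d ∉ Q) →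
        (∀ t ∈ T, φ' t = one) →
      ∀ g : V → C, (∀ t ∈ T, g t ∈ Q ∨ g t ∈ Λ) →
        (∀ s ∈ T, ∀ t ∈ T, F.Reachable s t → g s = g t) →
        (∀ t ∈ T, ∀ v, ∀ d ∈ D, F.Reachable t v → H.Adj v d → φ' d ≠ g t) →
        ∃ ψ, Proper H ψ ∧ (∀ d ∈ D, ψ d = φ' d) ∧ ∀ t ∈ T, ψ t = g t := by
  set π := (restr H J).connectedComponentMk with hπ
  obtain ⟨χ, hχ, hχQ, hχ1⟩ := quo_color (D := D) (J := J) (Q := Q) hφ h1 hR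
  obtain ⟨F', hF', hF'g⟩ := star _ _ (quo H D π) Q one χ (T.image π) rfl h1 hχ hχQ
    (by
      intro w hw
      obtain ⟨t, ht, rfl⟩ := Finset.mem_image.1 hw
      exact hχ1 t (hTJ t ht))
    (Finset.card_image_le.trans hTQ)
  have hb : ∀ u v, π u = π v → u = v ∨ (u ∈ J ∧ v ∈ J) :=
    fun u v e => restr_reach (SimpleGraph.ConnectedComponent.exact e)
  refine ⟨pull H J F', pull_le _ _ _, ?_, ?_⟩
  · rintro u v (⟨_, hu, hv⟩ | ⟨_, h⟩)
    · exact ⟨hJD u hu, hJD v hv⟩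
    · obtain ⟨_, x, y, hx, hy, _, ex, ey⟩ := hF' h
      constructor
      · rcases hb _ _ ex with rfl | h
        · exact hx
        · exact hJD _ h.2
      · rcases hb _ _ ey with rfl | h
        · exact hy
        · exact hJD _ h.2
  intro φ' hφ' hφ'J hφ'D hφ'T g hgQ hg hgD
  have hgπ : ∀ s ∈ T, ∀ t ∈ T, F'.Reachable (π s) (π t) → g s = g t :=
    fun s hs t ht r => hg s hs t ht (pull_reach hF' r)
  have hgπ' : ∀ s ∈ T, ∀ t ∈ T, π s = π t → g s = g t :=
    fun s hs t ht e => hgπ s hs t ht (e ▸ SimpleGraph.Reachable.refl _)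
  let val : V → C := fun t => if g t ∈ Q then g t else one
  let g' : (restr H J).ConnectedComponent → C :=
    fun w => if h : ∃ t ∈ T, π t = w then val h.choose else one
  have hg' : ∀ t ∈ T, g' (π t) = val t := by
    intro t ht
    have h : ∃ t' ∈ T, π t' = π t := ⟨t, ht, rfl⟩
    simp only [g', dif_pos h, val, hgπ' _ h.choose_spec.1 t ht h.choose_spec.2]
  let sv : V → C := fun t => if g t ∈ Q then one else g t
  let s : (restr H J).ConnectedComponent → C :=
    fun w => if h : ∃ t ∈ T, π t = w then sv h.choose else one
  have hs' : ∀ t ∈ T, s (π t) = sv t := by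
    intro t ht
    have h : ∃ t' ∈ T, π t' = π t := ⟨t, ht, rfl⟩
    simp only [s, dif_pos h, sv, hgπ' _ h.choose_spec.1 t ht h.choose_spec.2]
  obtain ⟨ψ', hψ', hψ'Q, hψ'g⟩ := hF'g g' (by
      intro w hw
      obtain ⟨t, ht, rfl⟩ := Finset.mem_image.1 hw
      rw [hg' t ht]
      simp only [val]
      split_ifs <;> assumption)
    (by
      intro w hw w' hw' r
      obtain ⟨t, ht, rfl⟩ := Finset.mem_image.1 hw
      obtain ⟨t', ht', rfl⟩ := Finset.mem_image.1 hw'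
      rw [hg' t ht, hg' t' ht']
      simp only [val, hgπ t ht t' ht' r])
  have L := lift_proper (D := D) (J := J) (Q := Q) (Λ := Λ) (one := one) (π := π)
    (ψ' := ψ') (s := s) hφ' hQΛ hφ'J hφ'D
    (fun u hu v hv h => SimpleGraph.ConnectedComponent.sound
      (SimpleGraph.Adj.reachable ⟨h, hu, hv⟩)) hb hψ' hψ'Q
    (by
      intro w
      by_cases h : ∃ t ∈ T, π t = w
      · obtain ⟨t, ht, rfl⟩ := h
        rw [hs' t ht]
        have := hgQ t ht
        simp only [sv]
        split_ifs <;> grind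
      · exact Or.inl (dif_neg h))
    (by
      intro v hv d hd a _
      have hd1 : one ≠ φ' d := fun h => hφ'D d hd (h ▸ h1)
      by_cases h : ∃ t ∈ T, π t = π v
      · obtain ⟨t, ht, e⟩ := h
        rw [← e, hs' t ht]
        have r : (pull H J F').Reachable t v :=
          (SimpleGraph.ConnectedComponent.exact e).mono le_sup_left
        have := hgD t ht v d hd r a
        simp only [sv]
        split_ifs
        · exact hd1
        · exact this.symm
      · simpa only [s, dif_neg h] using hd1)
  refine ⟨_, L, fun d hd => by simp [hd], fun t ht => ?_⟩
  have htJ := hTJ t ht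
  have htD := hJD t htJ
  simp only [htD, htJ, if_true, if_false, hφ'T t ht, hs' t ht, sv,
    hψ'g _ (Finset.mem_image_of_mem _ ht), hg' t ht, val]
  split_ifs <;> grind


/-! ### The extension property -/

/-- `g` is consistent on `S` with the partition of `S` given by the components of `F`: it is
constant on each part and separates parts whose components are joined by an edge of `H`. -/
def Cons {V C : Type} (F H : SimpleGraph V) (S : Finset V) (g : V → C) : Prop :=
  (∀ s ∈ S, ∀ t ∈ S, F.Reachable s t → g s = g t) ∧
  ∀ s ∈ S, ∀ t ∈ S, ∀ u v, F.Reachable s u → F.Reachable t v → H.Adj u v →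
    ¬ F.Reachable s t → g s ≠ g t

/-- Some system of disjoint connected pieces of `H` meeting `S` forces extendability: every
colouring of `S` that is consistent with the pieces extends to a proper colouring of `H`. -/
def Good {V : Type} (C : Type) (H : SimpleGraph V) (S : Finset V) : Prop :=
  ∃ F ≤ H, ∀ g : V → C, Cons F H S g → ∃ ψ, Proper H ψ ∧ ∀ s ∈ S, ψ s = g s

theorem exists_perm_extend {C : Type} [Fintype C] {f : C → C} {s : Set C} (hf : Set.InjOn f s) :
    ∃ σ : Equiv.Perm C, ∀ c ∈ s, σ c = f c := by
  obtain ⟨g, hg⟩ := Set.MapsTo.exists_equiv_extend_of_card_eq (t := Finset.univ) rfl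
    (fun _ _ => Finset.mem_coe.2 (Finset.mem_univ _)) hf
  exact ⟨g.trans (Equiv.subtypeUnivEquiv Finset.mem_univ), hg⟩

/-- A partial injection of colours with values outside `Q` extends to a permutation that sends
all remaining colours of `E` into `Q`. -/
theorem exists_perm {C : Type} [Fintype C] (P E Q : Finset C) (i : C → C)
    (hi : Set.InjOn i P) (hQ : ∀ p ∈ P, i p ∉ Q) (hE : E.card ≤ Q.card) :
    ∃ σ : Equiv.Perm C, (∀ p ∈ P, σ p = i p) ∧ ∀ e ∈ E, e ∉ P → σ e ∈ Q := by
  obtain ⟨j⟩ := Function.Embedding.nonempty_of_card_le (α := E) (β := Q) (by simpa using hE)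
  let f : C → C := fun c => if c ∈ P then i c else if h : c ∈ E then j ⟨c, h⟩ else c
  have hfP : ∀ p ∈ P, f p = i p := fun p hp => if_pos hp
  have hfE : ∀ e (h : e ∈ E), e ∉ P → f e = j ⟨e, h⟩ := fun e h hp => by simp [f, h, hp]
  obtain ⟨σ, hσ⟩ := exists_perm_extend (f := f) (s := {c | c ∈ P ∨ c ∈ E}) (by
    intro c hc d hd e
    by_cases h1 : c ∈ P <;> by_cases h2 : d ∈ P
    · rw [hfP c h1, hfP d h2] at e
      exact hi h1 h2 e
    · rw [hfP c h1, hfE d (hd.resolve_left h2) h2] at e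
      exact absurd (e ▸ (j _).2) (hQ c h1)
    · rw [hfP d h2, hfE c (hc.resolve_left h1) h1] at e
      exact absurd (e ▸ (j _).2) (hQ d h2)
    · rw [hfE c (hc.resolve_left h1) h1, hfE d (hd.resolve_left h2) h2] at e
      simpa using j.injective (Subtype.ext e))
  refine ⟨σ, fun p hp => by rw [hσ p (Or.inl hp), hfP p hp], fun e he hp => ?_⟩
  rw [hσ e (Or.inr he), hfE e he hp]
  exact (j _).2

/-- The extension property for `T ∪ R` when the pieces meeting `R` are the components of a graph
`FD` on `D`. For each consistent `g` one may choose the colouring `φ'` to start from, and the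
hypothesis on the vertices of `D` with a colour in `Λ` says that they lie in a piece of `R`; thus
a part of `T` adjacent to such a vertex is separated from that piece by `g`. -/
theorem good_of_key {V C : Type} {H : SimpleGraph V} {φ : V → C} {T R : Finset V} {D J : Set V}
    {Q Λ : Finset C} {one : C} {FD : SimpleGraph V}
    (hφ : Proper H φ) (h1 : one ∈ Q)
    (hQΛ : ∀ c ∈ Λ, c ∉ Q) (hJD : ∀ v ∈ J, v ∉ D) (hTJ : ∀ t ∈ T, t ∈ J)
    (hR : ∀ v, v ∉ D → v ∉ J → φ v ∈ Q ∧ φ v ≠ one) (hTQ : T.card ≤ Q.card)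
    (hFD : FD ≤ H) (hFDD : ∀ u v, FD.Adj u v → u ∈ D ∧ v ∈ D) (hRD : ∀ r ∈ R, r ∈ D)
    (hyp : ∀ g : V → C, Cons FD H R g → ∃ (φ' : V → C) (σ : Equiv.Perm C), Proper H φ' ∧
      (∀ v ∈ J, φ' v = one ∨ φ' v ∈ Λ) ∧ (∀ d ∈ D, φ' d ∉ Q) ∧ (∀ t ∈ T, φ' t = one) ∧
      (∀ r ∈ R, σ (g r) = φ' r) ∧ (∀ t ∈ T, σ (g t) ∈ Q ∨ σ (g t) ∈ Λ) ∧
      ∀ d ∈ D, φ' d ∈ Λ → ∃ r ∈ R, FD.Reachable r d ∧ φ' r = φ' d) :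
    Good C H (T ∪ R) := by
  obtain ⟨FK, hFK, hFKD, hK⟩ := key hφ h1 hQΛ hJD hTJ hR hTQ
  refine ⟨FK ⊔ FD, sup_le hFK hFD, fun g hg => ?_⟩
  have reachD : ∀ r v, r ∈ D → (FK ⊔ FD).Reachable r v → v ∈ D ∧ FD.Reachable r v := by
    intro r v hr h
    refine reach_closed (P := fun w => w ∈ D ∧ FD.Reachable r w) ?_ h ⟨hr, .refl _⟩
    rintro a b (h | h) ⟨ha, hb⟩
    · exact absurd ha (hFKD _ _ h).1
    · exact ⟨(hFDD _ _ h).2, hb.trans h.reachable⟩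
  have subR : ∀ r ∈ R, r ∈ T ∪ R := fun r hr => Finset.mem_union_right _ hr
  have subT : ∀ t ∈ T, t ∈ T ∪ R := fun r hr => Finset.mem_union_left _ hr
  obtain ⟨φ', σ, h1, h2, h3, h4, h5, h6, h7⟩ := hyp g
    ⟨fun s hs t ht r => hg.1 s (subR s hs) t (subR t ht) (r.mono le_sup_right),
     fun s hs t ht u v ru rv a n => hg.2 s (subR s hs) t (subR t ht) u v (ru.mono le_sup_right)
      (rv.mono le_sup_right) a fun r => n (reachD s t (hRD s hs) r).2⟩
  obtain ⟨ψ, hψ, hψD, hψT⟩ := hK φ' h1 h2 h3 h4 (fun v => σ (g v)) h6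
    (fun s hs t ht r => congrArg σ (hg.1 s (subT s hs) t (subT t ht) (r.mono le_sup_left)))
    (by
      intro t ht v d hd r a e
      have : φ' d ∈ Λ := by
        rcases h6 t ht with h | h
        · exact absurd (e ▸ h) (h3 d hd)
        · exact e ▸ h
      obtain ⟨r', hr', hrd, er⟩ := h7 d hd this
      refine hg.2 t (subT t ht) r' (subR r' hr') v d (r.mono le_sup_left)
        (hrd.mono le_sup_right) a (fun q => hJD t (hTJ t ht) (reachD r' t (hRD r' hr') q.symm).1) ?_
      exact σ.injective (by rw [h5 r' hr', er, e]))
  refine ⟨fun v => σ.symm (ψ v), fun u v a => σ.symm.injective.ne (hψ u v a), fun s hs => ?_⟩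
  rw [Equiv.symm_apply_eq]
  rcases Finset.mem_union.1 hs with h | h
  · exact hψT s h
  · rw [hψD s (hRD s h), h5 s h]

/-! ### Kempe changes on `R` -/

/-- Exchange of two colours on a union `K` of Kempe components. -/
theorem swap_proper {V C : Type} {H : SimpleGraph V} {φ : V → C} {K : Set V} {a b : C}
    (hφ : Proper H φ) (hK : ∀ u ∈ K, φ u = a ∨ φ u = b)
    (hc : ∀ u ∈ K, ∀ v, H.Adj u v → φ v = a ∨ φ v = b → v ∈ K) :
    Proper H (fun v => if v ∈ K then Equiv.swap a b (φ v) else φ v) := by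
  have one_side : ∀ u v, u ∈ K → v ∉ K → H.Adj u v → Equiv.swap a b (φ u) ≠ φ v := by
    intro u v hu hv h e
    refine hv (hc u hu v h ?_)
    rw [← e]
    rcases hK u hu with e | e <;> simp [e]
  intro u v h
  by_cases hu : u ∈ K <;> by_cases hv : v ∈ K
  · simpa [hu, hv] using hφ u v h
  · simpa [hu, hv] using one_side u v hu hv h
  · simpa [hu, hv] using (one_side v u hv hu h.symm).symm
  · simpa [hu, hv] using hφ u v h

/-- The vertex set of the component of `r` in the subgraph induced on `P`. -/
def comp {V : Type} (H : SimpleGraph V) (P : Set V) (r : V) : Set V :=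
  {v | (restr H P).Reachable r v}

theorem mem_comp_self {V : Type} (H : SimpleGraph V) (P : Set V) (r : V) : r ∈ comp H P r :=
  SimpleGraph.Reachable.refl _

theorem comp_sub {V : Type} {H : SimpleGraph V} {P : Set V} {r v : V} (hr : r ∈ P)
    (hv : v ∈ comp H P r) : v ∈ P := by
  rcases restr_reach hv with h | h
  · exact h ▸ hr
  · exact h.2

theorem comp_closed {V : Type} {H : SimpleGraph V} {P : Set V} {r u v : V} (hr : r ∈ P)
    (hu : u ∈ comp H P r) (h : H.Adj u v) (hv : v ∈ P) : v ∈ comp H P r :=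
  SimpleGraph.Reachable.trans hu (SimpleGraph.Adj.reachable ⟨h, comp_sub hr hu, hv⟩)

theorem comp_reach {V : Type} {H : SimpleGraph V} {P : Set V} {r v : V}
    (hv : v ∈ comp H P r) : (restr H (comp H P r)).Reachable r v := by
  refine (reach_closed (P := fun w => w ∈ comp H P r ∧ (restr H (comp H P r)).Reachable r w)
    ?_ hv ⟨mem_comp_self H P r, .refl _⟩).2
  rintro a b h ⟨h1, h2⟩
  have hb : b ∈ comp H P r := SimpleGraph.Reachable.trans h1 h.reachable
  exact ⟨hb, h2.trans (SimpleGraph.Adj.reachable ⟨h.1, h1, hb⟩)⟩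

/-- If all of `R` has one colour and no extension property holds, a Kempe change splits `R`. -/
theorem split_mono {V C : Type} [Fintype C] {H : SimpleGraph V} {φ : V → C} {T R : Finset V}
    {one α : C} (hφ : Proper H φ) (hT : ∀ t ∈ T, φ t = one) (hTne : T.Nonempty)
    (hα : α ≠ one) (hR : ∀ r ∈ R, φ r = α) (hR2 : 2 ≤ R.card)
    (hcard : T.card + R.card ≤ Fintype.card C) :
    Good C H (T ∪ R) ∨ ∃ φ' : V → C, Proper H φ' ∧ (∀ t ∈ T, φ' t = one) ∧
      (∀ r ∈ R, φ' r ≠ one) ∧ ∃ r ∈ R, ∃ r' ∈ R, φ' r ≠ φ' r' := by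
  have hT1 := hTne.card_pos
  obtain ⟨f, hf⟩ : ∃ f, f ∉ ({one, α} : Finset C) := by
    by_contra! h
    have : Finset.univ ⊆ ({one, α} : Finset C) := fun c _ => h c
    have := Finset.card_le_card this
    have := Finset.card_le_two (a := one) (b := α)
    rw [Finset.card_univ] at *
    omega
  simp only [Finset.mem_insert, Finset.mem_singleton, not_or] at hf
  obtain ⟨hf1, hfα⟩ := hf
  obtain ⟨r0, hr0⟩ : R.Nonempty := Finset.card_pos.1 (by omega)
  set P : Set V := {v | φ v = α ∨ φ v = f} with hP
  have hr0P : r0 ∈ P := Or.inl (hR r0 hr0)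
  set X := comp H P r0 with hX
  have hXc : ∀ v ∈ X, φ v = α ∨ φ v = f := fun v hv => comp_sub (P := P) hr0P hv
  by_cases hall : ∀ r ∈ R, r ∈ X
  swap
  · push Not at hall
    obtain ⟨r1, hr1, hr1X⟩ := hall
    refine Or.inr ⟨_, swap_proper hφ hXc (fun u hu v h hv => comp_closed hr0P hu h hv), ?_, ?_,
      r0, hr0, r1, hr1, ?_⟩
    · intro t ht
      have : t ∉ X := fun h => by have := hXc t h; have := hT t ht; grind
      simp [this, hT t ht]
    · intro r hr
      split_ifs <;> simp [hR r hr, hα, hf1]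
    · have h0 : r0 ∈ X := mem_comp_self H P r0
      simp [hr1X, h0, hR r0 hr0, hR r1 hr1, hfα]
  left
  set D : Set V := X ∪ {v | φ v = f} with hD
  set Q : Finset C := Finset.univ \ {α, f} with hQ
  have memQ : ∀ c, c ∈ Q ↔ c ≠ α ∧ c ≠ f := by simp [hQ]
  have hTQ : T.card ≤ Q.card := by
    have : Q.card = Fintype.card C - ({α, f} : Finset C).card := by
      rw [hQ, Finset.card_sdiff_of_subset (Finset.subset_univ _), Finset.card_univ]
    have := Finset.card_le_two (a := α) (b := f)
    omega
  have memD : ∀ d ∈ D, φ d = α ∨ φ d = f := by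
    rintro d (h | h)
    · exact hXc d h
    · exact Or.inr h
  refine good_of_key (φ := φ) (D := D) (J := {v | v ∉ D ∧ (φ v = one ∨ φ v = α)}) (Q := Q)
    (Λ := {α}) (one := one) (FD := restr H X) hφ ((memQ _).2 ⟨hα.symm, Ne.symm hf1⟩) (by simp [memQ])
    (fun v h => h.1) ?_ ?_ hTQ (restr_le _ _) (fun u v h => ⟨Or.inl h.2.1, Or.inl h.2.2⟩)
    (fun r hr => Or.inl (hall r hr)) ?_
  · intro t ht
    have := hT t ht
    exact ⟨fun h => by have := memD t h; grind, Or.inl this⟩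
  · intro v hvD hvJ
    have h1 : ¬ (φ v = one ∨ φ v = α) := fun h => hvJ ⟨hvD, h⟩
    have h2 : φ v ≠ f := fun h => hvD (Or.inr h)
    rw [memQ]; grind
  · intro g hg
    obtain ⟨σ, hσ, hσE⟩ := exists_perm {g r0} (T.image g) Q (fun _ => α) (by simp)
      (by simp [memQ]) (Finset.card_image_le.trans hTQ)
    refine ⟨φ, σ, hφ, fun v hv => by simpa using hv.2, fun d hd => ?_, hT, fun r hr => ?_,
      fun t ht => ?_, fun d hd h => ?_⟩
    · rw [memQ]; have := memD d hd; grind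
    · rw [hR r hr, ← hg.1 r0 hr0 r hr (comp_reach (hall r hr))]
      exact hσ _ (by simp)
    · by_cases e : g t = g r0
      · right; rw [e, hσ _ (by simp)]; simp
      · left; exact hσE _ (Finset.mem_image_of_mem _ ht) (by simpa using e)
    · have h : φ d = α := by simpa using h
      have : d ∈ X := by
        rcases hd with h' | h'
        · exact h'
        · exact absurd (h.symm.trans h') (Ne.symm hfα)
      exact ⟨r0, hr0, comp_reach this, by rw [h, hR r0 hr0]⟩

/-- If `R = {x, y, z}` shows exactly two colours and no extension property holds, a Kempe change
makes `R` rainbow. -/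
theorem split_pair {V C : Type} [Fintype C] {H : SimpleGraph V} {φ : V → C} {T : Finset V}
    {x y z : V} {one α β : C} (hφ : Proper H φ) (hT : ∀ t ∈ T, φ t = one) (hTne : T.Nonempty)
    (hα : α ≠ one) (hβ : β ≠ one) (hαβ : α ≠ β) (hx : φ x = α) (hy : φ y = α) (hz : φ z = β)
    (hcard : T.card + 3 ≤ Fintype.card C) :
    Good C H (T ∪ {x, y, z}) ∨ ∃ φ' : V → C, Proper H φ' ∧ (∀ t ∈ T, φ' t = one) ∧
      φ' x ≠ one ∧ φ' y ≠ one ∧ φ' z ≠ one ∧ φ' x ≠ φ' y ∧ φ' x ≠ φ' z ∧ φ' y ≠ φ' z := by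
  have hT1 := hTne.card_pos
  obtain ⟨f, hf⟩ : ∃ f, f ∉ ({one, α, β} : Finset C) := by
    by_contra! h
    have : Finset.univ ⊆ ({one, α, β} : Finset C) := fun c _ => h c
    have := Finset.card_le_card this
    have := Finset.card_le_three (a := one) (b := α) (c := β)
    rw [Finset.card_univ] at *
    omega
  simp only [Finset.mem_insert, Finset.mem_singleton, not_or] at hf
  obtain ⟨hf1, hfα, hfβ⟩ := hf
  set P : Set V := {v | φ v = α ∨ φ v = f} with hP
  have hxP : x ∈ P := Or.inl hx
  set X := comp H P x with hX
  have hXc : ∀ v ∈ X, φ v = α ∨ φ v = f := fun v hv => comp_sub (P := P) hxP hv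
  have hxX : x ∈ X := mem_comp_self H P x
  have hzX : z ∉ X := fun h => by have := hXc z h; grind
  have hTX : ∀ t ∈ T, t ∉ X := fun t ht h => by have := hXc t h; have := hT t ht; grind
  have hφ1 := swap_proper hφ hXc (fun u hu v h hv => comp_closed hxP hu h hv)
  set φ1 : V → C := fun v => if v ∈ X then Equiv.swap α f (φ v) else φ v with hφ1def
  have φ1X : ∀ v ∈ X, (φ v = α ∧ φ1 v = f) ∨ (φ v = f ∧ φ1 v = α) := by
    intro v hv
    rcases hXc v hv with h | h <;> simp [hφ1def, hv, h]
  have φ1X' : ∀ v, v ∉ X → φ1 v = φ v := fun v hv => if_neg hv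
  have hT' : ∀ t ∈ T, φ1 t = one := fun t ht => (φ1X' t (hTX t ht)).trans (hT t ht)
  by_cases hyX : y ∈ X
  swap
  · have := φ1X x hxX
    have := φ1X' y hyX
    have := φ1X' z hzX
    exact Or.inr ⟨φ1, hφ1, hT', by grind, by grind, by grind, by grind, by grind, by grind⟩
  left
  set Q : Finset C := Finset.univ \ {α, β, f} with hQ
  have memQ : ∀ c, c ∈ Q ↔ c ≠ α ∧ c ≠ β ∧ c ≠ f := by simp [hQ]
  have hTQ : T.card ≤ Q.card := by
    have : Q.card = Fintype.card C - ({α, β, f} : Finset C).card := by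
      rw [hQ, Finset.card_sdiff_of_subset (Finset.subset_univ _), Finset.card_univ]
    have := Finset.card_le_three (a := α) (b := β) (c := f)
    omega
  have h1Q : one ∈ Q := (memQ _).2 ⟨hα.symm, hβ.symm, Ne.symm hf1⟩
  set P' : Set V := {v | v ∉ X ∧ (φ v = α ∨ φ v = β)} with hP'
  have hzP : z ∈ P' := ⟨hzX, Or.inr hz⟩
  set Z := comp H P' z with hZ
  have hZc : ∀ v ∈ Z, v ∉ X ∧ (φ v = α ∨ φ v = β) := fun v hv => comp_sub (P := P') hzP hv
  have hzZ : z ∈ Z := mem_comp_self H P' z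
  have hTZ : ∀ t ∈ T, t ∉ Z := fun t ht h => by have := (hZc t h).2; have := hT t ht; grind
  by_cases hadj : ∃ u ∈ X, ∃ v ∈ Z, H.Adj u v
  · -- the pieces `X` and `Z` touch, so a consistent `g` separates `z` from `x` and `y`
    obtain ⟨u, hu, v, hv, huv⟩ := hadj
    set D : Set V := {d | d ∈ X ∨ d ∈ Z ∨ φ1 d = α} with hD
    have memD : ∀ d ∈ D, φ1 d = α ∨ (d ∈ X ∧ φ1 d = f) ∨ (d ∈ Z ∧ φ1 d = β) := by
      rintro d (h | h | h)
      · have := φ1X d h; grind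
      · have := φ1X' d (hZc d h).1; have := (hZc d h).2; grind
      · exact Or.inl h
    have rX : ∀ w ∈ X, (restr H X ⊔ restr H Z).Reachable x w := fun w hw =>
      (comp_reach hw).mono le_sup_left
    have rZ : ∀ w ∈ Z, (restr H X ⊔ restr H Z).Reachable z w := fun w hw =>
      (comp_reach hw).mono le_sup_right
    refine good_of_key (φ := φ1) (D := D)
      (J := {v | v ∉ D ∧ (φ1 v = one ∨ φ1 v = f ∨ φ1 v = β)}) (Q := Q) (Λ := {f, β}) (one := one)
      (FD := restr H X ⊔ restr H Z) hφ1 h1Q (by simp [memQ]) (fun v h => h.1) ?_ ?_ hTQ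
      (sup_le (restr_le _ _) (restr_le _ _)) ?_ ?_ ?_
    · intro t ht
      have h := hT' t ht
      exact ⟨fun h' => by have := memD t h'; have := hTX t ht; have := hTZ t ht; grind, Or.inl h⟩
    · intro v hvD hvJ
      have h1 : ¬ (φ1 v = one ∨ φ1 v = f ∨ φ1 v = β) := fun h => hvJ ⟨hvD, h⟩
      have h2 : φ1 v ≠ α := fun h => hvD (Or.inr (Or.inr h))
      rw [memQ]; grind
    · rintro a b (h | h)
      · exact ⟨Or.inl h.2.1, Or.inl h.2.2⟩
      · exact ⟨Or.inr (Or.inl h.2.1), Or.inr (Or.inl h.2.2)⟩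
    · intro r hr
      simp only [Finset.mem_insert, Finset.mem_singleton] at hr
      rcases hr with rfl | rfl | rfl
      · exact Or.inl hxX
      · exact Or.inl hyX
      · exact Or.inr (Or.inl hzZ)
    · intro g hg
      have hxy : g x = g y := hg.1 x (by simp) y (by simp) (rX y hyX)
      have hxz : g x ≠ g z := by
        refine hg.2 x (by simp) z (by simp) u v (rX u hu) (rZ v hv) huv fun r => hzX ?_
        refine reach_closed (P := fun w => w ∈ X) ?_ r hxX
        rintro a b (h | h) ha
        · exact h.2.2
        · exact absurd ha (hZc a h.2.1).1
      obtain ⟨σ, hσ, hσE⟩ := exists_perm {g x, g z} (T.image g) Q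
        (fun c => if c = g x then f else β)
        (by
          intro a ha b hb
          simp only [Finset.coe_insert, Finset.coe_singleton, Set.mem_insert_iff,
            Set.mem_singleton_iff] at ha hb
          grind)
        (by intro p _; rw [memQ]; split_ifs <;> simp)
        (Finset.card_image_le.trans hTQ)
      have sx : σ (g x) = f := by rw [hσ _ (by simp)]; simp
      have sz : σ (g z) = β := by rw [hσ _ (by simp), if_neg hxz.symm]
      have x1 : φ1 x = f := by have := φ1X x hxX; grind
      have y1 : φ1 y = f := by have := φ1X y hyX; grind
      have z1 : φ1 z = β := (φ1X' z hzX).trans hz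
      refine ⟨φ1, σ, hφ1, fun v hv => by simpa using hv.2, fun d hd => ?_, hT', fun r hr => ?_,
        fun t ht => ?_, fun d hd h => ?_⟩
      · rw [memQ]; have := memD d hd; grind
      · simp only [Finset.mem_insert, Finset.mem_singleton] at hr
        rcases hr with rfl | rfl | rfl
        · rw [sx, x1]
        · rw [← hxy, sx, y1]
        · rw [sz, z1]
      · by_cases e : g t ∈ ({g x, g z} : Finset C)
        · right
          simp only [Finset.mem_insert, Finset.mem_singleton] at e
          rcases e with e | e <;> simp [e, sx, sz]
        · exact Or.inl (hσE _ (Finset.mem_image_of_mem _ ht) e)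
      · simp only [Finset.mem_insert, Finset.mem_singleton] at h
        rcases memD d hd with h' | ⟨h1, h2⟩ | ⟨h1, h2⟩
        · grind
        · exact ⟨x, by simp, rX d h1, by rw [x1, h2]⟩
        · exact ⟨z, by simp, rZ d h1, by rw [z1, h2]⟩
  · -- the colour of `z` can be changed from `β` to `α` without affecting `X`
    push Not at hadj
    have hφ2 := swap_proper (K := Z) hφ (fun v hv => (hZc v hv).2) (fun u hu v h hv =>
      comp_closed hzP hu h ⟨fun hvX => hadj v hvX u hu h.symm, hv⟩)
    set φ2 : V → C := fun v => if v ∈ Z then Equiv.swap α β (φ v) else φ v with hφ2def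
    have φ2Z : ∀ v ∈ Z, (φ v = α ∧ φ2 v = β) ∨ (φ v = β ∧ φ2 v = α) := by
      intro v hv
      rcases (hZc v hv).2 with h | h <;> simp [hφ2def, hv, h]
    have φ2Z' : ∀ v, v ∉ Z → φ2 v = φ v := fun v hv => if_neg hv
    have hXZ : ∀ v ∈ X, v ∉ Z := fun v hv h => (hZc v h).1 hv
    set D : Set V := {d | d ∈ X ∨ d = z ∨ φ d = f} with hD
    have memD : ∀ d ∈ D, (d ∈ X ∧ φ d = α) ∨ d = z ∨ φ d = f := by
      rintro d (h | h | h)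
      · have := hXc d h; grind
      · exact Or.inr (Or.inl h)
      · exact Or.inr (Or.inr h)
    refine good_of_key (φ := φ) (D := D)
      (J := {v | v ∉ D ∧ (φ v = one ∨ φ v = α ∨ φ v = β)}) (Q := Q) (Λ := {α, β}) (one := one)
      (FD := restr H X) hφ h1Q (by simp [memQ]) (fun v h => h.1) ?_ ?_ hTQ
      (restr_le _ _) (fun a b h => ⟨Or.inl h.2.1, Or.inl h.2.2⟩) ?_ ?_
    · intro t ht
      have h := hT t ht
      exact ⟨fun h' => by have := memD t h'; have := hTX t ht; grind, Or.inl h⟩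
    · intro v hvD hvJ
      have h1 : ¬ (φ v = one ∨ φ v = α ∨ φ v = β) := fun h => hvJ ⟨hvD, h⟩
      have h2 : φ v ≠ f := fun h => hvD (Or.inr (Or.inr h))
      rw [memQ]; grind
    · intro r hr
      simp only [Finset.mem_insert, Finset.mem_singleton] at hr
      rcases hr with rfl | rfl | rfl
      · exact Or.inl hxX
      · exact Or.inl hyX
      · exact Or.inr (Or.inl rfl)
    · intro g hg
      have hxy : g x = g y := hg.1 x (by simp) y (by simp) (comp_reach hyX)
      by_cases hxz : g x = g z
      · obtain ⟨σ, hσ, hσE⟩ := exists_perm {g x} (T.image g) Q (fun _ => α) (by simp)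
          (by simp [memQ]) (Finset.card_image_le.trans hTQ)
        have sx : σ (g x) = α := hσ _ (by simp)
        have x2 : φ2 x = α := (φ2Z' x (hXZ x hxX)).trans hx
        have y2 : φ2 y = α := (φ2Z' y (hXZ y hyX)).trans hy
        have z2 : φ2 z = α := by have := φ2Z z hzZ; grind
        have memD2 : ∀ d ∈ D, (d ∈ X ∧ φ2 d = α) ∨ d = z ∨ φ2 d = f := by
          intro d hd
          have := memD d hd; have := φ2Z d; have := φ2Z' d; have := hXZ d
          grind
        refine ⟨φ2, σ, hφ2, fun v hv => ?_, fun d hd => ?_,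
          fun t ht => (φ2Z' t (hTZ t ht)).trans (hT t ht), fun r hr => ?_,
          fun t ht => ?_, fun d hd h => ?_⟩
        · have := hv.2; have := φ2Z v; have := φ2Z' v
          simp only [Finset.mem_insert, Finset.mem_singleton]
          grind
        · rw [memQ]; have := memD2 d hd; grind
        · simp only [Finset.mem_insert, Finset.mem_singleton] at hr
          rcases hr with rfl | rfl | rfl
          · rw [sx, x2]
          · rw [← hxy, sx, y2]
          · rw [← hxz, sx, z2]
        · by_cases e : g t = g x
          · right; simp [e, sx]
          · exact Or.inl (hσE _ (Finset.mem_image_of_mem _ ht) (by simpa using e))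
        · simp only [Finset.mem_insert, Finset.mem_singleton] at h
          rcases memD2 d hd with ⟨h1, h2⟩ | rfl | h'
          · exact ⟨x, by simp, comp_reach h1, by rw [x2, h2]⟩
          · exact ⟨d, by simp, .refl _, rfl⟩
          · grind
      · obtain ⟨σ, hσ, hσE⟩ := exists_perm {g x, g z} (T.image g) Q
          (fun c => if c = g x then α else β)
          (by
            intro a ha b hb
            simp only [Finset.coe_insert, Finset.coe_singleton, Set.mem_insert_iff,
              Set.mem_singleton_iff] at ha hb
            grind)
          (by intro p _; rw [memQ]; split_ifs <;> simp)
          (Finset.card_image_le.trans hTQ)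
        have sx : σ (g x) = α := by rw [hσ _ (by simp)]; simp
        have sz : σ (g z) = β := by rw [hσ _ (by simp), if_neg (Ne.symm hxz)]
        refine ⟨φ, σ, hφ, fun v hv => by simpa using hv.2, fun d hd => ?_, hT, fun r hr => ?_,
          fun t ht => ?_, fun d hd h => ?_⟩
        · rw [memQ]; have := memD d hd; grind
        · simp only [Finset.mem_insert, Finset.mem_singleton] at hr
          rcases hr with rfl | rfl | rfl
          · rw [sx, hx]
          · rw [← hxy, sx, hy]
          · rw [sz, hz]
        · by_cases e : g t ∈ ({g x, g z} : Finset C)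
          · right
            simp only [Finset.mem_insert, Finset.mem_singleton] at e
            rcases e with e | e <;> simp [e, sx, sz]
          · exact Or.inl (hσE _ (Finset.mem_image_of_mem _ ht) e)
        · simp only [Finset.mem_insert, Finset.mem_singleton] at h
          rcases memD d hd with ⟨h1, h2⟩ | rfl | h'
          · exact ⟨x, by simp, comp_reach h1, by rw [hx, h2]⟩
          · exact ⟨d, by simp, .refl _, rfl⟩
          · grind

/-- For `|R| ≤ 3`, either an extension property holds or `R` can be made rainbow. -/
theorem good_or_rainbow {V C : Type} [Fintype C] {H : SimpleGraph V} {φ : V → C} {T R : Finset V}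
    {one : C} (hφ : Proper H φ) (hT : ∀ t ∈ T, φ t = one) (hTne : T.Nonempty)
    (hR : ∀ r ∈ R, φ r ≠ one) (hR3 : R.card ≤ 3) (hcard : T.card + R.card ≤ Fintype.card C) :
    Good C H (T ∪ R) ∨ ∃ φ' : V → C, Proper H φ' ∧ (∀ t ∈ T, φ' t = one) ∧
      (∀ r ∈ R, φ' r ≠ one) ∧ Set.InjOn φ' R := by
  by_cases h1 : R.card ≤ 1
  · refine Or.inr ⟨φ, hφ, hT, hR, fun a ha b hb _ => Finset.card_le_one.1 h1 a ha b hb⟩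
  have main : Good C H (T ∪ R) ∨ ∃ φ' : V → C, Proper H φ' ∧ (∀ t ∈ T, φ' t = one) ∧
      (∀ r ∈ R, φ' r ≠ one) ∧ ∃ r ∈ R, ∃ r' ∈ R, φ' r ≠ φ' r' := by
    by_cases h : ∃ r ∈ R, ∃ r' ∈ R, φ r ≠ φ r'
    · exact Or.inr ⟨φ, hφ, hT, hR, h⟩
    · push Not at h
      obtain ⟨r0, hr0⟩ : R.Nonempty := Finset.card_pos.1 (by omega)
      exact split_mono hφ hT hTne (hR r0 hr0) (fun r hr => h r hr r0 hr0) (by omega) hcard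
  rcases main with h | ⟨χ, hχ, hχT, hχR, a, ha, b, hb, hab⟩
  · exact Or.inl h
  by_cases hinj : Set.InjOn χ R
  · exact Or.inr ⟨χ, hχ, hχT, hχR, hinj⟩
  simp only [Set.InjOn, not_forall] at hinj
  obtain ⟨x, hx, y, hy, exy, hxy⟩ := hinj
  have hx : x ∈ R := hx
  have hy : y ∈ R := hy
  obtain ⟨z, hz, hzx⟩ : ∃ z ∈ R, χ x ≠ χ z := by
    by_contra! h
    exact hab ((h a ha).symm.trans (h b hb))
  have hRe : R = {x, y, z} := by
    symm
    refine Finset.eq_of_subset_of_card_le (by grind) ?_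
    rw [Finset.card_eq_three.2 ⟨x, y, z, hxy, by grind, by grind, rfl⟩]
    exact hR3
  have h3 : R.card = 3 := by
    rw [hRe, Finset.card_eq_three.2 ⟨x, y, z, hxy, by grind, by grind, rfl⟩]
  rcases split_pair hχ hχT hTne (hχR x hx) (hχR z hz) hzx rfl exy.symm rfl (by omega) with
    h | ⟨χ', c1, c2, c3, c4, c5, c6, c7, c8⟩
  · left; rwa [hRe]
  · refine Or.inr ⟨χ', c1, c2, ?_, ?_⟩
    · intro r hr
      rw [hRe] at hr
      simp only [Finset.mem_insert, Finset.mem_singleton] at hr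
      rcases hr with rfl | rfl | rfl <;> assumption
    · intro p hp q hq e
      rw [Finset.mem_coe, hRe] at hp hq
      simp only [Finset.mem_insert, Finset.mem_singleton] at hp hq
      grind

/-! ### Minors and separations -/

/-- The components of a subgraph `F` of `G` that meet a set `M ≠ univ` are the branch sets of a
proper minor of `G`; a `k`-colouring of that minor, read on `M`. -/
theorem minor_coloring {V : Type} [Fintype V] {k : ℕ} {G : SimpleGraph V}
    (hG : ContractionCritical (k + 1) G) {F : SimpleGraph V} (hF : F ≤ G) {M : Set V}
    (hne : M.Nonempty) (hM : M ≠ Set.univ) :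
    ∃ c : V → Fin k, (∀ m ∈ M, ∀ m' ∈ M, F.Reachable m m' → c m = c m') ∧
      ∀ m ∈ M, ∀ m' ∈ M, ∀ u v, F.Reachable m u → F.Reachable m' v → G.Adj u v →
        ¬ F.Reachable m m' → c m ≠ c m' := by
  let W := {w : F.ConnectedComponent // ∃ m ∈ M, F.connectedComponentMk m = w}
  let N : SimpleGraph W :=
    { Adj := fun w w' => w ≠ w' ∧ ∃ u v, G.Adj u v ∧
        F.connectedComponentMk u = w.1 ∧ F.connectedComponentMk v = w'.1
      symm := ⟨by
        rintro w w' ⟨h, u, v, a, b, c⟩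
        exact ⟨h.symm, v, u, a.symm, c, b⟩⟩
      loopless := ⟨fun _ h => h.1 rfl⟩ }
  have hN : IsProperMinor N G := by
    refine ⟨⟨fun w => w.1.supp, fun w => w.1.nonempty_supp, fun w => ?_, ?_, ?_⟩, ?_⟩
    · exact (w.1.maximal_connected_induce_supp.1).mono (SimpleGraph.comap_monotone _ hF)
    · intro w w' h
      rw [Set.disjoint_left]
      intro x hx hx'
      exact h (Subtype.ext (hx.symm.trans hx'))
    · rintro w w' ⟨_, u, v, a, b, c⟩
      exact ⟨u, b, v, c, a⟩
    · rintro ⟨f, hf, _, hdis, _⟩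
      choose i hi using hf
      have hinj : Function.Injective i := by
        intro x y e
        by_contra n
        exact Set.disjoint_left.1 (hdis n) (hi x) (e ▸ hi y)
      let j : W → V := fun w => w.2.choose
      have hj : Function.Injective j := by
        intro w w' e
        exact Subtype.ext (by rw [← w.2.choose_spec.2, ← w'.2.choose_spec.2]; exact congrArg _ e)
      have hs : Function.Surjective (j ∘ i) :=
        Finite.injective_iff_surjective.1 (hj.comp hinj)
      refine hM (Set.eq_univ_of_forall fun v => ?_)
      obtain ⟨x, rfl⟩ := hs v
      exact (i x).2.choose_spec.1
  obtain ⟨col⟩ := hG.2 W N hN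
  obtain ⟨m0, hm0⟩ := hne
  have hmk : ∀ m ∈ M, ∃ m' ∈ M, F.connectedComponentMk m' = F.connectedComponentMk m :=
    fun m hm => ⟨m, hm, rfl⟩
  let c : V → Fin k := fun v =>
    if h : ∃ m ∈ M, F.connectedComponentMk m = F.connectedComponentMk v
    then col ⟨_, h⟩ else col ⟨_, hmk m0 hm0⟩
  have hc : ∀ m (hm : m ∈ M), c m = col ⟨_, hmk m hm⟩ := fun m hm => dif_pos (hmk m hm)
  refine ⟨c, fun m hm m' hm' r => ?_, fun m hm m' hm' u v ru rv a n => ?_⟩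
  · rw [hc m hm, hc m' hm']
    exact congrArg col (Subtype.ext (SimpleGraph.ConnectedComponent.sound r))
  · rw [hc m hm, hc m' hm']
    refine col.valid ⟨fun e => n ?_, u, v, a, ?_, ?_⟩
    · exact SimpleGraph.ConnectedComponent.exact (congrArg Subtype.val e)
    · exact SimpleGraph.ConnectedComponent.sound ru.symm
    · exact SimpleGraph.ConnectedComponent.sound rv.symm

theorem not_colorable {V : Type} {k : ℕ} {G : SimpleGraph V}
    (hG : ContractionCritical (k + 1) G) {φ : V → Fin k} (hφ : Proper G φ) : False := by
  have h : G.Colorable k := ⟨SimpleGraph.Coloring.mk φ fun {u v} a => hφ u v a⟩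
  have := SimpleGraph.chromaticNumber_le_iff_colorable.2 h
  rw [hG.1] at this
  have : k + 1 ≤ k := by exact_mod_cast this
  omega

/-- `S` separates `G`: the complement of `S` is the disjoint union of nonempty sets `A` and `B`
with no edge between them. -/
def Separates {V : Type} (G : SimpleGraph V) (S : Finset V) (A B : Set V) : Prop :=
  A.Nonempty ∧ B.Nonempty ∧
  (∀ v, (v ∈ A ∧ v ∉ B ∧ v ∉ S) ∨ (v ∉ A ∧ v ∈ B ∧ v ∉ S) ∨ (v ∉ A ∧ v ∉ B ∧ v ∈ S)) ∧
  ∀ a ∈ A, ∀ b ∈ B, ¬ G.Adj a b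

theorem Separates.symm {V : Type} {G : SimpleGraph V} {S : Finset V} {A B : Set V} (h : Separates G S A B) :
    Separates G S B A :=
  ⟨h.2.1, h.1, fun v => by have := h.2.2.1 v; tauto, fun b hb a ha e => h.2.2.2 a ha b hb e.symm⟩

/-- Colourings of the two sides inducing the same partition of the separator can be merged. -/
theorem glue {V : Type} {k : ℕ} {G : SimpleGraph V} (hG : ContractionCritical (k + 1) G)
    {S : Finset V} {A B : Set V} (h : Separates G S A B) {φ χ : V → Fin k}
    (hφ : Proper (restr G (A ∪ S)) φ) (hχ : Proper (restr G (B ∪ S)) χ)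
    (hS : ∀ s ∈ S, ∀ t ∈ S, φ s = φ t ↔ χ s = χ t) : False := by
  let f : Fin k → Fin k := fun c => if h : ∃ s ∈ S, φ s = c then χ h.choose else c
  have hf : ∀ s ∈ S, f (φ s) = χ s := by
    intro s hs
    have h : ∃ t ∈ S, φ t = φ s := ⟨s, hs, rfl⟩
    simp only [f, dif_pos h]
    exact (hS _ h.choose_spec.1 s hs).1 h.choose_spec.2
  obtain ⟨σ, hσ⟩ := exists_perm_extend (f := f) (s := {c | ∃ s ∈ S, φ s = c}) (by
    rintro _ ⟨s, hs, rfl⟩ _ ⟨t, ht, rfl⟩ e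
    rw [hf s hs, hf t ht] at e
    exact (hS s hs t ht).2 e)
  have hσS : ∀ s ∈ S, σ (φ s) = χ s := fun s hs => (hσ _ ⟨s, hs, rfl⟩).trans (hf s hs)
  let ψ : V → Fin k := fun v => if v ∈ A then σ (φ v) else χ v
  have hψA : ∀ v ∈ A ∪ (S : Set V), ψ v = σ (φ v) := by
    rintro v (hv | hv)
    · exact if_pos hv
    · have : v ∉ A := fun hA => by have := h.2.2.1 v; have : v ∈ S := hv; tauto
      exact (if_neg this).trans (hσS v hv).symm
  have hψB : ∀ v ∈ B ∪ (S : Set V), ψ v = χ v := by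
    rintro v hv
    have : v ∉ A := fun hA => by
      have := h.2.2.1 v
      rcases hv with hv | hv
      · tauto
      · have : v ∈ S := hv
        tauto
    exact if_neg this
  refine not_colorable hG (φ := ψ) fun u v a => ?_
  by_cases hA : u ∈ A ∪ (S : Set V) ∧ v ∈ A ∪ (S : Set V)
  · rw [hψA u hA.1, hψA v hA.2]
    exact σ.injective.ne (hφ u v ⟨a, hA⟩)
  · have hB : u ∈ B ∪ (S : Set V) ∧ v ∈ B ∪ (S : Set V) := by
      have h1 := h.2.2.1 u
      have h2 := h.2.2.1 v
      have h3 := fun p q => h.2.2.2 u p v q a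
      have h4 := fun p q => h.2.2.2 v p u q a.symm
      simp only [Set.mem_union, Finset.mem_coe] at hA ⊢
      tauto
    rw [hψB u hB.1, hψB v hB.2]
    exact hχ u v ⟨a, hB⟩

/-- If one side of a separation has the extension property, then contracting the pieces on that
side gives a colouring of the other side that extends to the whole graph. -/
theorem not_good {V : Type} [Fintype V] {k : ℕ} {G : SimpleGraph V}
    (hG : ContractionCritical (k + 1) G) {S : Finset V} {A B : Set V} (h : Separates G S A B) :
    ¬ Good (Fin k) (restr G (A ∪ S)) S := by
  rintro ⟨F, hF, hg⟩
  obtain ⟨a, ha⟩ := h.1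
  obtain ⟨b, hb⟩ := h.2.1
  have haB : a ∉ B ∪ (S : Set V) := by
    have := h.2.2.1 a
    simp only [Set.mem_union, Finset.mem_coe]
    tauto
  obtain ⟨c, hc1, hc2⟩ := minor_coloring hG (hF.trans (restr_le _ _)) (M := B ∪ (S : Set V))
    ⟨b, Or.inl hb⟩ (fun e => haB (e ▸ Set.mem_univ a))
  have hSB : ∀ s ∈ S, s ∈ B ∪ (S : Set V) := fun s hs => Or.inr hs
  obtain ⟨ψ, hψ, hψS⟩ := hg c ⟨fun s hs t ht => hc1 s (hSB s hs) t (hSB t ht),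
    fun s hs t ht u v ru rv e => hc2 s (hSB s hs) t (hSB t ht) u v ru rv (restr_le _ _ e)⟩
  refine glue hG h hψ (χ := c) ?_ (fun s hs t ht => by rw [hψS s hs, hψS t ht])
  rintro u v ⟨e, hu, hv⟩
  by_cases huv : u ∈ S ∧ v ∈ S
  · rw [← hψS u huv.1, ← hψS v huv.2]
    exact hψ u v ⟨e, Or.inr huv.1, Or.inr huv.2⟩
  · refine hc2 u hu v hv u v (.refl _) (.refl _) e fun r => ?_
    rcases restr_reach (r.mono hF) with rfl | ⟨h1, h2⟩
    · exact e.ne rfl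
    · have := h.2.2.1 u
      have := h.2.2.1 v
      simp only [Set.mem_union, Finset.mem_coe] at hu hv h1 h2
      tauto

/-- Contracting `B` together with the independent set `T ⊆ S` yields a colouring of the other
side in which `T` is monochromatic. -/
theorem side_coloring {V : Type} [Fintype V] {k : ℕ} {G : SimpleGraph V}
    (hG : ContractionCritical (k + 1) G) {T R : Finset V} {A B : Set V} (h : Separates G (T ∪ R) A B)
    (hdis : Disjoint T R) (hTi : ∀ s ∈ T, ∀ t ∈ T, s ≠ t → ¬ G.Adj s t) (hTne : T.Nonempty)
    (hR3 : R.card ≤ 3) (hcard : T.card + R.card ≤ k)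
    (hB : ∀ b ∈ B, ∀ s ∈ T ∪ R, ∃ b' ∈ comp G B b, G.Adj s b') :
    ∃ (φ : V → Fin k) (one : Fin k), Proper (restr G (A ∪ ↑(T ∪ R))) φ ∧ (∀ t ∈ T, φ t = one) ∧
      (∀ r ∈ R, φ r ≠ one) ∧ Set.InjOn φ R := by
  obtain ⟨b0, hb0⟩ := h.2.1
  have part := h.2.2.1
  simp only [Finset.mem_union] at part
  have hdis' : ∀ t ∈ T, t ∉ R := fun t ht hr => Finset.disjoint_left.1 hdis ht hr
  obtain ⟨t0, ht0⟩ := hTne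
  have reachB : ∀ t ∈ T, ∀ b ∈ B, (restr G (B ∪ T)).Reachable t b := by
    intro t ht b hb
    obtain ⟨b', hb', e⟩ := hB b hb t (Finset.mem_union_left _ ht)
    have h1 : (restr G (B ∪ T)).Adj t b' := ⟨e, Or.inr ht, Or.inl (comp_sub hb hb')⟩
    have h2 : (restr G (B ∪ T)).Reachable b b' := SimpleGraph.Reachable.mono
      (G := restr G B) (G' := restr G (B ∪ T))
      (fun x y h => ⟨h.1, Or.inl h.2.1, Or.inl h.2.2⟩) hb'
    exact h1.reachable.trans h2.symm
  have hbM : b0 ∉ A ∪ (↑(T ∪ R) : Set V) := by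
    have := part b0
    simp only [Set.mem_union, Finset.mem_coe, Finset.mem_union]
    tauto
  have hSM : ∀ s ∈ T ∪ R, s ∈ A ∪ (↑(T ∪ R) : Set V) := fun s hs => Or.inr hs
  obtain ⟨c, hc1, hc2⟩ := minor_coloring hG (restr_le G (B ∪ T)) (M := A ∪ (↑(T ∪ R) : Set V))
    ⟨t0, hSM t0 (Finset.mem_union_left _ ht0)⟩ (fun e => hbM (e ▸ Set.mem_univ b0))
  have hprop : Proper (restr G (A ∪ (↑(T ∪ R) : Set V))) c := by
    rintro u v ⟨e, hu, hv⟩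
    refine hc2 u hu v hv u v (.refl _) (.refl _) e fun r => ?_
    rcases restr_reach r with rfl | ⟨h1, h2⟩
    · exact e.ne rfl
    · have inT : ∀ w ∈ A ∪ (↑(T ∪ R) : Set V), w ∈ B ∪ (T : Set V) → w ∈ T := by
        intro w hw hw'
        have p := part w
        simp only [Set.mem_union, Finset.mem_coe, Finset.mem_union] at hw hw'
        tauto
      exact hTi u (inT u hu h1) v (inT v hv h2) e.ne e
  have hcT : ∀ t ∈ T, c t = c t0 := fun t ht =>
    hc1 t (hSM t (Finset.mem_union_left _ ht)) t0 (hSM t0 (Finset.mem_union_left _ ht0))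
      ((reachB t ht b0 hb0).trans (reachB t0 ht0 b0 hb0).symm)
  have hcR : ∀ r ∈ R, c r ≠ c t0 := by
    intro r hr
    obtain ⟨b', hb', e⟩ := hB b0 hb0 r (Finset.mem_union_right _ hr)
    refine hc2 r (hSM r (Finset.mem_union_right _ hr)) t0 (hSM t0 (Finset.mem_union_left _ ht0))
      r b' (.refl _) (reachB t0 ht0 b' (comp_sub hb0 hb')) e fun q => ?_
    have p := part r
    have p0 := hdis' t0 ht0
    have p1 := hdis' r
    rcases restr_reach q with rfl | ⟨h1, h2⟩
    · exact p0 hr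
    · simp only [Set.mem_union, Finset.mem_coe] at h1
      tauto
  rcases good_or_rainbow hprop hcT ⟨t0, ht0⟩ hcR hR3 (by simpa using hcard) with hg | ⟨φ, hφ⟩
  · exact absurd hg (not_good hG h)
  · exact ⟨φ, c t0, hφ⟩

/-- No separator of at most `k` vertices contains an independent set omitting at most three of its
vertices. The induction is on the size of the separator. -/
theorem no_sep {V : Type} [Fintype V] {k : ℕ} {G : SimpleGraph V}
    (hG : ContractionCritical (k + 1) G) (n : ℕ) : ∀ (S : Finset V) (A B : Set V), S.card = n →
    n ≤ k → (∃ T ⊆ S, (∀ s ∈ T, ∀ t ∈ T, s ≠ t → ¬ G.Adj s t) ∧ S.card ≤ T.card + 3) →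
    ¬ Separates G S A B := by
  induction n with
  | zero =>
    rintro S A B hS - - h
    have hS : S = ∅ := Finset.card_eq_zero.1 hS
    subst hS
    have side : ∀ A B : Set V, Separates G ∅ A B →
        ∃ φ : V → Fin k, Proper (restr G (A ∪ ↑(∅ : Finset V))) φ := by
      intro A B h
      obtain ⟨b, hb⟩ := h.2.1
      have hbA : b ∉ A := by have := h.2.2.1 b; tauto
      obtain ⟨c, -, hc⟩ := minor_coloring hG (F := ⊥) bot_le (M := A) h.1
        (fun e => hbA (e ▸ Set.mem_univ b))
      refine ⟨c, ?_⟩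
      rintro u v ⟨e, hu, hv⟩
      refine hc u (by simpa using hu) v (by simpa using hv) u v (.refl _) (.refl _) e ?_
      rw [SimpleGraph.reachable_bot]
      exact e.ne
    obtain ⟨φ, hφ⟩ := side A B h
    obtain ⟨χ, hχ⟩ := side B A h.symm
    exact glue hG h hφ hχ (by simp)
  | succ n ih =>
    rintro S A B hS hn ⟨T', hT'S, hT'i, hT'c⟩ h
    obtain ⟨T, hTS, hTi, hTc, hTne⟩ : ∃ T ⊆ S, (∀ s ∈ T, ∀ t ∈ T, s ≠ t → ¬ G.Adj s t) ∧
        S.card ≤ T.card + 3 ∧ T.Nonempty := by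
      rcases T'.eq_empty_or_nonempty with rfl | hne
      · obtain ⟨s, hs⟩ : S.Nonempty := Finset.card_pos.1 (by omega)
        refine ⟨{s}, by simpa using hs, by simp, ?_, by simp⟩
        simp only [Finset.card_empty, Finset.card_singleton] at *
        omega
      · exact ⟨T', hT'S, hT'i, hT'c, hne⟩
    -- by minimality of `S`, every vertex of `S` has a neighbour in every component of `G - S`
    have nbr : ∀ A B : Set V, Separates G S A B →
        ∀ b ∈ B, ∀ s ∈ S, ∃ b' ∈ comp G B b, G.Adj s b' := by
      intro A B h b hb s hs
      by_contra! hno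
      refine ih (S.erase s) {v | (v ∈ A ∨ v ∈ B ∨ v = s) ∧ v ∉ comp G B b} (comp G B b)
        (by rw [Finset.card_erase_of_mem hs, hS]; rfl) (by omega)
        ⟨T.erase s, Finset.erase_subset_erase s hTS, ?_, ?_⟩ ⟨?_, ⟨b, mem_comp_self _ _ _⟩, ?_, ?_⟩
      · intro x hx y hy
        exact hTi x (Finset.mem_of_mem_erase hx) y (Finset.mem_of_mem_erase hy)
      · have := Finset.pred_card_le_card_erase (s := T) (a := s)
        by_cases hsT : s ∈ T
        · rw [Finset.card_erase_of_mem hs]; omega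
        · rw [Finset.erase_eq_of_notMem hsT, Finset.card_erase_of_mem hs]; omega
      · obtain ⟨a, ha⟩ := h.1
        refine ⟨a, Or.inl ha, fun ha' => ?_⟩
        have := comp_sub hb ha'
        have := h.2.2.1 a
        tauto
      · intro v
        have h1 := h.2.2.1 v
        have h2 : v ∈ comp G B b → v ∈ B := fun q => comp_sub hb q
        have h3 : v = s → v ∈ S := fun q => q ▸ hs
        simp only [Set.mem_ofPred_eq, Finset.mem_erase]
        tauto
      · rintro x ⟨hx, hxc⟩ y hy e
        rcases hx with hx | hx | rfl
        · exact h.2.2.2 x hx y (comp_sub hb hy) e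
        · exact hxc (comp_closed hb hy e.symm hx)
        · exact hno y hy e
    obtain ⟨R, hR⟩ : ∃ R, R = S \ T := ⟨_, rfl⟩
    have hTR : T ∪ R = S := by rw [hR]; exact Finset.union_sdiff_of_subset hTS
    have hdis : Disjoint T R := by rw [hR]; exact Finset.disjoint_sdiff
    have hc : T.card + R.card = S.card := by rw [← hTR, Finset.card_union_of_disjoint hdis]
    have nA := nbr A B h
    have nB := nbr B A h.symm
    rw [← hTR] at h nA nB
    obtain ⟨φ, o, hφ, hφT, hφR, hφi⟩ := side_coloring hG h hdis hTi hTne (by omega) (by omega) nA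
    obtain ⟨χ, p, hχ, hχT, hχR, hχi⟩ :=
      side_coloring hG h.symm hdis hTi hTne (by omega) (by omega) nB
    refine glue hG h hφ hχ fun s hs t ht => ?_
    rcases Finset.mem_union.1 hs with hs | hs <;> rcases Finset.mem_union.1 ht with ht | ht
    · rw [hφT s hs, hφT t ht, hχT s hs, hχT t ht]; simp
    · rw [hφT s hs, hχT s hs]
      exact ⟨fun e => absurd e.symm (hφR t ht), fun e => absurd e.symm (hχR t ht)⟩
    · rw [hφT t ht, hχT t ht]
      exact ⟨fun e => absurd e (hφR s hs), fun e => absurd e (hχR s hs)⟩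
    · exact ⟨fun e => congrArg χ (hφi hs ht e), fun e => congrArg φ (hχi hs ht e)⟩

end

theorem stmt6 {V : Type} [Fintype V] (k : ℕ) (G : SimpleGraph V)
    (hG : ContractionCritical (k + 1) G) (S : Finset V) (hS : S.card ≤ k)
    (hα : S.card - 3 ≤ alphaOn G ↑S) :
    (G.induce {v : V | v ∉ S}).Connected := by
  classical
  obtain ⟨T, hTS, hTc, hTi⟩ := Nat.sSup_mem (s := {n | ∃ t : Finset V, ↑t ⊆ (S : Set V) ∧
    t.card = n ∧ ∀ a ∈ t, ∀ b ∈ t, a ≠ b → ¬ G.Adj a b}) ⟨0, ∅, by simp⟩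
    ⟨Fintype.card V, by rintro n ⟨t, -, rfl, -⟩; exact Finset.card_le_univ t⟩
  have nosep := fun A B => no_sep hG _ S A B rfl hS
    ⟨T, Finset.coe_subset.1 hTS, hTi, by unfold alphaOn at hα; omega⟩
  rw [SimpleGraph.connected_iff]
  constructor
  · rintro ⟨u, hu⟩ ⟨v, hv⟩
    by_contra hr
    refine nosep {w | ∃ h : w ∉ S, (G.induce {v : V | v ∉ S}).Reachable ⟨u, hu⟩ ⟨w, h⟩}
      {w | ∃ h : w ∉ S, ¬ (G.induce {v : V | v ∉ S}).Reachable ⟨u, hu⟩ ⟨w, h⟩}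
      ⟨⟨u, hu, .refl _⟩, ⟨v, hv, hr⟩, fun w => ?_, ?_⟩
    · by_cases hw : w ∈ S
      · simp [hw]
      · by_cases h : (G.induce {v : V | v ∉ S}).Reachable ⟨u, hu⟩ ⟨w, hw⟩ <;> simp [hw, h]
    · rintro a ⟨ha, ra⟩ b ⟨hb, rb⟩ e
      exact rb (ra.trans (SimpleGraph.Adj.reachable (by simpa using e)))
  · by_contra hne
    -- otherwise `V = S` has at most `k` vertices
    have hcard : Fintype.card V ≤ k := by
      have : S = Finset.univ := by
        ext v
        by_contra h
        exact hne ⟨⟨v, fun hv => h (by simp [hv])⟩⟩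
      rwa [this, Finset.card_univ] at hS
    have hcol : G.Colorable k := G.colorable_of_fintype.mono hcard
    obtain ⟨c⟩ := hcol
    exact not_colorable hG (φ := c) fun u v a => c.valid a
end
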